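/- Let R be a three-dimensional Bessel process started at 0, R̄(s) := sup_{u ∈ [0,s]} R(u), and τ₁^R := inf{ t ≥ 0 : R̄(t) − R(t) ≥ 1 }. Let m be a standard Brownian meander with m̄(s) := sup_{u ∈ [0,s]} m(u). Then E[ 1 / sup_{s ∈ [0,1]} ( m̄(s) − m(s) ) ] = (π/8)^{1/2} · E[ ∫₀^{τ₁^R} (1/R(b)) db ]. -/

import Mathlib

open MeasureTheory ProbabilityTheory Real Set Filter

noncomputable section

variable {Ω : Type*} [MeasurableSpace Ω]

/-- A standard one-dimensional Brownian motion (indexed by `ℝ`, with the relevant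
properties required for nonnegative times): starts at `0`, has continuous paths,
independent increments, and Gaussian increments of variance `t - s`. -/
structure IsStdBM (P : Measure Ω) (B : ℝ → Ω → ℝ) : Prop where
  measurable : ∀ t : ℝ, Measurable (B t)
  start : ∀ ω, B 0 ω = 0
  cont : ∀ ω, Continuous fun t => B t ω
  indep : ∀ (n : ℕ) (t : Fin (n + 1) → ℝ), (∀ i, 0 ≤ t i) → Monotone t →
    iIndepFun
      (fun (i : Fin n) ω => B (t i.succ) ω - B (t i.castSucc) ω) P
  gauss : ∀ s t : ℝ, 0 ≤ s → s ≤ t →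
    P.map (fun ω => B t ω - B s ω) = gaussianReal 0 (Real.toNNReal (t - s))

/-- A standard `d`-dimensional Brownian motion started at `0`: the coordinate
processes are independent standard one-dimensional Brownian motions. -/
structure IsStdBMVec (d : ℕ) (P : Measure Ω) (B : ℝ → Ω → EuclideanSpace ℝ (Fin d)) : Prop where
  coord : ∀ i : Fin d, IsStdBM P (fun t ω => B t ω i)
  indepCoord : iIndepFun
    (fun (i : Fin d) ω => fun t : ℝ => B t ω i) P

/-- Last zero of `W` in `[0,1]`. -/
def lastZero (W : ℝ → Ω → ℝ) (ω : Ω) : ℝ := sSup {t ∈ Icc (0:ℝ) 1 | W t ω = 0}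

/-- `m` is a standard Brownian meander: obtained from a Brownian motion `W` by
`m s = |W (g + s (1 - g))| / √(1 - g)`, where `g` is the last zero of `W` before time `1`. -/
def IsBrownianMeander (P : Measure Ω) (m : ℝ → Ω → ℝ) : Prop :=
  ∃ W : ℝ → Ω → ℝ, IsStdBM P W ∧
    ∀ ω, ∀ s ∈ Icc (0:ℝ) 1,
      m s ω = |W (lastZero W ω + s * (1 - lastZero W ω)) ω| / Real.sqrt (1 - lastZero W ω)

/-- Running maximum `X̄(t) = sup_{s ∈ [0,t]} X(s)`. -/
def runMax (X : ℝ → Ω → ℝ) (t : ℝ) (ω : Ω) : ℝ := ⨆ s : Icc (0:ℝ) t, X s ω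

/-- Maximal drawdown on `[0,T]` : `sup_{s ∈ [0,T]} (X̄(s) - X(s))`. -/
def maxDDOn (X : ℝ → Ω → ℝ) (T : ℝ) (ω : Ω) : ℝ := ⨆ s : Icc (0:ℝ) T, (runMax X s ω - X s ω)

/-- Drawdown time `τ_λ^X := inf {t ≥ 0 : X̄(t) - X(t) ≥ λ}`. -/
def ddTime (lam : ℝ) (X : ℝ → Ω → ℝ) (ω : Ω) : ℝ :=
  sInf {t | 0 ≤ t ∧ lam ≤ runMax X t ω - X t ω}

/-- Three-dimensional Bessel process built from a 3-dimensional Brownian motion. -/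
def bessel3 (β : ℝ → Ω → EuclideanSpace ℝ (Fin 3)) (t : ℝ) (ω : Ω) : ℝ := ‖β t ω‖

/-- Squared four-dimensional Bessel process built from a 4-dimensional Brownian motion. -/
def sqBessel4 (γ : ℝ → Ω → EuclideanSpace ℝ (Fin 4)) (t : ℝ) (ω : Ω) : ℝ := ‖γ t ω‖ ^ 2

end

open scoped ENNReal

section
open MeasureTheory ProbabilityTheory Real Set Filter
open scoped ENNReal NNReal Topology

noncomputable section

abbrev E3 := EuclideanSpace ℝ (Fin 3)

/-- centred Gaussian on `E3` with covariance `v • id`. -/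
def gauss3 (v : ℝ≥0) : Measure E3 :=
  (Measure.pi (fun _ : Fin 3 => gaussianReal 0 v)).map (WithLp.toLp 2)

instance gauss3_prob (v : ℝ≥0) : IsProbabilityMeasure (gauss3 v) := by
  unfold gauss3
  exact Measure.isProbabilityMeasure_map (by fun_prop)

lemma charFun_gauss3 (v : ℝ≥0) (t : E3) :
    charFun (gauss3 v) t = Complex.exp (-(v * ‖t‖ ^ 2 / 2 : ℝ)) := by
  unfold gauss3
  rw [charFun_pi]
  simp_rw [charFun_gaussianReal, ← Complex.exp_sum]
  congr 1
  rw [EuclideanSpace.real_norm_sq_eq]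
  push_cast
  rw [Finset.mul_sum, Finset.sum_div]
  simp [Fin.sum_univ_three]

lemma gauss3_map (v : ℝ≥0) (f : E3 ≃ₗᵢ[ℝ] E3) : (gauss3 v).map f = gauss3 v := by
  have : IsProbabilityMeasure ((gauss3 v).map f) :=
    Measure.isProbabilityMeasure_map (by fun_prop)
  apply Measure.ext_of_charFun
  ext t
  rw [charFun_apply, integral_map (by fun_prop) (by fun_prop)]
  have h : ∀ x, inner ℝ (f x) t = inner ℝ x (f.symm t) := by
    intro x
    rw [← f.inner_map_map x (f.symm t)]; simp
  simp_rw [h]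
  rw [← charFun_apply, charFun_gauss3, charFun_gauss3]
  simp

lemma gauss3_lintegral_rot (v : ℝ≥0) (x y : E3) (hxy : ‖x‖ = ‖y‖) (h : ℝ → ℝ≥0∞)
    (hh : Measurable h) :
    ∫⁻ z, h ‖x + z‖ ∂gauss3 v = ∫⁻ z, h ‖y + z‖ ∂gauss3 v := by
  set f : E3 ≃ₗᵢ[ℝ] E3 := (ℝ ∙ (x - y))ᗮ.reflection with hf
  have hfx : f x = y := Submodule.reflection_sub hxy
  conv_rhs => rw [← gauss3_map v f, lintegral_map (by fun_prop) (by fun_prop), ← hfx]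
  refine lintegral_congr fun z => ?_
  rw [← map_add, f.norm_map]

lemma gauss3_lintegral (v : ℝ≥0) (G : E3 → ℝ≥0∞) (hG : Measurable G) :
    ∫⁻ z, G z ∂gauss3 v = ∫⁻ a, ∫⁻ p : ℝ × ℝ, G (!₂[a, p.1, p.2])
      ∂((gaussianReal 0 v).prod (gaussianReal 0 v)) ∂gaussianReal 0 v := by
  unfold gauss3
  rw [lintegral_map hG (by fun_prop)]
  have h1 := measurePreserving_piFinSuccAbove (fun _ : Fin 3 => gaussianReal 0 v) 0
  have h2 := measurePreserving_piFinTwo (fun _ : Fin 2 => gaussianReal 0 v)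
  have h3 := h1.symm.lintegral_comp (f := fun x => G (WithLp.toLp 2 x)) (by fun_prop)
  rw [← h3, lintegral_prod]
  · refine lintegral_congr fun a => ?_
    have h4 := h2.symm.lintegral_comp
      (f := fun x => G (WithLp.toLp 2 ((MeasurableEquiv.piFinSuccAbove (fun _ => ℝ) 0).symm (a, x))))
      (by fun_prop)
    simp only [] at h4 ⊢
    refine Eq.trans h4.symm ?_
    refine lintegral_congr fun p => ?_
    congr 1
    ext i; fin_cases i <;> rfl
  · exact Measurable.aemeasurable (by fun_prop)

lemma gauss_prod_radial (v : ℝ≥0) (hv : v ≠ 0) (G : ℝ → ℝ≥0∞) (hG : Measurable G) :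
    ∫⁻ p : ℝ × ℝ, G (p.1 ^ 2 + p.2 ^ 2) ∂((gaussianReal 0 v).prod (gaussianReal 0 v))
      = ∫⁻ r in Ioi (0:ℝ), ENNReal.ofReal (r / v * exp (-(r ^ 2) / (2 * v))) * G (r ^ 2) := by
  have hv0 : (0:ℝ) < v := by positivity
  rw [gaussianReal_of_var_ne_zero 0 hv, prod_withDensity (by fun_prop) (by fun_prop),
    lintegral_withDensity_eq_lintegral_mul _ (by fun_prop) (by fun_prop),
    ← Measure.volume_eq_prod, ← lintegral_comp_polarCoord_symm]
  have hpd : ∀ x y : ℝ, gaussianPDF 0 v x * gaussianPDF 0 v y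
      = ENNReal.ofReal ((2 * π * v)⁻¹ * exp (-(x ^ 2 + y ^ 2) / (2 * v))) := by
    intro x y
    rw [gaussianPDF_def, ← ENNReal.ofReal_mul (gaussianPDFReal_nonneg _ _ _)]
    congr 1
    unfold gaussianPDFReal
    rw [mul_mul_mul_comm, ← Real.exp_add, ← mul_inv, Real.mul_self_sqrt (by positivity)]
    congr 2
    ring
  have hI : ∀ p ∈ polarCoord.target, ENNReal.ofReal p.1 •
      (((fun z : ℝ × ℝ => gaussianPDF 0 v z.1 * gaussianPDF 0 v z.2) *
        fun p : ℝ × ℝ => G (p.1 ^ 2 + p.2 ^ 2)) (polarCoord.symm p))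
      = ENNReal.ofReal (2 * π)⁻¹ * (ENNReal.ofReal (p.1 / v * exp (-(p.1 ^ 2) / (2 * v))) * G (p.1 ^ 2)) := by
    intro p hp
    have hp1 : 0 < p.1 := hp.1
    have hsum : (p.1 * cos p.2) ^ 2 + (p.1 * sin p.2) ^ 2 = p.1 ^ 2 := by
      rw [mul_pow, mul_pow, ← mul_add, Real.cos_sq_add_sin_sq, mul_one]
    simp only [Pi.mul_apply, polarCoord_symm_apply, smul_eq_mul, hpd, hsum]
    rw [← mul_assoc, ← mul_assoc, ← ENNReal.ofReal_mul hp1.le, ← ENNReal.ofReal_mul (by positivity)]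
    congr 2
    field_simp
  rw [setLIntegral_congr_fun (polarCoord.open_target.measurableSet) hI]
  have : polarCoord.target = Ioi (0:ℝ) ×ˢ Ioo (-π) π := rfl
  rw [this, Measure.volume_eq_prod, ← Measure.prod_restrict, lintegral_prod _ (by fun_prop)]
  simp only [lintegral_const, MeasurableSet.univ, Measure.restrict_apply, univ_inter, Real.volume_Ioo]
  rw [lintegral_mul_const _ (by fun_prop), lintegral_const_mul _ (by fun_prop), mul_comm, ← mul_assoc,
    ← ENNReal.ofReal_mul (by linarith [Real.pi_pos])]
  have : (π - -π) * (2 * π)⁻¹ = 1 := by field_simp; ring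
  rw [this]; simp

lemma radial_subst (v : ℝ≥0) (hv : v ≠ 0) (A : ℝ) (H : ℝ → ℝ≥0∞) :
    ∫⁻ r in Ioi (0:ℝ), ENNReal.ofReal (r / v * exp (-(r ^ 2) / (2 * v))) * H (√(A ^ 2 + r ^ 2))
    = ∫⁻ y in Ioi |A|, ENNReal.ofReal (y / v * exp (-(y ^ 2 - A ^ 2) / (2 * v))) * H y := by
  have hv0 : (0:ℝ) < v := by positivity
  have himg : (fun r : ℝ => √(A ^ 2 + r ^ 2)) '' Ioi 0 = Ioi |A| := by
    ext y
    simp only [mem_image, mem_Ioi]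
    constructor
    · rintro ⟨r, hr, rfl⟩
      rw [← Real.sqrt_sq_eq_abs]
      exact Real.sqrt_lt_sqrt (by positivity) (by nlinarith)
    · intro hy
      have hy0 : 0 < y := lt_of_le_of_lt (abs_nonneg _) hy
      have : A ^ 2 < y ^ 2 := by rw [← sq_abs A]; exact pow_lt_pow_left₀ hy (abs_nonneg _) two_ne_zero
      refine ⟨√(y ^ 2 - A ^ 2), Real.sqrt_pos.2 (by linarith), ?_⟩
      rw [Real.sq_sqrt (by linarith)]
      rw [show A ^ 2 + (y ^ 2 - A ^ 2) = y ^ 2 by ring, Real.sqrt_sq hy0.le]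
  rw [← himg, lintegral_image_eq_lintegral_abs_deriv_mul measurableSet_Ioi
    (f' := fun r => r / √(A ^ 2 + r ^ 2))]
  · refine setLIntegral_congr_fun measurableSet_Ioi fun r hr => ?_
    have hr : 0 < r := hr
    have hs : 0 < A ^ 2 + r ^ 2 := by positivity
    have hss : 0 < √(A ^ 2 + r ^ 2) := Real.sqrt_pos.2 hs
    rw [← mul_assoc, ← ENNReal.ofReal_mul (abs_nonneg _), abs_of_pos (by positivity), Real.sq_sqrt hs.le]
    congr 2
    rw [show -(A ^ 2 + r ^ 2 - A ^ 2) = - r ^ 2 by ring]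
    field_simp
  · intro r hr
    have hr : 0 < r := hr
    have hs : A ^ 2 + r ^ 2 ≠ 0 := by positivity
    have h1 : HasDerivAt (fun r : ℝ => A ^ 2 + r ^ 2) (2 * r) r := by
      simpa using (hasDerivAt_pow 2 r).const_add (A ^ 2)
    have h2 := (h1.sqrt hs).hasDerivWithinAt (s := Ioi 0)
    rw [mul_div_mul_left _ _ two_ne_zero] at h2
    exact h2
  · intro a ha b hb hab
    have ha : 0 < a := ha
    have hb : 0 < b := hb
    simp only [] at hab
    rw [Real.sqrt_inj (by positivity) (by positivity)] at hab
    have : a ^ 2 = b ^ 2 := by linarith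
    exact (pow_left_inj₀ ha.le hb.le two_ne_zero).1 this

lemma norm_three (a b c : ℝ) : ‖(!₂[a, b, c] : E3)‖ = √(a ^ 2 + (b ^ 2 + c ^ 2)) := by
  rw [EuclideanSpace.norm_eq]
  simp [Fin.sum_univ_three, add_assoc]

/-- Radial formula, general form. -/
lemma gauss3_radial (v : ℝ≥0) (hv : v ≠ 0) (r : ℝ) (h : ℝ → ℝ≥0∞) (hh : Measurable h) :
    ∫⁻ z, h ‖(!₂[r, 0, 0] : E3) + z‖ / ENNReal.ofReal ‖(!₂[r, 0, 0] : E3) + z‖ ∂gauss3 v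
      = ∫⁻ y in Ioi (0:ℝ), ∫⁻ a in Ioo (-y) y, gaussianPDF r v a *
          ENNReal.ofReal (1 / v * exp (-(y ^ 2 - a ^ 2) / (2 * v))) * h y := by
  have hv0 : (0:ℝ) < v := by positivity
  rw [gauss3_lintegral v _ (by fun_prop)]
  have e1 : ∀ a b c : ℝ, (!₂[r, 0, 0] : E3) + !₂[a, b, c] = !₂[r + a, b, c] := by
    intro a b c; ext i; fin_cases i <;> simp
  simp_rw [e1, norm_three]
  have e2 : ∀ a : ℝ, ∫⁻ p : ℝ × ℝ, h √((r + a) ^ 2 + (p.1 ^ 2 + p.2 ^ 2)) /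
      ENNReal.ofReal √((r + a) ^ 2 + (p.1 ^ 2 + p.2 ^ 2)) ∂((gaussianReal 0 v).prod (gaussianReal 0 v))
      = ∫⁻ y in Ioi |r + a|, ENNReal.ofReal (1 / v * exp (-(y ^ 2 - (r + a) ^ 2) / (2 * v))) * h y := by
    intro a
    rw [gauss_prod_radial v hv (fun s => h √((r + a) ^ 2 + s) / ENNReal.ofReal √((r + a) ^ 2 + s))
      (by fun_prop), radial_subst v hv (r + a) (fun y => h y / ENNReal.ofReal y)]
    refine setLIntegral_congr_fun measurableSet_Ioi fun y hy => ?_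
    have hy0 : 0 < y := lt_of_le_of_lt (abs_nonneg _) hy
    rw [div_eq_mul_inv (h y), mul_comm (h y), ← mul_assoc, ← ENNReal.ofReal_inv_of_pos hy0,
      ← ENNReal.ofReal_mul (by positivity)]
    congr 2
    field_simp
  simp_rw [e2]
  have e3 : gaussianReal r v = (gaussianReal 0 v).map (fun a => r + a) := by
    have := gaussianReal_map_const_add (μ := 0) (v := v) r
    simpa using this.symm
  set K : ℝ → ℝ → ℝ≥0∞ := fun a y => ENNReal.ofReal (1 / v * exp (-(y ^ 2 - a ^ 2) / (2 * v))) * h y with hK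
  have hKm : Measurable (Function.uncurry K) := by simp only [hK, Function.uncurry_def]; fun_prop
  have hset : MeasurableSet {p : ℝ × ℝ | |p.1| < p.2} := measurableSet_lt (by fun_prop) (by fun_prop)
  have hIm : Measurable (fun p : ℝ × ℝ => {p : ℝ × ℝ | |p.1| < p.2}.indicator (Function.uncurry K) p) :=
    hKm.indicator hset
  have e4 : ∀ a, ∫⁻ y in Ioi |a|, K a y = ∫⁻ y, {p : ℝ × ℝ | |p.1| < p.2}.indicator (Function.uncurry K) (a, y) := by
    intro a
    rw [← lintegral_indicator measurableSet_Ioi]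
    rfl
  have hmeas : Measurable (fun a => ∫⁻ y in Ioi |a|, K a y) := by
    simp_rw [e4]
    exact hIm.lintegral_prod_right'
  calc _ = ∫⁻ a, (∫⁻ y in Ioi |a|, K a y) ∂(gaussianReal r v) := by
        rw [e3, lintegral_map hmeas (by fun_prop)]
    _ = ∫⁻ a, ∫⁻ y, gaussianPDF r v a * {p : ℝ × ℝ | |p.1| < p.2}.indicator (Function.uncurry K) (a, y) := by
        rw [gaussianReal_of_var_ne_zero r hv, lintegral_withDensity_eq_lintegral_mul _ (by fun_prop) hmeas]
        refine lintegral_congr fun a => ?_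
        rw [Pi.mul_apply, e4, lintegral_const_mul]
        exact hIm.comp measurable_prodMk_left
    _ = ∫⁻ y, ∫⁻ a, gaussianPDF r v a * {p : ℝ × ℝ | |p.1| < p.2}.indicator (Function.uncurry K) (a, y) := by
        rw [lintegral_lintegral_swap]
        apply Measurable.aemeasurable
        exact ((measurable_gaussianPDF r v).comp measurable_fst).mul hIm
    _ = _ := by
        rw [← lintegral_indicator measurableSet_Ioi]
        refine lintegral_congr fun y => ?_
        by_cases hy : 0 < y
        · rw [indicator_of_mem (by exact hy), ← lintegral_indicator measurableSet_Ioo]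
          refine lintegral_congr fun a => ?_
          by_cases ha : |a| < y
          · rw [indicator_of_mem (by exact ha), indicator_of_mem (by rwa [mem_Ioo, ← abs_lt])]
            simp only [hK, Function.uncurry, mul_assoc]
          · rw [indicator_of_notMem (by exact ha), indicator_of_notMem (by rwa [mem_Ioo, ← abs_lt]), mul_zero]
        · rw [indicator_of_notMem (by exact hy)]
          rw [lintegral_eq_zero_iff' , ]
          · filter_upwards with a
            rw [indicator_of_notMem, mul_zero]; rfl
            intro (h : |a| < y)
            exact hy (lt_of_le_of_lt (abs_nonneg _) h)
          · apply Measurable.aemeasurable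
            exact ((measurable_gaussianPDF r v)).mul (hIm.comp measurable_prodMk_right)

end

end

section
open MeasureTheory ProbabilityTheory Real Set Filter
open scoped ENNReal NNReal Topology

noncomputable section

lemma norm_single0 (r : ℝ) : ‖(!₂[r, 0, 0] : E3)‖ = |r| := by
  rw [norm_three]; simp [Real.sqrt_sq_eq_abs]

lemma inner_int (v : ℝ≥0) (hv : v ≠ 0) (r : ℝ) (hr : 0 < r) (y : ℝ) (hy : 0 < y) :
    ENNReal.ofReal r * ∫⁻ a in Ioo (-y) y, gaussianPDF r v a *
          ENNReal.ofReal (1 / v * exp (-(y ^ 2 - a ^ 2) / (2 * v)))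
      = gaussianPDF r v y * ENNReal.ofReal (1 - exp (-2 * r * y / v)) := by
  have hv0 : (0:ℝ) < v := by positivity
  have e1 : ∀ a, gaussianPDF r v a * ENNReal.ofReal (1 / v * exp (-(y ^ 2 - a ^ 2) / (2 * v)))
      = ENNReal.ofReal ((√(2 * π * v))⁻¹ * (1 / v) * exp (-(y ^ 2 + r ^ 2) / (2 * v)) * exp (r / v * a)) := by
    intro a
    rw [gaussianPDF_def, ← ENNReal.ofReal_mul (gaussianPDFReal_nonneg _ _ _)]
    unfold gaussianPDFReal
    congr 1
    rw [mul_mul_mul_comm, ← Real.exp_add, mul_assoc _ (rexp _) (rexp _), ← Real.exp_add]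
    congr 2
    field_simp
    ring
  simp_rw [e1]
  rw [← ofReal_integral_eq_lintegral_ofReal]
  · rw [← ENNReal.ofReal_mul hr.le, gaussianPDF_def, ← ENNReal.ofReal_mul (gaussianPDFReal_nonneg _ _ _)]
    congr 1
    rw [← integral_Ioc_eq_integral_Ioo, ← intervalIntegral.integral_of_le (by linarith),
      intervalIntegral.integral_const_mul, intervalIntegral.integral_comp_mul_left _ (by positivity),
      integral_exp]
    unfold gaussianPDFReal
    have e2 : rexp (-(y - r) ^ 2 / (2 * v)) = exp (-(y ^ 2 + r ^ 2) / (2 * v)) * exp (r / v * y) := by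
      rw [← Real.exp_add]; congr 1; field_simp; ring
    have e3 : rexp (-2 * r * y / v) = exp (r / v * -y) / exp (r / v * y) := by
      rw [← Real.exp_sub]; congr 1; field_simp; ring
    rw [e2, e3]
    have := Real.exp_pos (r / v * y)
    have h2 : √(2 * π * v) ≠ 0 := by positivity
    simp only [smul_eq_mul]
    field_simp
  · have : Continuous fun a => ((√(2 * π * v))⁻¹ * (1 / v) * exp (-(y ^ 2 + r ^ 2) / (2 * v)) * exp (r / v * a)) := by
      fun_prop
    exact (this.integrableOn_Icc (a := -y) (b := y)).mono_set Ioo_subset_Icc_self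
  · filter_upwards with a; positivity

lemma kernel_pos (v : ℝ≥0) (hv : v ≠ 0) (r : ℝ) (hr : 0 < r) (h : ℝ → ℝ≥0∞) (hh : Measurable h) :
    ENNReal.ofReal r * ∫⁻ z, h ‖(!₂[r, 0, 0] : E3) + z‖ / ENNReal.ofReal ‖(!₂[r, 0, 0] : E3) + z‖ ∂gauss3 v
    = ∫⁻ y in Ioi 0, gaussianPDF r v y * ENNReal.ofReal (1 - exp (-2 * r * y / v)) * h y := by
  rw [gauss3_radial v hv r h hh, ← lintegral_const_mul' _ _ ENNReal.ofReal_ne_top]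
  refine setLIntegral_congr_fun measurableSet_Ioi fun y hy => ?_
  have hy : 0 < y := hy
  rw [← inner_int v hv r hr y hy, lintegral_mul_const _ (by fun_prop), mul_assoc]

lemma kernel_one (v : ℝ≥0) (hv : v ≠ 0) (r : ℝ) (hr : 0 < r) (h : ℝ → ℝ≥0∞) (hh : Measurable h) :
    ∫⁻ ξ, ENNReal.ofReal (1 - exp (-2 * r * (r + ξ) / v)) * h |r + ξ| ∂gaussianReal 0 v
    = ∫⁻ y in Ioi 0, gaussianPDF r v y * ENNReal.ofReal (1 - exp (-2 * r * y / v)) * h y := by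
  have hv0 : (0:ℝ) < v := by positivity
  have e3 : gaussianReal r v = (gaussianReal 0 v).map (fun a => r + a) := by
    have := gaussianReal_map_const_add (μ := 0) (v := v) r
    simpa using this.symm
  have : ∫⁻ ξ, ENNReal.ofReal (1 - exp (-2 * r * (r + ξ) / v)) * h |r + ξ| ∂gaussianReal 0 v
    = ∫⁻ y, ENNReal.ofReal (1 - exp (-2 * r * y / v)) * h |y| ∂gaussianReal r v := by
    rw [e3, lintegral_map (by fun_prop) (by fun_prop)]
  rw [this, gaussianReal_of_var_ne_zero r hv, lintegral_withDensity_eq_lintegral_mul _ (by fun_prop) (by fun_prop),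
    ← lintegral_indicator measurableSet_Ioi]
  refine lintegral_congr fun y => ?_
  by_cases hy : 0 < y
  · rw [indicator_of_mem (by exact hy), Pi.mul_apply, abs_of_pos hy]; exact (mul_assoc _ _ _).symm
  · rw [indicator_of_notMem (by exact hy), Pi.mul_apply]
    have : 1 - exp (-2 * r * y / v) ≤ 0 := by
      have : 1 ≤ exp (-2 * r * y / v) := by
        apply Real.one_le_exp
        apply div_nonneg _ hv0.le
        nlinarith
      linarith
    rw [ENNReal.ofReal_of_nonpos this]; simp

/-- the key one-step identity -/
lemma kernel_identity (v : ℝ≥0) (hv : v ≠ 0) (x : ℝ) (u : E3) (hu : ‖u‖ = |x|) (h : ℝ → ℝ≥0∞)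
    (hh : Measurable h) :
    ∫⁻ ξ, ENNReal.ofReal (1 - exp (-2 * x * (x + ξ) / v)) * h |x + ξ| ∂gaussianReal 0 v
    = ENNReal.ofReal |x| * ∫⁻ z, h ‖u + z‖ / ENNReal.ofReal ‖u + z‖ ∂gauss3 v := by
  rcases lt_trichotomy x 0 with hx | rfl | hx
  · have hx' : 0 < -x := by linarith
    rw [gauss3_lintegral_rot v u !₂[-x, 0, 0] (by rw [norm_single0, hu, abs_neg])
      (fun y => h y / ENNReal.ofReal y) (by fun_prop), abs_of_neg hx, kernel_pos v hv _ hx' h hh,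
      ← kernel_one v hv _ hx' h hh]
    have : gaussianReal 0 v = (gaussianReal 0 v).map (fun y => -y) := by
      rw [gaussianReal_map_neg]; simp
    conv_lhs => rw [this, lintegral_map (by fun_prop) (by fun_prop)]
    refine lintegral_congr fun ξ => ?_
    rw [← abs_neg (-x + ξ)]
    congr 4 <;> ring
  · simp
  · rw [gauss3_lintegral_rot v u !₂[x, 0, 0] (by rw [norm_single0, hu])
      (fun y => h y / ENNReal.ofReal y) (by fun_prop), abs_of_pos hx, kernel_pos v hv x hx h hh,
      kernel_one v hv x hx h hh]

lemma kernel_zero : ∫⁻ z, 1 / ENNReal.ofReal ‖z‖ ∂gauss3 1 = ENNReal.ofReal √(2 / π) := by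
  have h1 := gauss3_radial 1 one_ne_zero 0 (fun _ => 1) measurable_const
  have h0 : (!₂[(0:ℝ), 0, 0] : E3) = 0 := by ext i; fin_cases i <;> simp
  simp only [h0, zero_add] at h1
  rw [h1]
  have h2 := gauss_prod_radial 1 one_ne_zero (fun _ => 1) measurable_const
  simp only [lintegral_const, measure_univ, mul_one] at h2
  have e : ∀ y ∈ Ioi (0:ℝ), ∫⁻ a in Ioo (-y) y, gaussianPDF 0 1 a *
          ENNReal.ofReal (1 / (1:ℝ≥0) * exp (-(y ^ 2 - a ^ 2) / (2 * (1:ℝ≥0)))) * 1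
      = ENNReal.ofReal √(2 / π) * ENNReal.ofReal (y / (1:ℝ≥0) * exp (-(y ^ 2) / (2 * (1:ℝ≥0)))) := by
    intro y hy
    have hy : 0 < y := hy
    have e1 : ∀ a, gaussianPDF 0 1 a * ENNReal.ofReal (1 / (1:ℝ≥0) * exp (-(y ^ 2 - a ^ 2) / (2 * (1:ℝ≥0)))) * 1
      = ENNReal.ofReal ((√(2 * π))⁻¹ * exp (-(y ^ 2) / 2)) := by
      intro a
      rw [gaussianPDF_def, mul_one, ← ENNReal.ofReal_mul (gaussianPDFReal_nonneg _ _ _)]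
      unfold gaussianPDFReal
      congr 1
      simp only [NNReal.coe_one, mul_one, div_one, one_mul]
      rw [mul_assoc, ← Real.exp_add]
      congr 2
      ring
    simp_rw [e1]
    rw [lintegral_const, Measure.restrict_apply MeasurableSet.univ, univ_inter, Real.volume_Ioo,
      ← ENNReal.ofReal_mul (by positivity), ← ENNReal.ofReal_mul (by positivity)]
    congr 1
    have : √(2 / π) = 2 / √(2 * π) := by
      rw [eq_div_iff (by positivity), ← Real.sqrt_mul (by positivity)]
      rw [show 2 / π * (2 * π) = 2 ^ 2 by field_simp, Real.sqrt_sq (by norm_num)]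
    rw [this]
    simp only [NNReal.coe_one, mul_one, div_one]
    ring
  rw [setLIntegral_congr_fun measurableSet_Ioi e, lintegral_const_mul _ (by fun_prop), ← h2, mul_one]

lemma kernel_tail (v : ℝ≥0) (hv : v ≠ 0) (u : E3) (ε : ℝ) (hε : 0 < ε) :
    ∫⁻ z, (Iio ε).indicator 1 ‖u + z‖ / ENNReal.ofReal ‖u + z‖ ∂gauss3 v
      ≤ ENNReal.ofReal (2 * ε ^ 2 * ((√(2 * π * v))⁻¹ * (1 / v))) := by
  have hv0 : (0:ℝ) < v := by positivity
  have hm : Measurable ((Iio ε).indicator 1 : ℝ → ℝ≥0∞) := measurable_one.indicator measurableSet_Iio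
  rw [gauss3_lintegral_rot v u !₂[‖u‖, 0, 0] (by rw [norm_single0, abs_norm])
      (fun y => (Iio ε).indicator 1 y / ENNReal.ofReal y) (hm.div (by fun_prop)), gauss3_radial v hv _ _ hm]
  calc _ ≤ ∫⁻ y in Ioi (0:ℝ), (Iio ε).indicator (fun _ => ENNReal.ofReal (2 * ε * ((√(2 * π * v))⁻¹ * (1 / v)))) y := by
        refine setLIntegral_mono' measurableSet_Ioi fun y hy => ?_
        have hy : 0 < y := hy
        by_cases hye : y < ε
        · rw [indicator_of_mem (by exact hye), indicator_of_mem (by exact hye)]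
          calc _ ≤ ∫⁻ a in Ioo (-y) y, ENNReal.ofReal ((√(2 * π * v))⁻¹ * (1 / v)) := by
                refine setLIntegral_mono' measurableSet_Ioo fun a ha => ?_
                rw [Pi.one_apply, mul_one, gaussianPDF_def, ← ENNReal.ofReal_mul (gaussianPDFReal_nonneg _ _ _)]
                apply ENNReal.ofReal_le_ofReal
                unfold gaussianPDFReal
                have h1 : rexp (-(a - ‖u‖) ^ 2 / (2 * v)) ≤ 1 := by
                  apply Real.exp_le_one_iff.2
                  apply div_nonpos_of_nonpos_of_nonneg _ (by positivity)
                  nlinarith [sq_nonneg (a - ‖u‖)]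
                have h2 : rexp (-(y ^ 2 - a ^ 2) / (2 * v)) ≤ 1 := by
                  apply Real.exp_le_one_iff.2
                  apply div_nonpos_of_nonpos_of_nonneg _ (by positivity)
                  nlinarith [ha.1, ha.2]
                gcongr
                · exact mul_le_of_le_one_right (by positivity) h1
                · exact mul_le_of_le_one_right (by positivity) h2
            _ ≤ _ := by
                rw [lintegral_const, Measure.restrict_apply MeasurableSet.univ, univ_inter, Real.volume_Ioo,
                  ← ENNReal.ofReal_mul (by positivity)]
                apply ENNReal.ofReal_le_ofReal
                rw [mul_comm]
                gcongr
                linarith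
        · rw [indicator_of_notMem (by exact hye), indicator_of_notMem (by exact hye)]
          simp
    _ ≤ _ := by
        rw [lintegral_indicator measurableSet_Iio, lintegral_const, Measure.restrict_apply MeasurableSet.univ,
          univ_inter, Measure.restrict_apply measurableSet_Iio, Set.inter_comm, Set.Ioi_inter_Iio, Real.volume_Ioo,
          ← ENNReal.ofReal_mul (by positivity)]
        apply ENNReal.ofReal_le_ofReal
        apply le_of_eq; ring

end

end

section
open MeasureTheory ProbabilityTheory Real Set Filter
open scoped ENNReal NNReal Topology

noncomputable section

/-- update of (running max, max drawdown) -/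
def upd (s : ℝ × ℝ) (x : ℝ) : ℝ × ℝ := (max s.1 x, max s.2 (max s.1 x - x))

lemma measurable_upd : Measurable (fun p : (ℝ × ℝ) × ℝ => upd p.1 p.2) := by
  unfold upd; fun_prop

lemma Measurable.upd' {α : Type*} {_ : MeasurableSpace α} {f : α → ℝ × ℝ} {g : α → ℝ} (hf : Measurable f)
    (hg : Measurable g) : Measurable (fun a => upd (f a) (g a)) :=
  measurable_upd.comp (hf.prodMk hg)

def ddState (x : ℕ → ℝ) : ℕ → ℝ × ℝ
  | 0 => (x 0, 0)
  | i + 1 => upd (ddState x i) (x (i + 1))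

def gridDD (x : ℕ → ℝ) (N : ℕ) : ℝ := (ddState x N).2

def valF {V : Type*} [Add V] [MeasurableSpace V] (γ : Measure V) (κ : V → V → ℝ≥0∞) (ρ : V → ℝ)
    (F : ℝ × ℝ → V → ℝ≥0∞) : ℕ → ℝ × ℝ → V → ℝ≥0∞
  | 0 => F
  | j + 1 => fun s x => ∫⁻ z, κ x (x + z) * valF γ κ ρ F j (upd s (ρ (x + z))) (x + z) ∂γ

lemma measurable_valF {V : Type*} [Add V] [MeasurableSpace V] [MeasurableAdd₂ V] (γ : Measure V) [SFinite γ]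
    (κ : V → V → ℝ≥0∞) (ρ : V → ℝ) (F : ℝ × ℝ → V → ℝ≥0∞)
    (hκ : Measurable (Function.uncurry κ)) (hρ : Measurable ρ) (hF : Measurable (Function.uncurry F)) (j : ℕ) :
    Measurable (Function.uncurry (valF γ κ ρ F j)) := by
  induction j with
  | zero => exact hF
  | succ j ih =>
    have : Measurable (fun q : ((ℝ × ℝ) × V) × V => κ q.1.2 (q.1.2 + q.2) *
        valF γ κ ρ F j (upd q.1.1 (ρ (q.1.2 + q.2))) (q.1.2 + q.2)) := by
      have hadd : Measurable (fun q : ((ℝ × ℝ) × V) × V => q.1.2 + q.2) := by fun_prop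
      refine (hκ.comp ((by fun_prop : Measurable (fun q : ((ℝ × ℝ) × V) × V => q.1.2)).prodMk hadd)).mul ?_
      exact ih.comp ((Measurable.upd' (by fun_prop) (hρ.comp hadd)).prodMk hadd)
    exact this.lintegral_prod_right'

lemma gauss3_add_ne_zero (v : ℝ≥0) (hv : v ≠ 0) (u : E3) : ∀ᵐ z ∂gauss3 v, u + z ≠ 0 := by
  rw [ae_iff]
  have : {z : E3 | ¬ (u + z ≠ 0)} = {-u} := by
    ext z; simp only [ne_eq, not_not, Set.mem_ofPred_eq, mem_singleton_iff]
    exact ⟨fun h => (neg_eq_of_add_eq_zero_right h).symm, fun h => by rw [h]; simp⟩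
  rw [this]
  unfold gauss3
  rw [Measure.map_apply (by fun_prop) (measurableSet_singleton _)]
  have : (WithLp.toLp 2 ⁻¹' {-u} : Set (Fin 3 → ℝ)) = {WithLp.ofLp (-u)} := by
    ext z; simp only [mem_preimage, mem_singleton_iff]
    exact ⟨fun h => by rw [← h], fun h => by rw [h]⟩
  rw [this, Measure.pi_singleton, Fin.prod_univ_three]
  have h := nullSingletonClass_gaussianReal (μ := 0) hv
  rw [measure_singleton, zero_mul, zero_mul]

def kap (v : ℝ≥0) (x y : ℝ) : ℝ≥0∞ := ENNReal.ofReal (1 - exp (-2 * x * y / v))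

lemma measurable_kap (v : ℝ≥0) : Measurable (Function.uncurry (kap v)) := by
  unfold kap Function.uncurry; fun_prop

lemma kap_zero_left (v : ℝ≥0) (y : ℝ) : kap v 0 y = 0 := by simp [kap]
lemma kap_zero_right (v : ℝ≥0) (x : ℝ) : kap v x 0 = 0 := by simp [kap]
lemma kap_le_one (v : ℝ≥0) (x y : ℝ) : kap v x y ≤ 1 := by
  unfold kap; rw [ENNReal.ofReal_le_one]; linarith [Real.exp_pos (-2 * x * y / v)]

def val1 (v : ℝ≥0) (G : ℝ × ℝ → ℝ≥0∞) := valF (gaussianReal 0 v) (kap v) (fun x => |x|) (fun s _ => G s)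
def val3 (v : ℝ≥0) (G : ℝ × ℝ → ℝ → ℝ≥0∞) :=
  valF (gauss3 v) (fun _ _ => 1) (fun x => ‖x‖) (fun s w => G s ‖w‖)

lemma measurable_val3 (v : ℝ≥0) (G : ℝ × ℝ → ℝ → ℝ≥0∞) (hG : Measurable (Function.uncurry G)) (j : ℕ) :
    Measurable (Function.uncurry (val3 v G j)) := by
  apply measurable_valF _ _ _ _ (by fun_prop) (by fun_prop)
  exact hG.comp (f := fun p : (ℝ × ℝ) × E3 => (p.1, ‖p.2‖)) (by fun_prop)

lemma measurable_val1 (v : ℝ≥0) (G : ℝ × ℝ → ℝ≥0∞) (hG : Measurable G) (j : ℕ) :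
    Measurable (Function.uncurry (val1 v G j)) :=
  measurable_valF (gaussianReal 0 v) (kap v) (fun x => |x|) (fun s _ => G s) (measurable_kap v) (by fun_prop)
    (hG.comp measurable_fst) j

lemma measurable_e0 : Measurable (fun r : ℝ => (!₂[r, 0, 0] : E3)) := by
  have : Continuous (fun r : ℝ => (!₂[r, 0, 0] : E3)) := by fun_prop
  exact this.measurable

lemma val3_rot (v : ℝ≥0) (G : ℝ × ℝ → ℝ → ℝ≥0∞) (hG : Measurable (Function.uncurry G)) (j : ℕ) (s : ℝ × ℝ)
    (u : E3) : val3 v G j s u = val3 v G j s !₂[‖u‖, 0, 0] := by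
  induction j generalizing s u with
  | zero => simp [val3, valF, norm_single0]
  | succ j ih =>
    have hm := measurable_val3 v G hG j
    have key : ∀ w : E3, val3 v G (j+1) s w = ∫⁻ z, (fun y => val3 v G j (upd s y) !₂[y, 0, 0]) ‖w + z‖ ∂gauss3 v := by
      intro w
      change ∫⁻ z, 1 * val3 v G j (upd s ‖w + z‖) (w + z) ∂gauss3 v = _
      simp_rw [one_mul]
      refine lintegral_congr fun z => ?_
      rw [ih]
    rw [key, key]
    refine gauss3_lintegral_rot v u !₂[‖u‖, 0, 0] (by rw [norm_single0, abs_norm])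
      (fun y => val3 v G j (upd s y) !₂[y, 0, 0]) ?_
    exact hm.comp ((Measurable.upd' measurable_const measurable_id).prodMk measurable_e0)

lemma val1_eq (v : ℝ≥0) (hv : v ≠ 0) (G : ℝ × ℝ → ℝ≥0∞) (hG : Measurable G) (j : ℕ) (s : ℝ × ℝ) (x : ℝ) (u : E3)
    (hu : ‖u‖ = |x|) (hj : j ≠ 0 ∨ x ≠ 0) :
    val1 v G j s x = ENNReal.ofReal |x| * val3 v (fun s r => G s / ENNReal.ofReal r) j s u := by
  have hG' : Measurable (Function.uncurry fun (s : ℝ × ℝ) r => G s / ENNReal.ofReal r) := by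
    unfold Function.uncurry; fun_prop
  induction j generalizing s x u with
  | zero =>
    have hx : x ≠ 0 := by simpa using hj
    have : ENNReal.ofReal |x| ≠ 0 := by simp [hx]
    simp only [val1, val3, valF, hu]
    rw [ENNReal.mul_div_cancel this ENNReal.ofReal_ne_top]
  | succ j ih =>
    have hm := measurable_val3 v _ hG' j
    set B := val3 v (fun s r => G s / ENNReal.ofReal r) j with hB
    set h : ℝ → ℝ≥0∞ := fun y => ENNReal.ofReal y * B (upd s y) !₂[y, 0, 0] with hh
    have hhm : Measurable h := by
      refine Measurable.mul (by fun_prop) ?_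
      exact hm.comp ((Measurable.upd' measurable_const measurable_id).prodMk measurable_e0)
    have e1 : val1 v G (j+1) s x = ∫⁻ ξ, ENNReal.ofReal (1 - exp (-2 * x * (x + ξ) / v)) * h |x + ξ| ∂gaussianReal 0 v := by
      change ∫⁻ ξ, kap v x (x + ξ) * val1 v G j (upd s |x + ξ|) (x + ξ) ∂_ = _
      refine lintegral_congr fun ξ => ?_
      by_cases h0 : x + ξ = 0
      · rw [h0, kap_zero_right]; simp
      · rw [ih (upd s |x + ξ|) (x + ξ) !₂[(abs (x + ξ)), 0, 0] (by rw [norm_single0, abs_abs]) (Or.inr h0)]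
        rfl
    rw [e1, kernel_identity v hv x u hu h hhm]
    congr 1
    change _ = ∫⁻ z, 1 * B (upd s ‖u + z‖) (u + z) ∂_
    refine lintegral_congr_ae ?_
    filter_upwards [gauss3_add_ne_zero v hv u] with z hz
    have : ENNReal.ofReal ‖u + z‖ ≠ 0 := by simp [hz]
    rw [one_mul, hB, val3_rot v _ hG']
    change ENNReal.ofReal ‖u + z‖ * B (upd s ‖u + z‖) !₂[‖u + z‖, 0, 0] / _ = _
    rw [mul_comm, ENNReal.mul_div_cancel_right this ENNReal.ofReal_ne_top]

lemma lintegral_indep_step {Ω α V : Type*} {m : MeasurableSpace Ω} {mΩ : MeasurableSpace Ω} [MeasurableSpace α] [MeasurableSpace V]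
    {P : Measure Ω} [IsProbabilityMeasure P] (hm : m ≤ mΩ) {A : Ω → α} (hA : Measurable[m] A)
    {ζ : Ω → V} (hζ : Measurable ζ) (hind : Indep m (MeasurableSpace.comap ζ inferInstance) P)
    {γ : Measure V} [SFinite γ] (hlaw : P.map ζ = γ) {H : α × V → ℝ≥0∞} (hH : Measurable H) :
    ∫⁻ ω, H (A ω, ζ ω) ∂P = ∫⁻ ω, ∫⁻ z, H (A ω, z) ∂γ ∂P := by
  have hA' : Measurable A := hA.mono hm le_rfl
  have hi : IndepFun A ζ P := by
    rw [IndepFun_iff_Indep]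
    exact indep_of_indep_of_le_left hind hA.comap_le
  have h1 := (indepFun_iff_map_prod_eq_prod_map_map hA'.aemeasurable hζ.aemeasurable).1 hi
  rw [← lintegral_map hH (hA'.prodMk hζ), h1, hlaw, lintegral_prod _ hH.aemeasurable,
    lintegral_map hH.lintegral_prod_right' hA']

lemma chain_value {Ω V : Type*} {mΩ : MeasurableSpace Ω} [AddCommGroup V] [MeasurableSpace V] [MeasurableAdd₂ V]
    {P : Measure Ω} [IsProbabilityMeasure P] (m : ℕ → MeasurableSpace Ω) (hm : ∀ i, m i ≤ mΩ) (hmono : Monotone m)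
    (X : ℕ → Ω → V) (hX : ∀ i, Measurable[m i] (X i)) (hXs : ∀ i, Measurable fun ω => X (i+1) ω - X i ω)
    (hind : ∀ i, Indep (m i) (MeasurableSpace.comap (fun ω => X (i+1) ω - X i ω) inferInstance) P)
    (γ : Measure V) [SFinite γ] (hlaw : ∀ i, P.map (fun ω => X (i+1) ω - X i ω) = γ)
    (κ : V → V → ℝ≥0∞) (ρ : V → ℝ) (F : ℝ × ℝ → V → ℝ≥0∞)
    (hκ : Measurable (Function.uncurry κ)) (hρ : Measurable ρ) (hF : Measurable (Function.uncurry F))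
    (Y : Ω → ℝ≥0∞) (hY : Measurable[m 0] Y) (N : ℕ) :
    ∫⁻ ω, Y ω * (∏ i ∈ Finset.range N, κ (X i ω) (X (i+1) ω)) * F (ddState (fun i => ρ (X i ω)) N) (X N ω) ∂P
      = ∫⁻ ω, Y ω * valF γ κ ρ F N (ρ (X 0 ω), 0) (X 0 ω) ∂P := by
  have hst : ∀ i, Measurable[m i] (fun ω => ddState (fun i => ρ (X i ω)) i) := by
    intro i
    induction i with
    | zero => exact (hρ.comp (hX 0)).prodMk measurable_const
    | succ i ih => exact Measurable.upd' (ih.mono (hmono (Nat.le_succ i)) le_rfl) (hρ.comp (hX (i+1)))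
  have hpr : ∀ i, Measurable[m i] (fun ω => Y ω * (∏ l ∈ Finset.range i, κ (X l ω) (X (l+1) ω))) := by
    intro i
    refine Measurable.mul (hY.mono (hmono (Nat.zero_le i)) le_rfl) ?_
    refine Finset.measurable_prod _ fun l hl => ?_
    have hl : l < i := Finset.mem_range.1 hl
    exact hκ.comp (((hX l).mono (hmono hl.le) le_rfl).prodMk ((hX (l+1)).mono (hmono hl) le_rfl))
  have step : ∀ i j, ∫⁻ ω, Y ω * (∏ l ∈ Finset.range i, κ (X l ω) (X (l+1) ω)) *
        valF γ κ ρ F (j+1) (ddState (fun i => ρ (X i ω)) i) (X i ω) ∂P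
      = ∫⁻ ω, Y ω * (∏ l ∈ Finset.range (i+1), κ (X l ω) (X (l+1) ω)) *
        valF γ κ ρ F j (ddState (fun i => ρ (X i ω)) (i+1)) (X (i+1) ω) ∂P := by
    intro i j
    set H : (ℝ≥0∞ × ((ℝ × ℝ) × V)) × V → ℝ≥0∞ := fun q => q.1.1 * (κ q.1.2.2 (q.1.2.2 + q.2) *
        valF γ κ ρ F j (upd q.1.2.1 (ρ (q.1.2.2 + q.2))) (q.1.2.2 + q.2)) with hH
    have hHm : Measurable H := by
      have hadd : Measurable (fun q : (ℝ≥0∞ × ((ℝ × ℝ) × V)) × V => q.1.2.2 + q.2) := by fun_prop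
      refine Measurable.mul (by fun_prop) (Measurable.mul ?_ ?_)
      · exact hκ.comp ((by fun_prop : Measurable (fun q : (ℝ≥0∞ × ((ℝ × ℝ) × V)) × V => q.1.2.2)).prodMk hadd)
      · exact (measurable_valF γ κ ρ F hκ hρ hF j).comp
          ((Measurable.upd' (by fun_prop) (hρ.comp hadd)).prodMk hadd)
    have := lintegral_indep_step (hm i) ((hpr i).prodMk ((hst i).prodMk (hX i))) (hXs i) (hind i) (hlaw i) hHm
    have e : ∀ ω, ∫⁻ z, H ((Y ω * (∏ l ∈ Finset.range i, κ (X l ω) (X (l+1) ω)),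
        (ddState (fun i => ρ (X i ω)) i, X i ω)), z) ∂γ
        = Y ω * (∏ l ∈ Finset.range i, κ (X l ω) (X (l+1) ω)) *
          valF γ κ ρ F (j+1) (ddState (fun i => ρ (X i ω)) i) (X i ω) := by
      intro ω
      simp only [hH]
      rw [lintegral_const_mul]
      · rfl
      · have hadd : Measurable (fun z : V => X i ω + z) := by fun_prop
        refine Measurable.mul (hκ.comp (measurable_const.prodMk hadd)) ?_
        exact (measurable_valF γ κ ρ F hκ hρ hF j).comp
          ((Measurable.upd' measurable_const (hρ.comp hadd)).prodMk hadd)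
    simp_rw [e] at this
    rw [← this]
    refine lintegral_congr fun ω => ?_
    simp only [hH, add_sub_cancel, Finset.prod_range_succ, ddState, mul_assoc]
  have main : ∀ j i, ∫⁻ ω, Y ω * (∏ l ∈ Finset.range i, κ (X l ω) (X (l+1) ω)) *
        valF γ κ ρ F j (ddState (fun i => ρ (X i ω)) i) (X i ω) ∂P
      = ∫⁻ ω, Y ω * (∏ l ∈ Finset.range (i+j), κ (X l ω) (X (l+1) ω)) *
        valF γ κ ρ F 0 (ddState (fun i => ρ (X i ω)) (i+j)) (X (i+j) ω) ∂P := by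
    intro j
    induction j with
    | zero => intro i; rfl
    | succ j ih => intro i; rw [step, ih (i+1)]; simp only [show i + 1 + j = i + (j + 1) by ring]
  have := main N 0
  simp only [Finset.range_zero, Finset.prod_empty, mul_one, zero_add] at this
  exact this.symm

end

end

section
open MeasureTheory ProbabilityTheory Real Set Filter
open scoped ENNReal NNReal Topology

noncomputable section

def mdd (h : ℝ → ℝ) : ℝ :=
  sSup ((fun p : ℝ × ℝ => h p.1 - h p.2) '' {p | 0 ≤ p.1 ∧ p.1 ≤ p.2 ∧ p.2 ≤ 1})

lemma mdd_compact : IsCompact {p : ℝ × ℝ | 0 ≤ p.1 ∧ p.1 ≤ p.2 ∧ p.2 ≤ 1} := by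
  have h1 : IsCompact (Icc (0:ℝ) 1 ×ˢ Icc (0:ℝ) 1) := isCompact_Icc.prod isCompact_Icc
  refine h1.of_isClosed_subset ?_ ?_
  · exact (isClosed_le continuous_const continuous_fst).inter
      ((isClosed_le continuous_fst continuous_snd).inter (isClosed_le continuous_snd continuous_const))
  · rintro ⟨a, b⟩ ⟨h1, h2, h3⟩
    exact ⟨⟨h1, h2.trans h3⟩, ⟨h1.trans h2, h3⟩⟩

lemma mdd_contOn {h : ℝ → ℝ} (hc : ContinuousOn h (Icc 0 1)) :
    ContinuousOn (fun p : ℝ × ℝ => h p.1 - h p.2) {p : ℝ × ℝ | 0 ≤ p.1 ∧ p.1 ≤ p.2 ∧ p.2 ≤ 1} := by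
  refine ContinuousOn.sub (hc.comp continuousOn_fst ?_) (hc.comp continuousOn_snd ?_)
  · rintro ⟨a, b⟩ ⟨h1, h2, h3⟩; exact ⟨h1, h2.trans h3⟩
  · rintro ⟨a, b⟩ ⟨h1, h2, h3⟩; exact ⟨h1.trans h2, h3⟩

lemma le_mdd {h : ℝ → ℝ} (hc : ContinuousOn h (Icc 0 1)) {a b : ℝ} (ha : 0 ≤ a) (hab : a ≤ b) (hb : b ≤ 1) :
    h a - h b ≤ mdd h :=
  le_csSup (mdd_compact.image_of_continuousOn (mdd_contOn hc)).bddAbove ⟨(a, b), ⟨ha, hab, hb⟩, rfl⟩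

lemma mdd_attained {h : ℝ → ℝ} (hc : ContinuousOn h (Icc 0 1)) :
    ∃ a b, 0 ≤ a ∧ a ≤ b ∧ b ≤ 1 ∧ mdd h = h a - h b := by
  have hne : ({p : ℝ × ℝ | 0 ≤ p.1 ∧ p.1 ≤ p.2 ∧ p.2 ≤ 1}).Nonempty := ⟨(0, 0), by simp⟩
  obtain ⟨⟨a, b⟩, ⟨h1, h2, h3⟩, h4⟩ :=
    (mdd_compact.image_of_continuousOn (mdd_contOn hc)).sSup_mem (hne.image _)
  exact ⟨a, b, h1, h2, h3, h4.symm⟩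

lemma mdd_nonneg {h : ℝ → ℝ} (hc : ContinuousOn h (Icc 0 1)) : 0 ≤ mdd h := by
  simpa using le_mdd hc le_rfl le_rfl zero_le_one

lemma mdd_congr {h h' : ℝ → ℝ} (he : ∀ r ∈ Icc (0:ℝ) 1, h r = h' r) : mdd h = mdd h' := by
  unfold mdd
  congr 1
  refine image_congr ?_
  rintro ⟨a, b⟩ ⟨h1, h2, h3⟩
  simp only
  rw [he a ⟨h1, h2.trans h3⟩, he b ⟨h1.trans h2, h3⟩]

lemma mdd_mul {h : ℝ → ℝ} (hc : ContinuousOn h (Icc 0 1)) {c : ℝ} (h0 : 0 ≤ c) :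
    mdd (fun r => c * h r) = c * mdd h := by
  have hc' : ContinuousOn (fun r => c * h r) (Icc 0 1) := continuousOn_const.mul hc
  apply le_antisymm
  · obtain ⟨a, b, h1, h2, h3, h4⟩ := mdd_attained hc'
    rw [h4, ← mul_sub]
    exact mul_le_mul_of_nonneg_left (le_mdd hc h1 h2 h3) h0
  · obtain ⟨a, b, h1, h2, h3, h4⟩ := mdd_attained hc
    rw [h4, mul_sub]
    exact le_mdd hc' h1 h2 h3

lemma ddState_fst_ge (x : ℕ → ℝ) (N i : ℕ) (hi : i ≤ N) : x i ≤ (ddState x N).1 := by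
  induction N with
  | zero => simp [Nat.le_zero.1 hi, ddState]
  | succ N ih =>
    rcases Nat.le_succ_iff.1 hi with h | rfl
    · exact (ih h).trans (le_max_left _ _)
    · exact le_max_right _ _

lemma ddState_fst_mem (x : ℕ → ℝ) (N : ℕ) : ∃ i ≤ N, (ddState x N).1 = x i := by
  induction N with
  | zero => exact ⟨0, le_rfl, rfl⟩
  | succ N ih =>
    obtain ⟨i, hi, h⟩ := ih
    rcases max_choice (ddState x N).1 (x (N+1)) with h' | h'
    · exact ⟨i, by omega, by simp only [ddState, upd]; rw [h', h]⟩
    · exact ⟨N+1, le_rfl, by simp only [ddState, upd]; rw [h']⟩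

lemma le_gridDD (x : ℕ → ℝ) (N i j : ℕ) (hij : i ≤ j) (hj : j ≤ N) : x i - x j ≤ gridDD x N := by
  induction N with
  | zero =>
    have : j = 0 := by omega
    have : i = 0 := by omega
    subst_vars; simp [gridDD, ddState]
  | succ N ih =>
    rcases Nat.le_succ_iff.1 hj with h | rfl
    · exact (ih h).trans (le_max_left _ _)
    · refine le_trans ?_ (le_max_right _ _)
      have := ddState_fst_ge x (N+1) i hij
      simp only [ddState, upd] at this
      linarith

lemma gridDD_mem (x : ℕ → ℝ) (N : ℕ) : ∃ i j, i ≤ j ∧ j ≤ N ∧ gridDD x N = x i - x j := by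
  induction N with
  | zero => exact ⟨0, 0, le_rfl, le_rfl, by simp [gridDD, ddState]⟩
  | succ N ih =>
    obtain ⟨i, j, hi, hj, h⟩ := ih
    rcases max_choice (ddState x N).2 (max (ddState x N).1 (x (N+1)) - x (N+1)) with h' | h'
    · exact ⟨i, j, hi, by omega, by unfold gridDD at h ⊢; simp only [ddState, upd]; rw [h', h]⟩
    · obtain ⟨k, hk, e⟩ := ddState_fst_mem x (N+1)
      refine ⟨k, N+1, hk, le_rfl, ?_⟩
      simp only [ddState, upd] at e
      simp only [gridDD, ddState, upd]; rw [h', e]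

lemma gridDD_nonneg (x : ℕ → ℝ) (N : ℕ) : 0 ≤ gridDD x N := by
  simpa using le_gridDD x N 0 0 le_rfl (Nat.zero_le _)

lemma gridDD_mul (x : ℕ → ℝ) (N : ℕ) (c : ℝ) (hc : 0 ≤ c) : gridDD (fun i => c * x i) N = c * gridDD x N := by
  apply le_antisymm
  · obtain ⟨i, j, h1, h2, h3⟩ := gridDD_mem (fun i => c * x i) N
    rw [h3, ← mul_sub]
    exact mul_le_mul_of_nonneg_left (le_gridDD x N i j h1 h2) hc
  · obtain ⟨i, j, h1, h2, h3⟩ := gridDD_mem x N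
    rw [h3, mul_sub]
    exact le_gridDD (fun i => c * x i) N i j h1 h2

lemma measurable_ddState {α : Type*} [MeasurableSpace α] {x : ℕ → α → ℝ} (hx : ∀ i, Measurable (x i)) (N : ℕ) :
    Measurable (fun ω => ddState (fun i => x i ω) N) := by
  induction N with
  | zero => exact (hx 0).prodMk measurable_const
  | succ N ih => exact Measurable.upd' ih (hx (N+1))

lemma measurable_gridDD {α : Type*} [MeasurableSpace α] {x : ℕ → α → ℝ} (hx : ∀ i, Measurable (x i)) (N : ℕ) :
    Measurable (fun ω => gridDD (fun i => x i ω) N) := (measurable_ddState hx N).snd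

lemma gridDD_tendsto {ι : Type*} {l : Filter ι} (h : ℝ → ℝ) (hc : ContinuousOn h (Icc 0 1)) (hp : ι → ℝ → ℝ)
    (N : ι → ℕ) (hN : Tendsto N l atTop) (hu : TendstoUniformlyOn hp h l (Icc 0 1)) :
    Tendsto (fun p => gridDD (fun i => hp p (i / N p)) (N p)) l (𝓝 (mdd h)) := by
  rw [Metric.tendsto_nhds]
  intro ε0 hε0
  set ε := ε0 / 5 with hε
  have hεp : 0 < ε := by positivity
  have huc := isCompact_Icc.uniformContinuousOn_of_continuous hc
  rw [Metric.uniformContinuousOn_iff] at huc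
  obtain ⟨δ, hδ, H⟩ := huc ε hεp
  rw [Metric.tendstoUniformlyOn_iff] at hu
  have hN' : ∀ᶠ p in l, (1:ℝ) / δ < N p :=
    (tendsto_natCast_atTop_atTop.comp hN).eventually_gt_atTop _
  filter_upwards [hN', hN.eventually_ge_atTop 1, hu ε hεp] with p hp1 hp2 hp3
  have hNp : (0:ℝ) < N p := by exact_mod_cast hp2
  have hdiv : 1 / (N p : ℝ) < δ := by rw [div_lt_iff₀ hNp]; rw [div_lt_iff₀ hδ] at hp1; linarith
  have hmem : ∀ i ≤ N p, (i:ℝ) / N p ∈ Icc (0:ℝ) 1 := fun i hi =>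
    ⟨by positivity, by rw [div_le_one hNp]; exact_mod_cast hi⟩
  rw [Real.dist_eq, abs_sub_lt_iff]
  constructor
  · obtain ⟨i, j, h1, h2, h3⟩ := gridDD_mem (fun i => hp p (i / N p)) (N p)
    have a1 := hp3 _ (hmem i (h1.trans h2))
    have a2 := hp3 _ (hmem j h2)
    rw [Real.dist_eq, abs_sub_lt_iff] at a1 a2
    have := le_mdd hc (hmem i (h1.trans h2)).1 (div_le_div_of_nonneg_right (Nat.cast_le.2 h1) hNp.le) (hmem j h2).2
    rw [h3]; linarith [a1.1, a1.2, a2.1, a2.2]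
  · obtain ⟨a, b, h1, h2, h3, h4⟩ := mdd_attained hc
    have hnear : ∀ t ∈ Icc (0:ℝ) 1, |h t - hp p ((⌊t * N p⌋₊ : ℕ) / N p)| < 2 * ε ∧ ⌊t * N p⌋₊ ≤ N p := by
      intro t ht
      have ht0 : 0 ≤ t * N p := mul_nonneg ht.1 hNp.le
      have hle : ⌊t * N p⌋₊ ≤ N p := by
        apply Nat.floor_le_of_le; nlinarith [ht.2]
      have hd : dist t ((⌊t * N p⌋₊ : ℕ) / N p : ℝ) < δ := by
        rw [Real.dist_eq]
        refine lt_of_le_of_lt ?_ hdiv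
        rw [abs_le]
        have f1 := Nat.floor_le ht0
        have f2 := Nat.lt_floor_add_one (t * N p)
        constructor
        · have : ((⌊t * N p⌋₊ : ℕ) / N p : ℝ) ≤ t := by rw [div_le_iff₀ hNp]; exact f1
          have : 0 < 1 / (N p : ℝ) := by positivity
          linarith
        · rw [sub_le_iff_le_add, ← add_div, le_div_iff₀ hNp]; linarith
      have b1 := H t ht _ (hmem _ hle) hd
      have b2 := hp3 _ (hmem _ hle)
      rw [Real.dist_eq] at b1 b2
      refine ⟨?_, hle⟩
      rw [abs_lt] at b1 b2 ⊢
      constructor <;> linarith [b1.1, b1.2, b2.1, b2.2]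
    obtain ⟨c1, c2⟩ := hnear a ⟨h1, h2.trans h3⟩
    obtain ⟨c3, c4⟩ := hnear b ⟨h1.trans h2, h3⟩
    have := le_gridDD (fun i => hp p (i / N p)) (N p) ⌊a * N p⌋₊ ⌊b * N p⌋₊
      (Nat.floor_le_floor (mul_le_mul_of_nonneg_right h2 hNp.le)) c4
    rw [abs_lt] at c1 c3
    rw [h4]; linarith [c1.1, c1.2, c3.1, c3.2]

lemma gridDD_tendsto_self (h : ℝ → ℝ) (hc : ContinuousOn h (Icc 0 1)) :
    Tendsto (fun N : ℕ => gridDD (fun i => h (i / N)) N) atTop (𝓝 (mdd h)) :=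
  gridDD_tendsto h hc (fun _ => h) id tendsto_id
    (Metric.tendstoUniformlyOn_iff.2 fun ε hε => Eventually.of_forall fun _ x _ => by simpa using hε)

section
variable {Ω : Type*}

lemma le_runMax {X : ℝ → Ω → ℝ} {ω : Ω} {T t s : ℝ} (hc : ContinuousOn (fun t => X t ω) (Icc 0 T))
    (htT : t ≤ T) (hs : 0 ≤ s) (hst : s ≤ t) : X s ω ≤ runMax X t ω := by
  unfold runMax
  have hb : BddAbove (range fun s : Icc (0:ℝ) t => X s ω) := by
    have := (isCompact_Icc.image_of_continuousOn (hc.mono (Icc_subset_Icc_right htT))).bddAbove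
    rwa [image_eq_range] at this
  exact le_ciSup hb ⟨s, hs, hst⟩

lemma runMax_mem {X : ℝ → Ω → ℝ} {ω : Ω} {T t : ℝ} (hc : ContinuousOn (fun t => X t ω) (Icc 0 T))
    (htT : t ≤ T) (ht : 0 ≤ t) : ∃ s, 0 ≤ s ∧ s ≤ t ∧ runMax X t ω = X s ω := by
  obtain ⟨s, hs, h⟩ := isCompact_Icc.exists_isMaxOn (nonempty_Icc.2 ht) (hc.mono (Icc_subset_Icc_right htT))
  refine ⟨s, hs.1, hs.2, le_antisymm ?_ (le_runMax hc htT hs.1 hs.2)⟩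
  have : Nonempty (Icc (0:ℝ) t) := ⟨⟨0, le_rfl, ht⟩⟩
  exact ciSup_le fun u => h u.2

lemma mdd_scale_contOn {f : ℝ → ℝ} {T : ℝ} (hT : 0 ≤ T) (hc : ContinuousOn f (Icc 0 T)) :
    ContinuousOn (fun r => f (T * r)) (Icc 0 1) := by
  refine hc.comp (by fun_prop) fun r hr => ?_
  exact ⟨mul_nonneg hT hr.1, by nlinarith [hr.2]⟩

lemma le_mdd_scale {f : ℝ → ℝ} {T : ℝ} (hT : 0 ≤ T) (hc : ContinuousOn f (Icc 0 T)) {s t : ℝ} (hs : 0 ≤ s)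
    (hst : s ≤ t) (ht : t ≤ T) : f s - f t ≤ mdd (fun r => f (T * r)) := by
  rcases hT.eq_or_lt with rfl | hT'
  · have h1 : t = 0 := by linarith
    have h2 : s = 0 := by linarith
    subst h1; subst h2
    simpa using mdd_nonneg (mdd_scale_contOn le_rfl hc)
  · have := le_mdd (mdd_scale_contOn hT hc) (a := s / T) (b := t / T) (by positivity)
      (by gcongr) (by rw [div_le_one hT']; exact ht)
    rwa [mul_div_cancel₀ _ hT'.ne', mul_div_cancel₀ _ hT'.ne'] at this

lemma runMax_sub_le {X : ℝ → Ω → ℝ} {ω : Ω} {T t : ℝ} (hc : ContinuousOn (fun t => X t ω) (Icc 0 T))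
    (ht : 0 ≤ t) (htT : t ≤ T) : runMax X t ω - X t ω ≤ mdd (fun r => X (T * r) ω) := by
  obtain ⟨s, h1, h2, h3⟩ := runMax_mem hc htT ht
  rw [h3]
  exact le_mdd_scale (f := fun t => X t ω) (ht.trans htT) hc h1 h2 htT

lemma mdd_runMax {X : ℝ → Ω → ℝ} {ω : Ω} {T : ℝ} (hT : 0 ≤ T) (hc : ContinuousOn (fun t => X t ω) (Icc 0 T)) :
    ∃ t, 0 ≤ t ∧ t ≤ T ∧ mdd (fun r => X (T * r) ω) = runMax X t ω - X t ω := by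
  obtain ⟨a, b, h1, h2, h3, h4⟩ := mdd_attained (mdd_scale_contOn hT hc)
  have hb : T * b ≤ T := by nlinarith
  have hb0 : 0 ≤ T * b := mul_nonneg hT (h1.trans h2)
  refine ⟨T * b, hb0, hb, le_antisymm ?_ (runMax_sub_le hc hb0 hb)⟩
  rw [h4]
  have := le_runMax hc hb (mul_nonneg hT h1) (mul_le_mul_of_nonneg_left h2 hT)
  linarith

lemma maxDDOn_eq {X : ℝ → Ω → ℝ} {ω : Ω} {T : ℝ} (hT : 0 ≤ T) (hc : ContinuousOn (fun t => X t ω) (Icc 0 T)) :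
    maxDDOn X T ω = mdd (fun r => X (T * r) ω) := by
  unfold maxDDOn
  have : Nonempty (Icc (0:ℝ) T) := ⟨⟨0, le_rfl, hT⟩⟩
  have hle : ∀ s : Icc (0:ℝ) T, runMax X s ω - X s ω ≤ mdd (fun r => X (T * r) ω) :=
    fun s => runMax_sub_le hc s.2.1 s.2.2
  apply le_antisymm (ciSup_le hle)
  obtain ⟨t, h1, h2, h3⟩ := mdd_runMax hT hc
  rw [h3]
  exact le_ciSup (f := fun s : Icc (0:ℝ) T => runMax X s ω - X s ω) ⟨_, by rintro _ ⟨s, rfl⟩; exact hle s⟩ ⟨t, h1, h2⟩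

end

end

end

section
open MeasureTheory ProbabilityTheory Real Set Filter
open scoped ENNReal NNReal Topology

noncomputable section
set_option linter.unusedSectionVars false

lemma iIndepFun_bool {Ω : Type*} {mΩ : MeasurableSpace Ω} {P : Measure Ω} [IsProbabilityMeasure P]
    {E : Type*} [MeasurableSpace E] {X : Bool → Ω → E} (h : IndepFun (X true) (X false) P) :
    iIndepFun X P := by
  rw [iIndepFun_iff_iIndep, iIndep_iff]
  intro s f' hf
  rw [IndepFun_iff_Indep, Indep_iff] at h
  have hs : s = ∅ ∨ s = {true} ∨ s = {false} ∨ s = {true, false} := by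
    clear hf; revert s; decide
  rcases hs with rfl | rfl | rfl | rfl
  · simp
  · simp
  · simp
  · simp only [Finset.mem_insert, Finset.mem_singleton, iInter_iInter_eq_or_left, iInter_iInter_eq_left]
    rw [Finset.prod_pair (by decide)]
    exact h _ _ (hf true (by simp)) (hf false (by simp))

/-- sigma algebra of the past -/
def past {Ω V : Type*} [MeasurableSpace V] (X : ℝ → Ω → V) (t : ℝ) : MeasurableSpace Ω :=
  ⨆ s ∈ Icc (0:ℝ) t, MeasurableSpace.comap (X s) inferInstance

lemma past_mono {Ω V : Type*} [MeasurableSpace V] (X : ℝ → Ω → V) : Monotone (past X) := by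
  intro s t hst
  exact iSup₂_le fun u hu => le_iSup₂_of_le (f := fun s (_ : s ∈ Icc (0:ℝ) t) =>
    MeasurableSpace.comap (X s) inferInstance) u ⟨hu.1, hu.2.trans hst⟩ le_rfl

lemma past_le {Ω V : Type*} {mΩ : MeasurableSpace Ω} [MeasurableSpace V] {X : ℝ → Ω → V} (hX : ∀ t, Measurable (X t))
    (t : ℝ) : past X t ≤ mΩ :=
  iSup₂_le fun u _ => (hX u).comap_le

lemma measurable_past {Ω V : Type*} [MeasurableSpace V] (X : ℝ → Ω → V) {s t : ℝ} (hs : 0 ≤ s) (hst : s ≤ t) :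
    Measurable[past X t] (X s) := by
  refine Measurable.of_comap_le ?_
  exact le_iSup₂_of_le (f := fun s (_ : s ∈ Icc (0:ℝ) t) =>
    MeasurableSpace.comap (X s) inferInstance) s ⟨hs, hst⟩ le_rfl

lemma meas_E3 {Ω : Type*} {m : MeasurableSpace Ω} {f : Ω → E3} (h : ∀ i, Measurable fun ω => f ω i) :
    Measurable f := by
  have : f = (fun g : Fin 3 → ℝ => (WithLp.toLp 2 g : E3)) ∘ (fun ω i => f ω i) := by funext ω; rfl
  rw [this]
  exact (by fun_prop : Measurable (fun f : Fin 3 → ℝ => (WithLp.toLp 2 f : E3))).comp (measurable_pi_iff.2 h)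

section
variable {Ω : Type*} {mΩ : MeasurableSpace Ω} {P : Measure Ω} [IsProbabilityMeasure P]

lemma IsStdBM.pre {W : ℝ → Ω → ℝ} (hW : IsStdBM P W) : IsPreBrownianReal (fun t : ℝ≥0 => W t) P := by
  refine HasIndepIncrements.isPreBrownianReal_of_hasLaw (fun t => ⟨(hW.measurable _).aemeasurable, ?_⟩) ?_
  · have := hW.gauss 0 t le_rfl t.2
    simpa [hW.start] using this
  · intro n t ht
    exact hW.indep n (fun i => t i) (fun i => (t i).2) (fun i j hij => ht hij)

lemma IsStdBM.indep_shift {W : ℝ → Ω → ℝ} (hW : IsStdBM P W) (s : ℝ≥0) :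
    IndepFun (fun ω (u : ℝ≥0) => W (s + u) ω - W s ω) (fun ω (u : ℝ≥0) => W (min u s : ℝ≥0) ω) P := by
  have h := hW.pre.indepFun_shift s
  have hm : Measurable (fun (f : Set.Iic s → ℝ) (u : ℝ≥0) => f ⟨min u s, Set.mem_Iic.2 (min_le_right _ _)⟩) := by fun_prop
  exact h.comp (φ := id) measurable_id hm

lemma past_le_comap {W : ℝ → Ω → ℝ} (s : ℝ≥0) :
    past W s ≤ MeasurableSpace.comap (fun ω (u : ℝ≥0) => W (min u s : ℝ≥0) ω) inferInstance := by
  refine iSup₂_le fun u hu => ?_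
  have : W u = (fun f : ℝ≥0 → ℝ => f (Real.toNNReal u)) ∘ (fun ω (u : ℝ≥0) => W (min u s : ℝ≥0) ω) := by
    funext ω
    have : ((min (Real.toNNReal u) s : ℝ≥0) : ℝ) = u := by
      rw [NNReal.coe_min, Real.coe_toNNReal _ hu.1, min_eq_left hu.2]
    simp only [Function.comp, this]
  rw [this, ← MeasurableSpace.comap_comp]
  exact MeasurableSpace.comap_mono (measurable_pi_apply _).comap_le

lemma IsStdBM.indep_past {W : ℝ → Ω → ℝ} (hW : IsStdBM P W) (s : ℝ≥0) :
    Indep (past W s) (MeasurableSpace.comap (fun ω (u : ℝ≥0) => W (s + u) ω - W s ω) inferInstance) P := by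
  have h := (hW.indep_shift s).symm
  rw [IndepFun_iff_Indep] at h
  exact indep_of_indep_of_le_left h (past_le_comap s)

lemma IsStdBM.indep_incr {W : ℝ → Ω → ℝ} (hW : IsStdBM P W) {s t : ℝ} (hs : 0 ≤ s) (hst : s ≤ t) :
    Indep (past W s) (MeasurableSpace.comap (fun ω => W t ω - W s ω) inferInstance) P := by
  have h := hW.indep_past ⟨s, hs⟩
  refine indep_of_indep_of_le_right h ?_
  have : (fun ω => W t ω - W s ω) = (fun f : ℝ≥0 → ℝ => f (Real.toNNReal (t - s))) ∘
      (fun ω (u : ℝ≥0) => W (s + u) ω - W s ω) := by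
    funext ω
    have e : (s + ((Real.toNNReal (t - s) : ℝ≥0) : ℝ)) = t := by
      rw [Real.coe_toNNReal _ (by linarith)]; ring
    simp only [Function.comp, e]
  rw [this, ← MeasurableSpace.comap_comp]
  exact MeasurableSpace.comap_mono (measurable_pi_apply _).comap_le

lemma IsStdBMVec.measurable {β : ℝ → Ω → E3} (hβ : IsStdBMVec 3 P β) (t : ℝ) : Measurable (β t) := by
  have : β t = (fun f : Fin 3 → ℝ => (WithLp.toLp 2 f : E3)) ∘ (fun ω i => β t ω i) := by funext ω; rfl
  rw [this]
  exact (by fun_prop : Measurable (fun f : Fin 3 → ℝ => (WithLp.toLp 2 f : E3))).comp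
    (measurable_pi_iff.2 fun i => (hβ.coord i).measurable t)

lemma IsStdBMVec.start {β : ℝ → Ω → E3} (hβ : IsStdBMVec 3 P β) (ω : Ω) : β 0 ω = 0 := by
  ext i; exact (hβ.coord i).start ω

lemma IsStdBMVec.cont {β : ℝ → Ω → E3} (hβ : IsStdBMVec 3 P β) (ω : Ω) : Continuous (fun t => β t ω) := by
  have : (fun t => β t ω) = (fun f : Fin 3 → ℝ => (WithLp.toLp 2 f : E3)) ∘ (fun t i => β t ω i) := by funext ω; rfl
  rw [this]
  exact (by fun_prop : Continuous (fun f : Fin 3 → ℝ => (WithLp.toLp 2 f : E3))).comp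
    (continuous_pi fun i => (hβ.coord i).cont ω)

lemma IsStdBMVec.law {β : ℝ → Ω → E3} (hβ : IsStdBMVec 3 P β) {s t : ℝ} (hs : 0 ≤ s) (hst : s ≤ t) :
    P.map (fun ω => β t ω - β s ω) = gauss3 (Real.toNNReal (t - s)) := by
  have h := hβ.indepCoord.comp (fun i (f : ℝ → ℝ) => f t - f s) (fun i => by fun_prop)
  have hm : ∀ i, Measurable (fun ω => β t ω i - β s ω i) := fun i =>
    ((hβ.coord i).measurable t).sub ((hβ.coord i).measurable s)
  have h2 := (iIndepFun_iff_map_fun_eq_pi_map (fun i => (hm i).aemeasurable)).1 h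
  unfold gauss3
  have e : (fun _ : Fin 3 => gaussianReal 0 (Real.toNNReal (t - s)))
      = fun i => P.map (fun ω => β t ω i - β s ω i) := by
    funext i; exact ((hβ.coord i).gauss s t hs hst).symm
  rw [e]
  have h3 : Measure.pi (fun i => P.map (fun ω => β t ω i - β s ω i))
      = P.map (fun ω i => β t ω i - β s ω i) := h2.symm
  rw [h3, Measure.map_map (by fun_prop) (measurable_pi_iff.2 hm)]
  rfl

lemma IsStdBMVec.indep_incr {β : ℝ → Ω → E3} (hβ : IsStdBMVec 3 P β) {s t : ℝ} (hs : 0 ≤ s) (hst : s ≤ t) :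
    Indep (past β s) (MeasurableSpace.comap (fun ω => β t ω - β s ω) inferInstance) P := by
  set s' : ℝ≥0 := ⟨s, hs⟩ with hs'
  set X : Fin 3 → Bool → Ω → (ℝ≥0 → ℝ) := fun i b ω u =>
    if b then β (s' + u) ω i - β s' ω i else β (min u s' : ℝ≥0) ω i with hX
  have mX : ∀ i b, Measurable (X i b) := by
    intro i b
    refine measurable_pi_iff.2 fun u => ?_
    cases b
    · exact (hβ.coord i).measurable _
    · exact ((hβ.coord i).measurable _).sub ((hβ.coord i).measurable _)
  have h1 : iIndepFun (fun i ω => (X i · ω)) P := by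
    have := hβ.indepCoord.comp (γ := fun _ => Bool → ℝ≥0 → ℝ) (fun i (f : ℝ → ℝ) (b : Bool) (u : ℝ≥0) =>
      if b then f (s' + u) - f s' else f (min u s' : ℝ≥0)) (fun i => by
        refine measurable_pi_iff.2 fun b => measurable_pi_iff.2 fun u => ?_
        cases b
        · exact measurable_pi_apply _
        · exact (measurable_pi_apply _).sub (measurable_pi_apply _))
    exact this
  have h2 : ∀ i, iIndepFun (X i) P := fun i => iIndepFun_bool ((hβ.coord i).indep_shift s')
  have h3 := iIndepFun_uncurry' mX h1 h2
  rw [iIndepFun_iff_iIndep] at h3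
  have h4 := indep_iSup_of_disjoint (fun p : Fin 3 × Bool => (mX p.1 p.2).comap_le) h3
    (S := {p : Fin 3 × Bool | p.2 = false}) (T := {p : Fin 3 × Bool | p.2 = true})
    (by rw [Set.disjoint_left]; rintro ⟨i, b⟩ (h : b = false) (h' : b = true); simp [h] at h')
  have hXm : ∀ (S : Set (Fin 3 × Bool)) (i : Fin 3) (b : Bool) (_ : (i, b) ∈ S) (u : ℝ≥0),
      Measurable[⨆ p ∈ S, MeasurableSpace.comap (X p.1 p.2) inferInstance] (fun ω => X i b ω u) := by
    intro S i b hib u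
    have : Measurable[⨆ p ∈ S, MeasurableSpace.comap (X p.1 p.2) inferInstance] (X i b) :=
      Measurable.of_comap_le (le_iSup₂_of_le (f := fun (p : Fin 3 × Bool) (_ : p ∈ S) =>
        MeasurableSpace.comap (X p.1 p.2) inferInstance) (i, b) hib le_rfl)
    exact (measurable_pi_apply u).comp this
  refine indep_of_indep_of_le_left (indep_of_indep_of_le_right h4 ?_) ?_
  · refine Measurable.comap_le (meas_E3 fun i => ?_)
    have e : ((s' : ℝ) + ((Real.toNNReal (t - s) : ℝ≥0) : ℝ)) = t := by
      rw [Real.coe_toNNReal _ (by linarith)]; change s + (t - s) = t; ring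
    have := hXm {p | p.2 = true} i true rfl (Real.toNNReal (t - s))
    simp only [hX, e, if_true] at this
    exact this
  · refine iSup₂_le fun u hu => Measurable.comap_le (meas_E3 fun i => ?_)
    have e : ((min (Real.toNNReal u) s' : ℝ≥0) : ℝ) = u := by
      rw [NNReal.coe_min, Real.coe_toNNReal _ hu.1]; exact min_eq_left hu.2
    have := hXm {p | p.2 = false} i false rfl (Real.toNNReal u)
    simp only [hX, e, Bool.false_eq_true, if_false] at this
    exact this

/-- value of the three-dimensional chain -/
lemma chain3 {β : ℝ → Ω → E3} (hβ : IsStdBMVec 3 P β) (u : E3) (δ : ℝ) (hδ : 0 ≤ δ)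
    (F : ℝ × ℝ → ℝ → ℝ≥0∞) (hF : Measurable (Function.uncurry F)) (N : ℕ) :
    ∫⁻ ω, F (ddState (fun i => ‖u + β (i * δ) ω‖) N) ‖u + β (N * δ) ω‖ ∂P
      = val3 (Real.toNNReal δ) F N (‖u‖, 0) u := by
  have hst : ∀ i : ℕ, (0:ℝ) ≤ i * δ ∧ (i:ℝ) * δ ≤ ((i+1 : ℕ) : ℝ) * δ := fun i =>
    ⟨by positivity, by gcongr; simp⟩
  have h := chain_value (P := P) (fun i : ℕ => past β (i * δ)) (fun i => past_le hβ.measurable _)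
    (fun i j hij => past_mono β (by gcongr)) (fun i ω => u + β (i * δ) ω)
    (fun i => measurable_const.add (measurable_past β (hst i).1 le_rfl))
    (fun i => by simp only [add_sub_add_left_eq_sub]; exact (hβ.measurable _).sub (hβ.measurable _))
    (fun i => by simp only [add_sub_add_left_eq_sub]; exact hβ.indep_incr (hst i).1 (hst i).2)
    (gauss3 (Real.toNNReal δ))
    (fun i => by
      simp only [add_sub_add_left_eq_sub]; rw [hβ.law (hst i).1 (hst i).2]; congr 2; push_cast; ring)
    (fun _ _ => 1) (fun x => ‖x‖) (fun s w => F s ‖w‖) (by fun_prop) (by fun_prop)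
    (hF.comp (f := fun p : (ℝ × ℝ) × E3 => (p.1, ‖p.2‖)) (by fun_prop)) (fun _ => 1) measurable_const N
  simp only [Finset.prod_const_one, one_mul] at h
  rw [h]
  simp [hβ.start, val3]

/-- value of the one-dimensional chain -/
lemma chain1 {W : ℝ → Ω → ℝ} (hW : IsStdBM P W) (δ : ℝ) (hδ : 0 ≤ δ) (k : ℕ) (Y : Ω → ℝ≥0∞)
    (hY : Measurable[past W (k * δ)] Y)
    (G : ℝ × ℝ → ℝ≥0∞) (hG : Measurable G) (N : ℕ) :
    ∫⁻ ω, Y ω * (∏ i ∈ Finset.range N, kap (Real.toNNReal δ) (W ((k + i : ℕ) * δ) ω) (W ((k + (i + 1) : ℕ) * δ) ω))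
        * G (ddState (fun i => |W ((k + i : ℕ) * δ) ω|) N) ∂P
      = ∫⁻ ω, Y ω * val1 (Real.toNNReal δ) G N (|W (k * δ) ω|, 0) (W (k * δ) ω) ∂P := by
  have hst : ∀ i : ℕ, (0:ℝ) ≤ (k + i : ℕ) * δ ∧ ((k + i : ℕ):ℝ) * δ ≤ ((k + (i+1) : ℕ) : ℝ) * δ := fun i =>
    ⟨by positivity, by gcongr; omega⟩
  have h := chain_value (P := P) (fun i : ℕ => past W ((k + i : ℕ) * δ)) (fun i => past_le hW.measurable _)
    (fun i j hij => past_mono W (by gcongr)) (fun i ω => W ((k + i : ℕ) * δ) ω)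
    (fun i => measurable_past W (hst i).1 le_rfl)
    (fun i => (hW.measurable _).sub (hW.measurable _))
    (fun i => hW.indep_incr (hst i).1 (hst i).2)
    (gaussianReal 0 (Real.toNNReal δ))
    (fun i => by rw [hW.gauss _ _ (hst i).1 (hst i).2]; congr 2; push_cast; ring)
    (kap (Real.toNNReal δ)) (fun x => |x|) (fun s _ => G s) (measurable_kap _) (by fun_prop)
    (hG.comp measurable_fst) Y hY N
  exact h

lemma IsStdBM.scale {W : ℝ → Ω → ℝ} (hW : IsStdBM P W) {T : ℝ} (hT : 0 < T) :
    IsStdBM P (fun t ω => (√T)⁻¹ * W (T * t) ω) where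
  measurable t := (hW.measurable _).const_mul _
  start ω := by simp [hW.start]
  cont ω := continuous_const.mul ((hW.cont ω).comp (by fun_prop))
  indep n t ht hm := by
    have := (hW.indep n (fun i => T * t i) (fun i => mul_nonneg hT.le (ht i))
      (fun i j hij => mul_le_mul_of_nonneg_left (hm hij) hT.le)).comp (fun _ x => (√T)⁻¹ * x) (fun _ => by fun_prop)
    convert this using 3 with i ω
    simp [mul_sub]
  gauss s t hs hst := by
    have h := hW.gauss (T * s) (T * t) (mul_nonneg hT.le hs) (mul_le_mul_of_nonneg_left hst hT.le)
    have e : (fun ω => (√T)⁻¹ * W (T * t) ω - (√T)⁻¹ * W (T * s) ω)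
        = (fun x => (√T)⁻¹ * x) ∘ (fun ω => W (T * t) ω - W (T * s) ω) := by
      funext ω; simp [mul_sub]
    rw [e, ← Measure.map_map (by fun_prop) (by exact (hW.measurable _).sub (hW.measurable _)), h, gaussianReal_map_const_mul]
    congr 1
    · simp
    · ext
      have h1 : 0 ≤ t - s := by linarith
      have h2 : 0 ≤ T * t - T * s := by nlinarith
      simp [Real.coe_toNNReal _ h1, Real.coe_toNNReal _ h2, inv_pow, Real.sq_sqrt hT.le]
      field_simp

lemma IsStdBMVec.scale {β : ℝ → Ω → E3} (hβ : IsStdBMVec 3 P β) {T : ℝ} (hT : 0 < T) :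
    IsStdBMVec 3 P (fun t ω => (√T)⁻¹ • β (T * t) ω) where
  coord i := by simpa using (hβ.coord i).scale hT
  indepCoord := by
    have := hβ.indepCoord.comp (fun _ (f : ℝ → ℝ) (t : ℝ) => (√T)⁻¹ * f (T * t)) (fun _ => by fun_prop)
    exact this

end

end

end

section
open MeasureTheory ProbabilityTheory Real Set Filter
open scoped ENNReal NNReal Topology

noncomputable section
set_option linter.unusedSectionVars false

lemma tendstoUniformlyOn_affine {ι : Type*} {l : Filter ι} {f : ℝ → ℝ} (hf : Continuous f) {a b : ι → ℝ} {a0 b0 : ℝ}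
    (ha : Tendsto a l (𝓝 a0)) (hb : Tendsto b l (𝓝 b0)) :
    TendstoUniformlyOn (fun p r => f (a p + b p * r)) (fun r => f (a0 + b0 * r)) l (Icc 0 1) := by
  rw [tendstoUniformlyOn_iff_tendstoUniformly_comp_coe]
  have h1 : Continuous (Function.uncurry fun (q : ℝ × ℝ) (r : Icc (0:ℝ) 1) => f (q.1 + q.2 * r)) := by
    unfold Function.uncurry; fun_prop
  have h2 := Continuous.tendstoUniformly (fun (q : ℝ × ℝ) (r : Icc (0:ℝ) 1) => f (q.1 + q.2 * r)) h1 (a0, b0)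
  intro u hu
  exact (ha.prodMk_nhds hb).eventually (h2 u hu)

lemma tendsto_lintegral_of_trunc {Ω ι : Type*} {mΩ : MeasurableSpace Ω} {μ : Measure Ω} [IsFiniteMeasure μ]
    {l : Filter ι} [l.IsCountablyGenerated] {X : ι → Ω → ℝ≥0∞} {X0 : Ω → ℝ≥0∞} (hm : ∀ p, Measurable (X p))
    (hlim : ∀ᵐ ω ∂μ, Tendsto (fun p => X p ω) l (𝓝 (X0 ω))) (hfin : ∫⁻ ω, X0 ω ∂μ ≠ ∞)
    (htr : ∀ ε : ℝ≥0∞, 0 < ε → ∃ b : ℝ≥0, (∀ᶠ p in l, ∫⁻ ω, X p ω ∂μ ≤ ∫⁻ ω, min (X p ω) b ∂μ + ε) ∧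
      ∫⁻ ω, X0 ω ∂μ ≤ ∫⁻ ω, min (X0 ω) b ∂μ + ε) :
    Tendsto (fun p => ∫⁻ ω, X p ω ∂μ) l (𝓝 (∫⁻ ω, X0 ω ∂μ)) := by
  rw [ENNReal.tendsto_nhds hfin]
  intro ε hε
  have hε2 : 0 < ε / 2 := ENNReal.half_pos hε.ne'
  obtain ⟨b, hb1, hb2⟩ := htr (ε / 2) hε2
  have ht : Tendsto (fun p => ∫⁻ ω, min (X p ω) b ∂μ) l (𝓝 (∫⁻ ω, min (X0 ω) b ∂μ)) := by
    refine tendsto_lintegral_filter_of_dominated_convergence (fun _ => (b : ℝ≥0∞))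
      (Eventually.of_forall fun p => (hm p).min measurable_const)
      (Eventually.of_forall fun p => ae_of_all _ fun ω => min_le_right _ _) ?_ ?_
    · rw [lintegral_const]; exact ENNReal.mul_ne_top ENNReal.coe_ne_top (measure_ne_top _ _)
    · filter_upwards [hlim] with ω hω
      exact hω.min tendsto_const_nhds
  have hle : ∫⁻ ω, min (X0 ω) b ∂μ ≤ ∫⁻ ω, X0 ω ∂μ := lintegral_mono fun ω => min_le_left _ _
  have hf2 : ∫⁻ ω, min (X0 ω) b ∂μ ≠ ∞ := ne_top_of_le_ne_top hfin hle
  rw [ENNReal.tendsto_nhds hf2] at ht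
  filter_upwards [hb1, ht (ε / 2) hε2] with p hp1 hp2
  constructor
  · calc ∫⁻ ω, X0 ω ∂μ - ε ≤ (∫⁻ ω, min (X0 ω) b ∂μ + ε / 2) - ε := tsub_le_tsub_right hb2 _
      _ ≤ ∫⁻ ω, min (X p ω) b ∂μ := by
        rw [tsub_le_iff_right]
        have := hp2.1
        rw [tsub_le_iff_right] at this
        calc _ ≤ (∫⁻ ω, min (X p ω) b ∂μ + ε / 2) + ε / 2 := by gcongr
          _ = _ := by rw [add_assoc, ENNReal.add_halves]
      _ ≤ _ := lintegral_mono fun ω => min_le_left _ _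
  · calc ∫⁻ ω, X p ω ∂μ ≤ ∫⁻ ω, min (X p ω) b ∂μ + ε / 2 := hp1
      _ ≤ (∫⁻ ω, min (X0 ω) b ∂μ + ε / 2) + ε / 2 := by gcongr; exact hp2.2
      _ ≤ _ := by rw [add_assoc, ENNReal.add_halves]; gcongr

section
variable {Ω : Type*} {mΩ : MeasurableSpace Ω} {P : Measure Ω} [IsProbabilityMeasure P] {β : ℝ → Ω → E3}

lemma IsStdBMVec.lintegral_at (hβ : IsStdBMVec 3 P β) {T : ℝ} (hT : 0 ≤ T) (h : E3 → ℝ≥0∞) (hh : Measurable h) :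
    ∫⁻ ω, h (β T ω) ∂P = ∫⁻ z, h z ∂gauss3 (Real.toNNReal T) := by
  have := hβ.law le_rfl hT
  simp only [hβ.start, sub_zero] at this
  rw [← this, lintegral_map hh (hβ.measurable T)]

/-- drawdown of the Bessel process on `[0,T]` -/
def rdd (β : ℝ → Ω → E3) (T : ℝ) (ω : Ω) : ℝ := mdd (fun r => ‖β (T * r) ω‖)

lemma IsStdBMVec.cont_norm (hβ : IsStdBMVec 3 P β) (ω : Ω) : Continuous (fun t => ‖β t ω‖) := (hβ.cont ω).norm

lemma IsStdBMVec.measurable_uncurry (hβ : IsStdBMVec 3 P β) : Measurable (fun q : ℝ × Ω => β q.1 q.2) :=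
  measurable_uncurry_of_continuous_of_measurable (u := fun t ω => β t ω) hβ.cont hβ.measurable

lemma IsStdBMVec.measurable_rdd_uncurry (hβ : IsStdBMVec 3 P β) : Measurable (fun q : ℝ × Ω => rdd β q.1 q.2) := by
  have h : ∀ N : ℕ, Measurable (fun q : ℝ × Ω => gridDD (fun i => ‖β (q.1 * (i / N)) q.2‖) N) := by
    intro N
    refine measurable_gridDD (x := fun i (q : ℝ × Ω) => ‖β (q.1 * (i / N)) q.2‖) (fun i => ?_) N
    exact (hβ.measurable_uncurry.comp (f := fun q : ℝ × Ω => (q.1 * (i / N), q.2)) (by fun_prop)).norm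
  refine measurable_of_tendsto_metrizable h (tendsto_pi_nhds.2 fun q => ?_)
  exact gridDD_tendsto_self (fun r => ‖β (q.1 * r) q.2‖) ((hβ.cont_norm q.2).comp (by fun_prop)).continuousOn

lemma IsStdBMVec.measurable_rdd (hβ : IsStdBMVec 3 P β) (T : ℝ) : Measurable (rdd β T) :=
  hβ.measurable_rdd_uncurry.comp (f := fun ω => (T, ω)) (by fun_prop)

lemma rdd_lim (hβ : IsStdBMVec 3 P β) (ψ : ℝ → ℝ≥0) (hψ : Continuous ψ) (C : ℝ≥0) (hC : ∀ x, ψ x ≤ C)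
    (w : ℝ → ℝ≥0∞) (hw : Measurable w) (hfin : ∫⁻ z, w ‖z‖ ∂gauss3 1 ≠ ∞) :
    Tendsto (fun N : ℕ => val3 (Real.toNNReal (1 / N)) (fun s r => ψ s.2 * w r) N (0, 0) 0) atTop
      (𝓝 (∫⁻ ω, ψ (rdd β 1 ω) * w ‖β 1 ω‖ ∂P)) := by
  have hwm : Measurable (fun ω => w ‖β 1 ω‖) := hw.comp (hβ.measurable 1).norm
  have e : ∀ᶠ N : ℕ in atTop, val3 (Real.toNNReal (1 / N)) (fun s r => ψ s.2 * w r) N (0, 0) 0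
      = ∫⁻ ω, ψ (gridDD (fun i => ‖β (1 * (i / N)) ω‖) N) * w ‖β 1 ω‖ ∂P := by
    filter_upwards [eventually_ge_atTop 1] with N hN
    have hN : (N : ℝ) ≠ 0 := by positivity
    have := chain3 hβ 0 (1 / N) (by positivity) (fun s r => ψ s.2 * w r)
      (by unfold Function.uncurry; exact Measurable.mul (by fun_prop) (hw.comp measurable_snd)) N
    simp only [zero_add, norm_zero] at this
    rw [← this]
    simp only [mul_one_div, div_self hN, one_mul, gridDD]
  refine Tendsto.congr' (EventuallyEq.symm e) ?_
  refine tendsto_lintegral_of_dominated_convergence (fun ω => C * w ‖β 1 ω‖) (fun N => ?_) (fun N => ?_) ?_ ?_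
  · refine Measurable.mul (measurable_coe_nnreal_ennreal.comp (hψ.measurable.comp ?_)) hwm
    exact measurable_gridDD (fun i => (hβ.measurable _).norm) N
  · exact ae_of_all _ fun ω => by dsimp only; gcongr; exact hC _
  · rw [lintegral_const_mul _ hwm, hβ.lintegral_at zero_le_one (fun z => w ‖z‖) (by fun_prop)]
    rw [Real.toNNReal_one]
    exact ENNReal.mul_ne_top ENNReal.coe_ne_top hfin
  · have : ∀ᵐ ω ∂P, w ‖β 1 ω‖ < ∞ := by
      refine ae_lt_top hwm ?_
      rw [hβ.lintegral_at zero_le_one (fun z => w ‖z‖) (by fun_prop), Real.toNNReal_one]; exact hfin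
    filter_upwards [this] with ω hω
    refine ENNReal.Tendsto.mul_const ?_ (Or.inr hω.ne)
    refine ENNReal.tendsto_coe.2 ((hψ.tendsto _).comp ?_)
    exact gridDD_tendsto_self (fun r => ‖β (1 * r) ω‖) ((hβ.cont_norm ω).comp (by fun_prop)).continuousOn

lemma rdd_scale (hβ : IsStdBMVec 3 P β) (ψ : ℝ → ℝ≥0) (hψ : Continuous ψ) (C : ℝ≥0) (hC : ∀ x, ψ x ≤ C)
    (w : ℝ → ℝ≥0∞) (hw : Measurable w) (hfin : ∫⁻ z, w ‖z‖ ∂gauss3 1 ≠ ∞) {T : ℝ} (hT : 0 < T) :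
    ∫⁻ ω, ψ (rdd β T ω / √T) * w (‖β T ω‖ / √T) ∂P = ∫⁻ ω, ψ (rdd β 1 ω) * w ‖β 1 ω‖ ∂P := by
  have h1 := rdd_lim hβ ψ hψ C hC w hw hfin
  have h2 := rdd_lim (hβ.scale hT) ψ hψ C hC w hw hfin
  rw [tendsto_nhds_unique h1 h2]
  have hs : 0 ≤ (√T)⁻¹ := by positivity
  refine lintegral_congr fun ω => ?_
  have e1 : rdd (fun t ω => (√T)⁻¹ • β (T * t) ω) 1 ω = rdd β T ω / √T := by
    unfold rdd
    simp only [norm_smul, one_mul, Real.norm_of_nonneg hs]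
    have hcc : ContinuousOn (fun r => ‖β (T * r) ω‖) (Icc 0 1) :=
      ((hβ.cont_norm ω).comp (by fun_prop : Continuous fun r => T * r)).continuousOn
    rw [mdd_mul hcc hs]
    rw [div_eq_inv_mul]
  rw [e1, norm_smul, mul_one, Real.norm_of_nonneg hs, div_eq_inv_mul ‖β T ω‖]

lemma bessel_ne_zero (hβ : IsStdBMVec 3 P β) {T : ℝ} (hT : 0 < T) : ∀ᵐ ω ∂P, β T ω ≠ 0 := by
  have h := gauss3_add_ne_zero (Real.toNNReal T) (by simpa using hT) 0
  have hl := hβ.law le_rfl hT.le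
  simp only [hβ.start, sub_zero] at hl
  rw [← hl] at h
  have := ae_of_ae_map (hβ.measurable T).aemeasurable h
  simpa using this

/-- tail estimate -/
lemma trunc_est (v0 : ℝ) (hv0 : 0 < v0) (C : ℝ≥0) (ε : ℝ≥0∞) (hε : 0 < ε) : ∃ b : ℝ≥0,
    ∀ (A : Ω → ℝ≥0∞) (_ : Measurable A) (_ : ∀ ω, A ω ≤ C) (β : ℝ → Ω → E3) (_ : IsStdBMVec 3 P β) (u : E3) (T : ℝ)
      (_ : v0 ≤ T), ∫⁻ ω, A ω / ENNReal.ofReal ‖u + β T ω‖ ∂P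
        ≤ ∫⁻ ω, min (A ω / ENNReal.ofReal ‖u + β T ω‖) b ∂P + ε := by
  have hlim : Tendsto (fun e : ℝ => (C : ℝ≥0∞) * ENNReal.ofReal (2 * e ^ 2 * ((√(2 * π * v0))⁻¹ * (1 / v0)))) (𝓝[>] 0) (𝓝 0) := by
    have : Tendsto (fun e : ℝ => (C : ℝ≥0∞) * ENNReal.ofReal (2 * e ^ 2 * ((√(2 * π * v0))⁻¹ * (1 / v0)))) (𝓝 0)
        (𝓝 (C * ENNReal.ofReal (2 * 0 ^ 2 * ((√(2 * π * v0))⁻¹ * (1 / v0))))) := by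
      refine ENNReal.Tendsto.const_mul ?_ (Or.inr ENNReal.coe_ne_top)
      exact ENNReal.tendsto_ofReal ((by fun_prop : Continuous fun e : ℝ =>
        (2 * e ^ 2 * ((√(2 * π * v0))⁻¹ * (1 / v0)))).tendsto 0)
    simpa using this.mono_left nhdsWithin_le_nhds
  obtain ⟨e, he, he0⟩ := ((hlim.eventually (gt_mem_nhds hε)).and self_mem_nhdsWithin).exists
  have he0 : 0 < e := he0
  refine ⟨C / Real.toNNReal e, fun A hA hAC β hβ u T hT => ?_⟩
  have hT0 : 0 < T := hv0.trans_le hT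
  have hpt : ∀ ω, A ω / ENNReal.ofReal ‖u + β T ω‖ ≤ min (A ω / ENNReal.ofReal ‖u + β T ω‖)
      ((C / Real.toNNReal e : ℝ≥0) : ℝ≥0∞) + C * ((Iio e).indicator 1 ‖u + β T ω‖ / ENNReal.ofReal ‖u + β T ω‖) := by
    intro ω
    by_cases h : ‖u + β T ω‖ < e
    · have : ‖u + β T ω‖ ∈ Iio e := h
      rw [indicator_of_mem this, Pi.one_apply, ← mul_div_assoc, mul_one]
      refine le_add_left ?_
      gcongr; exact hAC ω
    · push Not at h
      refine le_add_right (le_min le_rfl ?_)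
      rw [ENNReal.coe_div (by simpa using he0)]
      gcongr
      · exact hAC ω
      · change ENNReal.ofReal e ≤ _; exact ENNReal.ofReal_le_ofReal h
  have hmd : Measurable (fun z : E3 => (Iio e).indicator (1 : ℝ → ℝ≥0∞) ‖u + z‖ / ENNReal.ofReal ‖u + z‖) := by
    refine Measurable.div ?_ (by fun_prop)
    exact (measurable_one.indicator measurableSet_Iio).comp (by fun_prop)
  have hmb : Measurable (β T) := hβ.measurable T
  refine (lintegral_mono hpt).trans ?_
  have hmc : Measurable (fun ω => (Iio e).indicator (1 : ℝ → ℝ≥0∞) ‖u + β T ω‖ / ENNReal.ofReal ‖u + β T ω‖) :=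
    hmd.comp hmb
  rw [lintegral_add_left (by fun_prop), lintegral_const_mul _ hmc,
    hβ.lintegral_at hT0.le (fun z => (Iio e).indicator (1 : ℝ → ℝ≥0∞) ‖u + z‖ / ENNReal.ofReal ‖u + z‖) hmd]
  gcongr
  refine le_trans ?_ he.le
  gcongr
  have hT' : ((Real.toNNReal T : ℝ≥0) : ℝ) = T := Real.coe_toNNReal _ hT0.le
  refine (kernel_tail (Real.toNNReal T) (by simpa using hT0) u e he0).trans ?_
  rw [hT']
  gcongr

lemma inv_fin (hβ : IsStdBMVec 3 P β) (u : E3) {T : ℝ} (hT : 0 < T) (C : ℝ≥0) (A : Ω → ℝ≥0∞) (hA : Measurable A)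
    (hAC : ∀ ω, A ω ≤ C) : ∫⁻ ω, A ω / ENNReal.ofReal ‖u + β T ω‖ ∂P ≠ ∞ := by
  obtain ⟨b, hb⟩ := trunc_est (P := P) T hT C 1 one_pos
  refine ne_top_of_le_ne_top ?_ (hb A hA hAC β hβ u T le_rfl)
  refine ENNReal.add_ne_top.2 ⟨?_, ENNReal.one_ne_top⟩
  refine ne_top_of_le_ne_top (b := (b : ℝ≥0∞)) ENNReal.coe_ne_top ?_
  refine (lintegral_mono fun ω => min_le_right _ _).trans ?_
  simp

lemma norm_e0_tendsto {ι : Type*} {l : Filter ι} {y : ι → ℝ} (hy : Tendsto y l (𝓝 0)) :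
    Tendsto (fun p => (!₂[y p, 0, 0] : E3)) l (𝓝 0) := by
  have : Continuous (fun r : ℝ => (!₂[r, 0, 0] : E3)) := by fun_prop
  have h := (this.tendsto 0).comp hy
  have h0 : (!₂[(0:ℝ), 0, 0] : E3) = 0 := by ext i; fin_cases i <;> simp
  rw [h0] at h; exact h

/-- limit of the discretised functional -/
lemma B_lim (hβ : IsStdBMVec 3 P β) (ψ : ℝ → ℝ≥0) (hψ : Continuous ψ) (C : ℝ≥0) (hC : ∀ x, ψ x ≤ C)
    {ι : Type*} {l : Filter ι} [l.IsCountablyGenerated] {N : ι → ℕ} {T y : ι → ℝ} {T0 : ℝ} (hT0 : 0 < T0)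
    (hN : Tendsto N l atTop) (hT : Tendsto T l (𝓝 T0)) (hy : Tendsto y l (𝓝 0)) :
    Tendsto (fun p => ∫⁻ ω, ψ (gridDD (fun i => ‖(!₂[y p, 0, 0] : E3) + β (T p * (i / N p)) ω‖) (N p) / √(T p))
        / ENNReal.ofReal ‖(!₂[y p, 0, 0] : E3) + β (T p) ω‖ ∂P) l
      (𝓝 (∫⁻ ω, ψ (rdd β T0 ω / √T0) / ENNReal.ofReal ‖β T0 ω‖ ∂P)) := by
  have hmA : ∀ p, Measurable (fun ω => ((ψ (gridDD (fun i => ‖(!₂[y p, 0, 0] : E3) + β (T p * (i / N p)) ω‖) (N p) / √(T p)) : ℝ≥0) : ℝ≥0∞)) := by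
    intro p
    refine measurable_coe_nnreal_ennreal.comp (hψ.measurable.comp (Measurable.div_const ?_ _))
    exact measurable_gridDD (fun i => (measurable_const.add (hβ.measurable _)).norm) _
  have hmA0 : Measurable (fun ω => ((ψ (rdd β T0 ω / √T0) : ℝ≥0) : ℝ≥0∞)) :=
    measurable_coe_nnreal_ennreal.comp (hψ.measurable.comp ((hβ.measurable_rdd T0).div_const _))
  refine tendsto_lintegral_of_trunc (fun p => ?_) ?_ ?_ ?_
  · exact (hmA p).div (ENNReal.measurable_ofReal.comp (measurable_const.add (hβ.measurable _)).norm)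
  · filter_upwards [bessel_ne_zero hβ hT0] with ω hω
    have hn : 0 < ‖β T0 ω‖ := norm_pos_iff.2 hω
    refine ENNReal.Tendsto.div ?_ (Or.inr ?_) ?_ (Or.inr ?_)
    · refine ENNReal.tendsto_coe.2 ((hψ.tendsto _).comp ?_)
      refine Tendsto.div ?_ ((Real.continuous_sqrt.tendsto _).comp hT) (by positivity)
      refine gridDD_tendsto (fun r => ‖β (T0 * r) ω‖) ((hβ.cont_norm ω).comp (by fun_prop)).continuousOn
        (fun p r => ‖(!₂[y p, 0, 0] : E3) + β (T p * r) ω‖) N hN ?_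
      have hu := tendstoUniformlyOn_affine (hβ.cont_norm ω) (tendsto_const_nhds (x := (0:ℝ)) (f := l)) hT
      simp only [zero_add] at hu
      rw [Metric.tendstoUniformlyOn_iff] at hu ⊢
      intro ε hε
      have he0 := (norm_e0_tendsto hy).norm
      rw [norm_zero] at he0
      filter_upwards [hu (ε / 2) (by positivity), he0.eventually (gt_mem_nhds (by positivity : 0 < ε / 2))] with p h1 h2 r hr
      have h3 := h1 r hr
      rw [Real.dist_eq] at h3 ⊢
      have h4 : |‖β (T p * r) ω‖ - ‖(!₂[y p, 0, 0] : E3) + β (T p * r) ω‖| ≤ ‖(!₂[y p, 0, 0] : E3)‖ := by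
        have := abs_norm_sub_norm_le (β (T p * r) ω) ((!₂[y p, 0, 0] : E3) + β (T p * r) ω)
        rwa [sub_add_cancel_right, norm_neg] at this
      have h5 := abs_sub_le ‖β (T0 * r) ω‖ ‖β (T p * r) ω‖ ‖(!₂[y p, 0, 0] : E3) + β (T p * r) ω‖
      linarith
    · simpa using hω
    · have h1 := ((norm_e0_tendsto hy).add (((hβ.cont ω).tendsto T0).comp hT)).norm
      rw [zero_add] at h1
      exact ENNReal.tendsto_ofReal h1
    · exact ENNReal.coe_ne_top
  · have := inv_fin hβ 0 hT0 C _ hmA0 (fun ω => by exact_mod_cast hC _)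
    simpa using this
  · intro ε hε
    obtain ⟨b, hb⟩ := trunc_est (P := P) (T0 / 2) (by positivity) C ε hε
    refine ⟨b, ?_, ?_⟩
    · filter_upwards [hT.eventually (lt_mem_nhds (by linarith : T0 / 2 < T0))] with p hp
      exact hb _ (hmA p) (fun ω => by exact_mod_cast hC _) β hβ _ _ hp.le
    · have := hb _ hmA0 (fun ω => by exact_mod_cast hC _) β hβ 0 T0 (by linarith)
      simpa using this

end

end

end

section
open MeasureTheory ProbabilityTheory Real Set Filter
open scoped ENNReal NNReal Topology

noncomputable section
set_option linter.unusedSectionVars false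

/-- filter describing `n → ∞`, `k / n → g` -/
def lg (g : ℝ) : Filter (ℕ × ℕ) :=
  comap Prod.fst atTop ⊓ comap (fun p : ℕ × ℕ => (p.2 : ℝ) / p.1) (𝓝 g)

instance (g : ℝ) : (lg g).IsCountablyGenerated := by unfold lg; infer_instance

lemma lg_fst (g : ℝ) : Tendsto Prod.fst (lg g) atTop := tendsto_comap.mono_left inf_le_left
lemma lg_div (g : ℝ) : Tendsto (fun p : ℕ × ℕ => (p.2 : ℝ) / p.1) (lg g) (𝓝 g) := tendsto_comap.mono_left inf_le_right

lemma lg_eventually {g : ℝ} {S : ℕ × ℕ → Prop} (h : ∀ᶠ p in lg g, S p) :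
    ∃ δ > 0, ∃ n0, ∀ n k : ℕ, n0 ≤ n → |(k : ℝ) / n - g| < δ → S (n, k) := by
  have hb : (lg g).HasBasis (fun q : ℕ × ℝ => True ∧ 0 < q.2)
      (fun q => (Prod.fst ⁻¹' Ici q.1) ∩ ((fun p : ℕ × ℕ => (p.2 : ℝ) / p.1) ⁻¹' Metric.ball g q.2)) :=
    (atTop_basis.comap _).inf (Metric.nhds_basis_ball.comap _)
  obtain ⟨q, hq, hs⟩ := hb.eventually_iff.1 h
  refine ⟨q.2, hq.2, q.1, fun n k hn hk => hs ⟨hn, ?_⟩⟩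
  simpa [Real.dist_eq] using hk

lemma tele_sum (q : ℕ → ℝ) (a b : ℕ) (hab : a ≤ b) (ha : 1 ≤ a) :
    ∑ k ∈ Finset.Ico a b, (q k - q (k - 1)) = q (b - 1) - q (a - 1) := by
  induction b, hab using Nat.le_induction with
  | base => simp
  | succ b hb ih => rw [Finset.sum_Ico_succ_top hb, ih, Nat.add_sub_cancel]; ring

lemma weighted_tendsto (q c : ℕ → ℕ → ℝ) (g : ℝ) (hg0 : 0 ≤ g) (hg1 : g < 1) (L C : ℝ)
    (hq0 : ∀ n, q n 0 = 0) (hqm : ∀ n k, 1 ≤ k → k < n → q n (k - 1) ≤ q n k) (hq1 : ∀ n k, q n k ≤ 1)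
    (hB : ∀ t, g < t → t < 1 → Tendsto (fun n : ℕ => q n ⌊n * t⌋₊) atTop (𝓝 1))
    (hC : ∀ t, 0 < t → t < g → Tendsto (fun n : ℕ => q n ⌊n * t⌋₊) atTop (𝓝 0))
    (hcC : ∀ n k, |c n k| ≤ C) (hc : Tendsto (fun p : ℕ × ℕ => c p.1 p.2) (lg g) (𝓝 L)) :
    Tendsto (fun n => ∑ k ∈ Finset.Ico 1 n, (q n k - q n (k - 1)) * c n k) atTop (𝓝 L) := by
  have hC0 : 0 ≤ C := (abs_nonneg _).trans (hcC 0 0)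
  rw [Metric.tendsto_atTop]
  intro ε hε
  set M : ℝ := C + |L| + 1 with hM
  have hM0 : 0 < M := by positivity
  obtain ⟨δ, hδ, n0, hn0⟩ := lg_eventually (hc.eventually (Metric.ball_mem_nhds L (by positivity : 0 < ε / 4)))
  -- the right cut
  obtain ⟨t, ht1, ht2⟩ := exists_between (lt_min hg1 (by linarith : g < g + δ))
  have htB := (Metric.tendsto_atTop.1 (hB t ht1 (ht2.trans_le (min_le_left _ _)))) (ε / (4 * M)) (by positivity)
  obtain ⟨n1, hn1⟩ := htB
  -- the left cut
  obtain ⟨n2, hn2⟩ : ∃ n2 : ℕ, ∀ n ≥ n2, ∃ a : ℕ, a < n - 1 + 1 ∧ q n a ≤ ε / (4 * M) ∧ a ≤ n * t ∧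
      ∀ k : ℕ, a < k → g - δ < k / n := by
    by_cases h : g - δ < 0
    · refine ⟨1, fun n hn => ⟨0, by omega, by rw [hq0]; positivity, by have : 0 < t := by linarith
                                                                       norm_num; positivity, fun k hk => ?_⟩⟩
      exact h.trans_le (by positivity)
    · push Not at h
      obtain ⟨s, hs1, hs2⟩ := exists_between (by linarith : g - δ < g)
      have hs0 : 0 < s := by linarith
      obtain ⟨n2, hn2⟩ := (Metric.tendsto_atTop.1 (hC s hs0 hs2)) (ε / (4 * M)) (by positivity)
      refine ⟨n2 + 1, fun n hn => ⟨⌊n * s⌋₊, ?_, ?_, ?_, fun k hk => ?_⟩⟩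
      · rw [Nat.sub_add_cancel (by omega)]
        rw [Nat.floor_lt (by positivity)]
        have : (0 : ℝ) < n := by exact_mod_cast (by omega : 0 < n)
        nlinarith
      · have := hn2 n (by omega)
        rw [Real.dist_eq, sub_zero] at this
        exact (le_abs_self _).trans this.le
      · have hn' : (0 : ℝ) < n := by exact_mod_cast (by omega : 0 < n)
        refine (Nat.floor_le (by positivity)).trans ?_
        nlinarith
      · have hn' : (0 : ℝ) < n := by exact_mod_cast (by omega : 0 < n)
        rw [Nat.floor_lt (by positivity)] at hk
        rw [lt_div_iff₀ hn']
        nlinarith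
  refine ⟨max (max n0 n1) (max n2 1), fun n hn => ?_⟩
  have hnn0 : n0 ≤ n := le_trans (by simp) hn
  have hnn1 : n1 ≤ n := le_trans (by simp) hn
  have hnn2 : n2 ≤ n := le_trans (by simp) hn
  have hnpos : 1 ≤ n := le_trans (by simp) hn
  have hnR : (0:ℝ) < n := by exact_mod_cast hnpos
  obtain ⟨a, ha1, ha2, ha3, ha4⟩ := hn2 n hnn2
  have hb := hn1 n hnn1
  set b := ⌊n * t⌋₊ with hbdef
  have htpos : 0 < t := lt_of_le_of_lt hg0 ht1
  have hab : a ≤ b := Nat.le_floor ha3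
  have hbn : b < n := by
    rw [hbdef, Nat.floor_lt (by positivity)]
    have := ht2.trans_le (min_le_left _ _)
    nlinarith
  rw [Real.dist_eq] at hb ⊢
  have hb' : 1 - q n b ≤ ε / (4 * M) := by
    have := (abs_le.1 hb.le).1; linarith
  set p : ℕ → ℝ := fun k => q n k - q n (k - 1) with hp
  have hp0 : ∀ k ∈ Finset.Ico 1 n, 0 ≤ p k := fun k hk => by
    rw [Finset.mem_Ico] at hk
    have := hqm n k hk.1 hk.2
    simp only [hp]; linarith
  have htot : ∑ k ∈ Finset.Ico 1 n, p k = q n (n - 1) := by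
    have := tele_sum (q n) 1 n hnpos le_rfl
    simp only [hp]; rw [this]; simp [hq0]
  have hsplit : ∀ f : ℕ → ℝ, ∑ k ∈ Finset.Ico 1 n, f k = ∑ k ∈ Finset.Ico 1 (a + 1), f k + ∑ k ∈ Finset.Ico (a + 1) (b + 1), f k
      + ∑ k ∈ Finset.Ico (b + 1) n, f k := fun f => by
    rw [Finset.sum_Ico_consecutive _ (by omega) (by omega), Finset.sum_Ico_consecutive _ (by omega) (by omega)]
  have hs1 : ∑ k ∈ Finset.Ico 1 (a + 1), p k = q n a := by
    have := tele_sum (q n) 1 (a + 1) (by omega) le_rfl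
    simp only [hp]; rw [this]; simp [hq0]
  have hs3 : ∑ k ∈ Finset.Ico (b + 1) n, p k = q n (n - 1) - q n b := by
    have := tele_sum (q n) (b + 1) n (by omega) (by omega)
    simp only [hp]; rw [this]; simp
  have hs2 : ∑ k ∈ Finset.Ico (a + 1) (b + 1), p k ≤ 1 := by
    have := tele_sum (q n) (a + 1) (b + 1) (by omega) (by omega)
    simp only [hp]; rw [this]; simp
    have h2 : 0 ≤ q n a := by
      rw [← hs1]; exact Finset.sum_nonneg fun k hk => hp0 k (by rw [Finset.mem_Ico] at hk ⊢; omega)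
    linarith [hq1 n b]
  have hmon : q n b ≤ q n (n - 1) := by
    have : 0 ≤ ∑ k ∈ Finset.Ico (b + 1) n, p k :=
      Finset.sum_nonneg fun k hk => hp0 k (by rw [Finset.mem_Ico] at hk ⊢; omega)
    linarith
  have hcM : ∀ k, |c n k - L| ≤ M := fun k => by
    refine (abs_sub _ _).trans ?_
    have := hcC n k
    rw [hM]; linarith
  have hfar : ∀ S : Finset ℕ, S ⊆ Finset.Ico 1 n → ∑ k ∈ S, |p k * (c n k - L)| ≤ (∑ k ∈ S, p k) * M := by
    intro S hS
    rw [Finset.sum_mul]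
    refine Finset.sum_le_sum fun k hk => ?_
    rw [abs_mul, abs_of_nonneg (hp0 k (hS hk))]
    exact mul_le_mul_of_nonneg_left (hcM k) (hp0 k (hS hk))
  have hnear : ∑ k ∈ Finset.Ico (a + 1) (b + 1), |p k * (c n k - L)| ≤ (∑ k ∈ Finset.Ico (a + 1) (b + 1), p k) * (ε / 4) := by
    rw [Finset.sum_mul]
    refine Finset.sum_le_sum fun k hk => ?_
    rw [Finset.mem_Ico] at hk
    have hk0 := hp0 k (by rw [Finset.mem_Ico]; omega)
    rw [abs_mul, abs_of_nonneg hk0]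
    refine mul_le_mul_of_nonneg_left ?_ hk0
    have hkb : (k : ℝ) / n < g + δ := by
      have h1 : (k : ℝ) ≤ n * t := le_trans (by exact_mod_cast (by omega : k ≤ b)) (Nat.floor_le (by positivity))
      have h2 := ht2.trans_le (min_le_right _ _)
      rw [div_lt_iff₀ hnR]; nlinarith
    have hka := ha4 k (by omega)
    have := hn0 n k hnn0 (by rw [abs_lt]; constructor <;> linarith)
    simpa [Real.dist_eq] using this.le
  have hkey : ∑ k ∈ Finset.Ico 1 n, p k * c n k - L = ∑ k ∈ Finset.Ico 1 n, p k * (c n k - L) - L * (1 - q n (n - 1)) := by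
    simp only [mul_sub, Finset.sum_sub_distrib]
    rw [← Finset.sum_mul, htot]; ring
  rw [hkey]
  have e1 : |∑ k ∈ Finset.Ico 1 n, p k * (c n k - L)| ≤ ∑ k ∈ Finset.Ico 1 n, |p k * (c n k - L)| :=
    Finset.abs_sum_le_sum_abs _ _
  rw [hsplit (fun k => |p k * (c n k - L)|)] at e1
  have e2 := hfar (Finset.Ico 1 (a + 1)) (Finset.Ico_subset_Ico le_rfl (by omega))
  have e3 := hfar (Finset.Ico (b + 1) n) (Finset.Ico_subset_Ico (by omega) le_rfl)
  rw [hs1] at e2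
  rw [hs3] at e3
  have hMe : ε / (4 * M) * M = ε / 4 := by field_simp
  have e2' : q n a * M ≤ ε / 4 := by rw [← hMe]; gcongr
  have e3' : (q n (n - 1) - q n b) * M ≤ (1 - q n b) * M := by gcongr; exact hq1 _ _
  have e4 : |L * (1 - q n (n - 1))| ≤ M * (1 - q n (n - 1)) := by
    have h1 : 0 ≤ 1 - q n (n - 1) := by linarith [hq1 n (n - 1)]
    rw [abs_mul, abs_of_nonneg h1]
    gcongr; rw [hM]; linarith
  have e5 : (1 - q n b) * M ≤ ε / 4 := by rw [← hMe]; gcongr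
  have e6 : (∑ k ∈ Finset.Ico (a + 1) (b + 1), p k) * (ε / 4) ≤ ε / 4 := by nlinarith
  have e7 := abs_sub (∑ k ∈ Finset.Ico 1 n, p k * (c n k - L)) (L * (1 - q n (n - 1)))
  -- combine the right mass and the missing mass
  have e8 : (q n (n - 1) - q n b) * M + M * (1 - q n (n - 1)) = (1 - q n b) * M := by ring
  linarith

end

end

section
open MeasureTheory ProbabilityTheory Real Set Filter
open scoped ENNReal NNReal Topology

noncomputable section
set_option linter.unusedSectionVars false

/-- product of the bridge non-crossing probabilities from grid index `k` to `n` -/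
def qn (f : ℝ → ℝ) (n k : ℕ) : ℝ≥0∞ :=
  ∏ i ∈ Finset.range (n - k), kap (Real.toNNReal (1 / n)) (f ((k + i : ℕ) * (1 / n))) (f ((k + (i + 1) : ℕ) * (1 / n)))

def pn (f : ℝ → ℝ) (n k : ℕ) : ℝ≥0∞ :=
  (1 - kap (Real.toNNReal (1 / n)) (f ((k - 1 : ℕ) * (1 / n))) (f (k * (1 / n)))) * qn f n k

lemma qn_le_one (f : ℝ → ℝ) (n k : ℕ) : qn f n k ≤ 1 := Finset.prod_le_one' fun _ _ => kap_le_one _ _ _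

lemma qn_pred (f : ℝ → ℝ) (n k : ℕ) (hk : 1 ≤ k) (hkn : k < n) :
    qn f n (k - 1) = kap (Real.toNNReal (1 / n)) (f ((k - 1 : ℕ) * (1 / n))) (f (k * (1 / n))) * qn f n k := by
  unfold qn
  obtain ⟨j, rfl⟩ : ∃ j, k = j + 1 := ⟨k - 1, by omega⟩
  have e : n - (j + 1 - 1) = (n - (j + 1)) + 1 := by omega
  rw [e, Finset.prod_range_succ', mul_comm]
  simp only [Nat.add_sub_cancel, add_zero, zero_add]
  congr 1
  refine Finset.prod_congr rfl fun i _ => ?_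
  rw [show j + (i + 1) = j + 1 + i by ring, show j + (i + 1 + 1) = j + 1 + (i + 1) by ring]

lemma pn_eq (f : ℝ → ℝ) (n k : ℕ) (hk : 1 ≤ k) (hkn : k < n) : pn f n k + qn f n (k - 1) = qn f n k := by
  rw [qn_pred f n k hk hkn, pn, ← add_mul, tsub_add_cancel_of_le (kap_le_one _ _ _), one_mul]

lemma pn_toReal (f : ℝ → ℝ) (n k : ℕ) (hk : 1 ≤ k) (hkn : k < n) :
    (pn f n k).toReal = (qn f n k).toReal - (qn f n (k - 1)).toReal := by
  have h1 : qn f n k ≠ ∞ := ne_top_of_le_ne_top ENNReal.one_ne_top (qn_le_one f n k)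
  have h2 : qn f n (k - 1) ≠ ∞ := ne_top_of_le_ne_top ENNReal.one_ne_top (qn_le_one f n _)
  have h := pn_eq f n k hk hkn
  have h3 : pn f n k ≠ ∞ := ne_top_of_le_ne_top h1 (h ▸ le_self_add)
  rw [← h, ENNReal.toReal_add h3 h2]; ring

lemma qn_zero (f : ℝ → ℝ) (hf : f 0 = 0) (n : ℕ) (hn : 1 ≤ n) : qn f n 0 = 0 := by
  unfold qn
  refine Finset.prod_eq_zero (i := 0) (by simp; omega) ?_
  simp [hf, kap_zero_left]

lemma kap_pos {v : ℝ≥0} {x y : ℝ} (h : kap v x y ≠ 0) : 0 < x * y := by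
  by_contra hxy
  push Not at hxy
  apply h
  unfold kap
  rw [ENNReal.ofReal_eq_zero, sub_nonpos, Real.one_le_exp_iff]
  have : -2 * x * y = 2 * (-(x * y)) := by ring
  rw [this]
  exact div_nonneg (by linarith) v.2

lemma qn_ne_zero {f : ℝ → ℝ} {n k : ℕ} (h : qn f n k ≠ 0) (i : ℕ) (hi : i + k ≤ n) (hkn : k < n) :
    0 < f (k * (1 / n)) * f ((k + i : ℕ) * (1 / n)) := by
  have hk : ∀ i < n - k, 0 < f ((k + i : ℕ) * (1 / n)) * f ((k + (i + 1) : ℕ) * (1 / n)) := fun i hi => by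
    refine kap_pos (v := Real.toNNReal (1 / n)) fun h0 => h ?_
    exact Finset.prod_eq_zero (Finset.mem_range.2 hi) h0
  induction i with
  | zero =>
    have := hk 0 (by omega)
    have h1 : f ((k + 0 : ℕ) * (1 / n)) ≠ 0 := fun h0 => by rw [h0] at this; simp at this
    simpa using h1
  | succ i ih =>
    have h1 := ih (by omega)
    have h2 := hk i (by omega)
    have h3 : 0 < f ((k + i : ℕ) * (1 / n)) ^ 2 := by
      have : f ((k + i : ℕ) * (1 / n)) ≠ 0 := fun h0 => by rw [h0] at h1; simp at h1
      positivity
    have h4 := mul_pos h1 h2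
    have h5 : 0 < (f (k * (1 / n)) * f ((k + (i + 1) : ℕ) * (1 / n))) * f ((k + i : ℕ) * (1 / n)) ^ 2 := by
      exact lt_of_lt_of_eq h4 (by ring)
    exact pos_of_mul_pos_left h5 h3.le

/-- both signs after `t` force a vanishing product -/
lemma qn_left {f : ℝ → ℝ} (hf : Continuous f) {t s1 s2 : ℝ} (ht : 0 < t) (ht1 : t < 1) (h1 : t ≤ s1) (h1' : s1 ≤ 1)
    (h2 : t ≤ s2) (h2' : s2 ≤ 1) (hs1 : 0 < f s1) (hs2 : f s2 < 0) :
    ∀ᶠ n : ℕ in atTop, qn f n ⌊n * t⌋₊ = 0 := by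
  have hceil : ∀ s : ℝ, 0 ≤ s → Tendsto (fun n : ℕ => f (⌈s * n⌉₊ * (1 / n))) atTop (𝓝 (f s)) := fun s hs => by
    have := (tendsto_nat_ceil_mul_div_atTop (R := ℝ) hs).comp tendsto_natCast_atTop_atTop
    refine (hf.tendsto s).comp (this.congr fun n => ?_)
    simp [div_eq_mul_inv]
  filter_upwards [(hceil s1 (by linarith)).eventually (lt_mem_nhds hs1), (hceil s2 (by linarith)).eventually (gt_mem_nhds hs2),
    eventually_ge_atTop 1] with n hn1 hn2 hn
  by_contra h0
  have hnR : (0:ℝ) < n := by exact_mod_cast hn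
  have hk : ⌊(n:ℝ) * t⌋₊ < n := by rw [Nat.floor_lt (by positivity)]; nlinarith
  have key : ∀ s, t ≤ s → s ≤ 1 → 0 < f (⌊(n:ℝ) * t⌋₊ * (1 / n)) * f (⌈s * n⌉₊ * (1 / n)) := fun s hs hs' => by
    have hle : ⌊(n:ℝ) * t⌋₊ ≤ ⌈s * n⌉₊ := by
      refine (Nat.floor_le_ceil _).trans (Nat.ceil_mono ?_)
      nlinarith
    have hle2 : ⌈s * n⌉₊ ≤ n := by rw [Nat.ceil_le]; nlinarith
    have := qn_ne_zero h0 (⌈s * n⌉₊ - ⌊(n:ℝ) * t⌋₊) (by omega) hk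
    rwa [Nat.add_sub_cancel' hle] at this
  have k1 := key s1 h1 h1'
  have k2 := key s2 h2 h2'
  have k3 := pos_of_mul_pos_left k1 hn1.le
  nlinarith

lemma qn_right {f : ℝ → ℝ} (hf : Continuous f) {g t : ℝ} (hg : 0 ≤ g) (hgt : g < t) (ht1 : t < 1)
    (hne : ∀ s, g < s → s ≤ 1 → f s ≠ 0) : Tendsto (fun n : ℕ => (qn f n ⌊n * t⌋₊).toReal) atTop (𝓝 1) := by
  obtain ⟨t', ht', ht''⟩ := exists_between hgt
  obtain ⟨z, hz, hzm⟩ := (isCompact_Icc (a := t') (b := 1)).prod (isCompact_Icc (a := t') (b := 1)) |>.exists_isMinOn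
    ⟨(t', t'), ⟨⟨le_rfl, by linarith⟩, ⟨le_rfl, by linarith⟩⟩⟩
    ((hf.comp continuous_fst).mul (hf.comp continuous_snd)).continuousOn
  set c := f z.1 * f z.2 with hc
  have hsign : ∀ x ∈ Icc t' 1, ∀ y ∈ Icc t' 1, 0 < f x * f y := by
    intro x hx y hy
    by_contra hxy
    push Not at hxy
    have h0 : (0:ℝ) ∈ uIcc (f x) (f y) := by
      rw [mem_uIcc]
      by_contra hcon
      push Not at hcon
      rcases lt_trichotomy (f x) 0 with h | h | h
      · have := hcon.1 h.le; nlinarith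
      · exact absurd h (hne x (ht'.trans_le hx.1) hx.2)
      · have h3 : 0 < f y := by
          by_contra h4; push Not at h4
          have := hcon.2 h4; linarith
        nlinarith
    obtain ⟨w, hw, hw0⟩ := intermediate_value_uIcc hf.continuousOn h0
    have hw2 : w ∈ Icc t' 1 := (uIcc_subset_Icc hx hy) hw
    exact hne w (ht'.trans_le hw2.1) hw2.2 hw0
  have hcpos : 0 < c := hsign _ hz.1 _ hz.2
  have hmin : ∀ x ∈ Icc t' 1, ∀ y ∈ Icc t' 1, c ≤ f x * f y := fun x hx y hy => hzm (a := (x, y)) ⟨hx, hy⟩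
  -- lower bound
  have hlow : ∀ᶠ n : ℕ in atTop, 1 - n * exp (-(2 * c) * n) ≤ (qn f n ⌊n * t⌋₊).toReal := by
    have hfl := (tendsto_nat_floor_mul_div_atTop (R := ℝ) (hg.trans hgt.le)).comp tendsto_natCast_atTop_atTop
    filter_upwards [hfl.eventually (lt_mem_nhds ht''), eventually_ge_atTop 1] with n hn hn1
    have hnR : (0:ℝ) < n := by exact_mod_cast hn1
    have hn : t' < (⌊t * n⌋₊ : ℝ) / n := hn
    rw [mul_comm t] at hn
    set k := ⌊(n:ℝ) * t⌋₊
    have hvn : ((Real.toNNReal (1 / n) : ℝ≥0) : ℝ) = 1 / n := Real.coe_toNNReal _ (by positivity)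
    have hE : exp (-(2 * c) * n) ≤ 1 := by rw [Real.exp_le_one_iff]; nlinarith
    have hkap : ∀ i ∈ Finset.range (n - k), ENNReal.ofReal (1 - exp (-(2 * c) * n)) ≤
        kap (Real.toNNReal (1 / n)) (f ((k + i : ℕ) * (1 / n))) (f ((k + (i + 1) : ℕ) * (1 / n))) := by
      intro i hi
      rw [Finset.mem_range] at hi
      unfold kap
      refine ENNReal.ofReal_le_ofReal ?_
      have hm : ∀ j : ℕ, k ≤ j → j ≤ n → (j:ℝ) * (1 / n) ∈ Icc t' 1 := fun j hj hj' => by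
        rw [mul_one_div]
        refine ⟨hn.le.trans (by gcongr), ?_⟩
        rw [div_le_one hnR]; exact_mod_cast hj'
      have hmm := hmin _ (hm (k + i) (by omega) (by omega)) _ (hm (k + (i + 1)) (by omega) (by omega))
      rw [hvn, div_div_eq_mul_div, div_one]
      gcongr
      nlinarith
    have hp : ENNReal.ofReal (1 - exp (-(2 * c) * n)) ^ (n - k) ≤ qn f n k := by
      have := Finset.prod_le_prod' hkap
      simpa [qn] using this
    have hp2 : (1 - exp (-(2 * c) * n)) ^ (n - k) ≤ (qn f n k).toReal := by
      rw [← ENNReal.ofReal_pow (by linarith)] at hp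
      exact (ENNReal.ofReal_le_iff_le_toReal (ne_top_of_le_ne_top ENNReal.one_ne_top (qn_le_one f n k))).1 hp
    refine le_trans ?_ hp2
    have hber := one_add_mul_le_pow (a := -exp (-(2 * c) * n)) (by linarith) (n - k)
    refine le_trans ?_ (le_of_le_of_eq hber (by rw [← sub_eq_add_neg]))
    have : ((n - k : ℕ) : ℝ) ≤ n := by exact_mod_cast Nat.sub_le _ _
    nlinarith [Real.exp_pos (-(2 * c) * n)]
  have hlim : Tendsto (fun n : ℕ => 1 - (n:ℝ) * exp (-(2 * c) * n)) atTop (𝓝 1) := by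
    have h1 := (tendsto_rpow_mul_exp_neg_mul_atTop_nhds_zero 1 (2 * c) (by positivity)).comp tendsto_natCast_atTop_atTop
    have h2 := (tendsto_const_nhds (x := (1:ℝ))).sub h1
    simpa using h2
  refine tendsto_of_tendsto_of_tendsto_of_le_of_le' hlim tendsto_const_nhds hlow (Eventually.of_forall fun n => ?_)
  have := ENNReal.toReal_mono ENNReal.one_ne_top (qn_le_one f n ⌊n * t⌋₊)
  simpa using this

end

end

section
open MeasureTheory ProbabilityTheory Real Set Filter
open scoped ENNReal NNReal Topology

noncomputable section
set_option linter.unusedSectionVars false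

section
variable {Ω : Type*} {mΩ : MeasurableSpace Ω} {P : Measure Ω} [IsProbabilityMeasure P] {W : ℝ → Ω → ℝ}

lemma IsStdBM.neg_path (hW : IsStdBM P W) : IsStdBM P (fun t ω => -W t ω) where
  measurable t := (hW.measurable t).neg
  start ω := by simp [hW.start]
  cont ω := (hW.cont ω).neg
  indep n t h1 h2 := by
    have := (hW.indep n t h1 h2).comp (fun _ x => -x) (fun _ => measurable_neg)
    refine this.congr fun i => ?_
    filter_upwards with ω
    simp [Function.comp]; ring
  gauss s t hs hst := by
    have h := hW.gauss s t hs hst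
    have hm : Measurable (fun ω => W t ω - W s ω) := (hW.measurable t).sub (hW.measurable s)
    have e : (fun ω => -W t ω - -W s ω) = (fun x => -x) ∘ (fun ω => W t ω - W s ω) := by
      ext ω; simp; ring
    rw [e, ← Measure.map_map measurable_neg hm, h]
    have := gaussianReal_map_neg (μ := 0) (v := Real.toNNReal (t - s))
    simpa using this

lemma IsStdBM.law_at (hW : IsStdBM P W) {t : ℝ} (ht : 0 ≤ t) : P.map (W t) = gaussianReal 0 (Real.toNNReal t) := by
  have := hW.gauss 0 t le_rfl ht
  simpa [hW.start] using this

lemma IsStdBM.add_ne_zero (hW : IsStdBM P W) {t : ℝ} (ht : 0 < t) (G : (ℝ≥0 → ℝ) → ℝ) (hG : Measurable G) :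
    ∀ᵐ ω ∂P, W t ω + G (fun u => W (t + u) ω - W t ω) ≠ 0 := by
  have hi := hW.indep_past (Real.toNNReal t)
  rw [Real.coe_toNNReal t ht.le] at hi
  set Z : Ω → (ℝ≥0 → ℝ) := fun ω u => W (t + u) ω - W t ω with hZ
  have hZm : Measurable Z := measurable_pi_lambda _ fun u => (hW.measurable _).sub (hW.measurable _)
  have hGZ : Measurable (fun ω => G (Z ω)) := hG.comp hZm
  have hind : IndepFun (fun ω => G (Z ω)) (W t) P := by
    rw [IndepFun_iff_Indep]
    refine (indep_of_indep_of_le_right (indep_of_indep_of_le_left hi ?_) ?_).symm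
    · exact (measurable_past W ht.le le_rfl).comap_le
    · exact (hG.comp (comap_measurable Z)).comap_le
  have hpair := (indepFun_iff_map_prod_eq_prod_map_map hGZ.aemeasurable (hW.measurable t).aemeasurable).1 hind
  have hS : MeasurableSet {z : ℝ × ℝ | z.2 + z.1 = 0} :=
    measurableSet_eq_fun (measurable_snd.add measurable_fst) measurable_const
  have h0 : (P.map (fun ω => (G (Z ω), W t ω))) {z : ℝ × ℝ | z.2 + z.1 = 0} = 0 := by
    rw [hpair, hW.law_at ht.le, Measure.measure_prod_null hS]
    refine ae_of_all _ fun x => ?_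
    have : Prod.mk x ⁻¹' {z : ℝ × ℝ | z.2 + z.1 = 0} = {-x} := by
      ext y; simp [add_eq_zero_iff_eq_neg]
    beta_reduce
    rw [this]
    have := nullSingletonClass_gaussianReal (μ := 0) (v := Real.toNNReal t) (by simpa using ht)
    simp
  rw [Measure.map_apply (hGZ.prodMk (hW.measurable t)) hS] at h0
  rw [ae_iff]
  simpa using h0

lemma IsStdBM.ne_zero (hW : IsStdBM P W) {t : ℝ} (ht : 0 < t) : ∀ᵐ ω ∂P, W t ω ≠ 0 := by
  simpa using hW.add_ne_zero ht (fun _ => 0) measurable_const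

/-- the minimum over `[t,1]` is a.s. nonzero -/
lemma IsStdBM.min_ne_zero (hW : IsStdBM P W) {t : ℝ} (ht : 0 < t) (ht1 : t ≤ 1) :
    ∀ᵐ ω ∂P, (∃ s ∈ Icc t 1, W s ω = 0) → ∃ s ∈ Icc t 1, W s ω < 0 := by
  set D : ℕ × ℕ → ℝ≥0 := fun q => Real.toNNReal ((1 - t) * min 1 ((q.1 : ℝ) / q.2)) with hD
  have hDv : ∀ q, (D q : ℝ) = (1 - t) * min 1 ((q.1 : ℝ) / q.2) := fun q =>
    Real.coe_toNNReal _ (mul_nonneg (by linarith) (le_min zero_le_one (by positivity)))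
  have h := hW.add_ne_zero ht (fun z => ⨅ q : ℕ × ℕ, z (D q)) (Measurable.iInf fun q => measurable_pi_apply _)
  filter_upwards [h] with ω hω
  rintro ⟨s, hs, hs0⟩
  by_contra hcon
  push Not at hcon
  apply hω
  have hmem : ∀ q, t + (D q : ℝ) ∈ Icc t 1 := fun q => by
    rw [hDv]
    have h1 : 0 ≤ min 1 ((q.1 : ℝ) / q.2) := le_min zero_le_one (by positivity)
    have h2 : min 1 ((q.1 : ℝ) / q.2) ≤ 1 := min_le_left _ _
    constructor <;> nlinarith
  have hinf : (⨅ q : ℕ × ℕ, (W (t + (D q : ℝ)) ω - W t ω)) = -W t ω := by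
    refine ciInf_eq_of_forall_ge_of_forall_gt_exists_lt (fun q => ?_) (fun w hw => ?_)
    · linarith [hcon _ (hmem q)]
    · -- approximate `s`
      have hr : ∃ r ∈ Icc (0:ℝ) 1, t + (1 - t) * r = s := by
        rcases eq_or_lt_of_le ht1 with h | h
        · exact ⟨0, by simp, by have := hs.1; have := hs.2; linarith⟩
        · refine ⟨(s - t) / (1 - t), ⟨div_nonneg (by linarith [hs.1]) (by linarith), ?_⟩, ?_⟩
          · rw [div_le_one (by linarith)]; linarith [hs.2]
          · have : 1 - t ≠ 0 := by linarith
            field_simp; ring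
      obtain ⟨r, hr, hrs⟩ := hr
      have hfl := (tendsto_nat_floor_mul_div_atTop (R := ℝ) hr.1).comp tendsto_natCast_atTop_atTop
      have hlim : Tendsto (fun n : ℕ => W (t + (D (⌊r * n⌋₊, n) : ℝ)) ω - W t ω) atTop (𝓝 (-W t ω)) := by
        have h1 : Tendsto (fun n : ℕ => t + (D (⌊r * n⌋₊, n) : ℝ)) atTop (𝓝 s) := by
          simp only [hDv]
          have h2 := ((tendsto_const_nhds (x := (1:ℝ))).min hfl).const_mul (1 - t) |>.const_add t
          rw [min_eq_right hr.2, hrs] at h2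
          exact h2
        have h3 := (((hW.cont ω).tendsto s).comp h1).sub_const (W t ω)
        rw [hs0, zero_sub] at h3
        exact h3
      obtain ⟨n, hn⟩ := (hlim.eventually (gt_mem_nhds hw)).exists
      exact ⟨_, hn⟩
  change W t ω + (⨅ q : ℕ × ℕ, (W (t + (D q : ℝ)) ω - W t ω)) = 0
  rw [hinf]; ring

lemma gaussian_half {v : ℝ≥0} (hv : v ≠ 0) : gaussianReal 0 v (Ici 0) = 1 / 2 := by
  have := nullSingletonClass_gaussianReal (μ := 0) hv
  have h1 : gaussianReal 0 v (Iic 0) = gaussianReal 0 v (Ici 0) := by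
    have h := gaussianReal_map_neg (μ := 0) (v := v)
    rw [neg_zero] at h
    conv_lhs => rw [← h]
    rw [Measure.map_apply measurable_neg measurableSet_Iic]
    congr 1; ext x; simp
  have h2 : gaussianReal 0 v (Ici 0) + gaussianReal 0 v (Iic 0) = 1 := by
    have h3 : gaussianReal 0 v (Iic 0) = gaussianReal 0 v (Iio 0) := measure_congr Iio_ae_eq_Iic.symm
    rw [h3, ← measure_union (by rw [Set.disjoint_left]; intro x hx hx'; exact absurd (mem_Iio.1 hx') (not_lt.2 (mem_Ici.1 hx))) measurableSet_Iio]
    rw [show Ici (0:ℝ) ∪ Iio 0 = univ by rw [union_comm]; exact Iio_union_Ici]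
    exact measure_univ
  rw [h1, ← two_mul] at h2
  rw [ENNReal.eq_div_iff (by norm_num) (by norm_num)]
  exact h2

/-- Brownian motion is a.s. not monotone on `[t,1]` -/
lemma IsStdBM.not_mono (hW : IsStdBM P W) {t : ℝ} (ht : 0 ≤ t) (ht1 : t < 1) :
    ∀ᵐ ω ∂P, ¬ MonotoneOn (fun s => W s ω) (Icc t 1) := by
  rw [ae_iff]
  have key : ∀ n : ℕ, P {ω | ¬ ¬ MonotoneOn (fun s => W s ω) (Icc t 1)} ≤ (1 / 2 : ℝ≥0∞) ^ n := by
    intro n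
    rcases Nat.eq_zero_or_pos n with rfl | hn
    · simpa using prob_le_one
    have hnR : (0:ℝ) < n := by exact_mod_cast hn
    set τ : Fin (n + 1) → ℝ := fun i => t + (1 - t) * ((i : ℕ) / n) with hτ
    have hmono : StrictMono τ := fun i j hij => by
      simp only [hτ]
      have : ((i : ℕ) : ℝ) < (j : ℕ) := by exact_mod_cast hij
      have h2 : 0 < 1 - t := by linarith
      gcongr
    have hτ0 : ∀ i, 0 ≤ τ i := fun i => by
      have : 0 ≤ 1 - t := by linarith
      simp only [hτ]; positivity
    have hmem : ∀ i, τ i ∈ Icc t 1 := fun i => by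
      simp only [hτ]
      have h1 : ((i : ℕ) : ℝ) / n ≤ 1 := by
        rw [div_le_one hnR]; exact_mod_cast Nat.lt_succ_iff.1 i.2
      have h2 : 0 ≤ ((i : ℕ) : ℝ) / n := by positivity
      constructor <;> nlinarith
    have hind := hW.indep n τ hτ0 hmono.monotone
    have hsub : {ω | ¬ ¬ MonotoneOn (fun s => W s ω) (Icc t 1)} ⊆
        ⋂ i ∈ (Finset.univ : Finset (Fin n)), (fun ω => W (τ i.succ) ω - W (τ i.castSucc) ω) ⁻¹' (Ici 0) := by
      intro ω hω
      have hω : MonotoneOn (fun s => W s ω) (Icc t 1) := not_not.1 hω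
      simp only [mem_iInter, mem_preimage, mem_Ici, sub_nonneg]
      intro i _
      exact hω (hmem _) (hmem _) (hmono.monotone (Fin.castSucc_lt_succ).le)
    refine (measure_mono hsub).trans ?_
    rw [hind.measure_inter_preimage_eq_mul Finset.univ (fun _ _ => measurableSet_Ici)]
    have : ∀ i : Fin n, P ((fun ω => W (τ i.succ) ω - W (τ i.castSucc) ω) ⁻¹' (Ici 0)) = 1 / 2 := fun i => by
      have hmm : Measurable (fun ω => W (τ i.succ) ω - W (τ i.castSucc) ω) := (hW.measurable _).sub (hW.measurable _)
      rw [← Measure.map_apply hmm measurableSet_Ici, hW.gauss _ _ (hτ0 _) (hmono.monotone (Fin.castSucc_lt_succ).le)]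
      refine gaussian_half ?_
      have := hmono (Fin.castSucc_lt_succ (i := i))
      simpa using this
    simp [this]
  refine le_antisymm (le_of_tendsto_of_tendsto tendsto_const_nhds
    (ENNReal.tendsto_pow_atTop_nhds_zero_of_lt_one (r := 1 / 2) (by simp)) (Eventually.of_forall key)) (zero_le)

end

end

end

section
open MeasureTheory ProbabilityTheory Real Set Filter
open scoped ENNReal NNReal Topology

noncomputable section
set_option linter.unusedSectionVars false

lemma lastZero_spec {Ω : Type*} {W : ℝ → Ω → ℝ} {ω : Ω} (hc : Continuous fun t => W t ω) (h0 : W 0 ω = 0)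
    (h1 : W 1 ω ≠ 0) : 0 ≤ lastZero W ω ∧ lastZero W ω < 1 ∧ W (lastZero W ω) ω = 0 ∧
      ∀ s, lastZero W ω < s → s ≤ 1 → W s ω ≠ 0 := by
  set S := {t ∈ Icc (0:ℝ) 1 | W t ω = 0} with hS
  have hcl : IsClosed S := isClosed_Icc.inter (isClosed_eq hc continuous_const)
  have hne : S.Nonempty := ⟨0, by simp [hS, h0]⟩
  have hb : BddAbove S := ⟨1, fun t ht => ht.1.2⟩
  have hm : sSup S ∈ S := hcl.csSup_mem hne hb
  have hg : lastZero W ω = sSup S := rfl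
  rw [hg]
  refine ⟨hm.1.1, lt_of_le_of_ne hm.1.2 fun h => h1 ?_, hm.2, fun s hs hs1 hs0 => ?_⟩
  · rw [← h]; exact hm.2
  · exact absurd (le_csSup hb ⟨⟨hm.1.1.trans hs.le, hs1⟩, hs0⟩) (not_le.2 hs)

section
variable {Ω : Type*} {mΩ : MeasurableSpace Ω} {P : Measure Ω} [IsProbabilityMeasure P] {W : ℝ → Ω → ℝ}
variable {Ω' : Type*} {mΩ' : MeasurableSpace Ω'} {Q : Measure Ω'} [IsProbabilityMeasure Q] {β : ℝ → Ω' → E3}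

/-- good paths -/
def GoodPath (f : ℝ → ℝ) : Prop :=
  Continuous f ∧ f 0 = 0 ∧ f 1 ≠ 0 ∧ ∀ t : ℚ, (0:ℝ) < t → (t:ℝ) < 1 → (∃ s ∈ Icc (t:ℝ) 1, f s = 0) →
    (∃ s ∈ Icc (t:ℝ) 1, f s < 0) ∧ (∃ s ∈ Icc (t:ℝ) 1, 0 < f s)

lemma IsStdBM.good (hW : IsStdBM P W) : ∀ᵐ ω ∂P, GoodPath (fun t => W t ω) := by
  have h : ∀ᵐ ω ∂P, ∀ t : ℚ, (0:ℝ) < t → (t:ℝ) < 1 → (∃ s ∈ Icc (t:ℝ) 1, W s ω = 0) →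
    (∃ s ∈ Icc (t:ℝ) 1, W s ω < 0) ∧ (∃ s ∈ Icc (t:ℝ) 1, 0 < W s ω) := by
    rw [ae_all_iff]
    intro t
    by_cases ht : (0:ℝ) < t ∧ (t:ℝ) < 1
    · filter_upwards [hW.min_ne_zero ht.1 ht.2.le, hW.neg_path.min_ne_zero ht.1 ht.2.le] with ω h1 h2 _ _ h3
      refine ⟨h1 h3, ?_⟩
      simpa using h2 (by simpa using h3)
    · filter_upwards with ω h1 h2
      exact absurd ⟨h1, h2⟩ ht
  filter_upwards [h, hW.ne_zero one_pos] with ω h1 h2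
  exact ⟨hW.cont ω, hW.start ω, h2, h1⟩

lemma sum_pn (f : ℝ → ℝ) (n : ℕ) : ∑ k ∈ Finset.Ico 1 n, pn f n k ≤ 1 := by
  have key : ∀ j, 1 ≤ j → j ≤ n → ∑ k ∈ Finset.Ico 1 j, pn f n k + qn f n 0 = qn f n (j - 1) := by
    intro j hj
    induction j, hj using Nat.le_induction with
    | base => simp
    | succ j hj ih =>
      intro hjn
      rw [Finset.sum_Ico_succ_top hj, add_right_comm, ih (by omega), add_comm, pn_eq f n j hj (by omega),
        Nat.add_sub_cancel]
  rcases Nat.eq_zero_or_pos n with rfl | hn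
  · simp
  · exact (le_self_add.trans (key n hn le_rfl).le).trans (qn_le_one _ _ _)

lemma sum_c_le (f : ℝ → ℝ) (n : ℕ) (c : ℕ → ℝ≥0∞) (C : ℝ≥0) (hc : ∀ k, c k ≤ C) :
    ∑ k ∈ Finset.Ico 1 n, pn f n k * c k ≤ C := by
  calc _ ≤ ∑ k ∈ Finset.Ico 1 n, pn f n k * C := Finset.sum_le_sum fun k _ => by gcongr; exact hc k
    _ ≤ 1 * C := by rw [← Finset.sum_mul]; gcongr; exact sum_pn f n
    _ = C := one_mul _

lemma good_tendsto {f : ℝ → ℝ} (hf : GoodPath f) {g : ℝ} (hg0 : 0 ≤ g) (hg1 : g < 1) (hfg : f g = 0)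
    (hne : ∀ s, g < s → s ≤ 1 → f s ≠ 0) (c : ℕ → ℕ → ℝ≥0∞) (C : ℝ≥0) (hcC : ∀ n k, c n k ≤ C) (L : ℝ≥0∞) (hL : L ≠ ∞)
    (hc : Tendsto (fun p : ℕ × ℕ => c p.1 p.2) (lg g) (𝓝 L)) :
    Tendsto (fun n => ∑ k ∈ Finset.Ico 1 n, pn f n k * c n k) atTop (𝓝 L) := by
  have hfc : ∀ n k, c n k ≠ ∞ := fun n k => ne_top_of_le_ne_top ENNReal.coe_ne_top (hcC n k)
  have hsf : ∀ n, ∑ k ∈ Finset.Ico 1 n, pn f n k * c n k ≠ ∞ := fun n =>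
    ne_top_of_le_ne_top ENNReal.coe_ne_top (sum_c_le f n (c n) C (hcC n))
  rw [← ENNReal.tendsto_toReal_iff hsf hL]
  -- modify `q` at `n = 0`
  set q : ℕ → ℕ → ℝ := fun n k => if n = 0 then 0 else (qn f n k).toReal with hq
  have hqr : ∀ n k, (qn f n k).toReal ≤ 1 := fun n k => by
    have := ENNReal.toReal_mono ENNReal.one_ne_top (qn_le_one f n k)
    simpa using this
  have hmain := weighted_tendsto q (fun n k => (c n k).toReal) g hg0 hg1 L.toReal C ?_ ?_ ?_ ?_ ?_ ?_ ?_
  · refine hmain.congr fun n => ?_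
    rw [ENNReal.toReal_sum]
    · refine Finset.sum_congr rfl fun k hk => ?_
      rw [Finset.mem_Ico] at hk
      rw [ENNReal.toReal_mul, pn_toReal f n k hk.1 hk.2]
      simp only [hq, if_neg (by omega : ¬ n = 0)]
    · intro k hk
      exact (ENNReal.sum_ne_top.1 (hsf n)) k hk
  · intro n
    simp only [hq]
    split_ifs with h
    · rfl
    · rw [qn_zero f hf.2.1 n (by omega)]; rfl
  · intro n k hk hkn
    simp only [hq, if_neg (by omega : ¬ n = 0)]
    refine ENNReal.toReal_mono (ne_top_of_le_ne_top ENNReal.one_ne_top (qn_le_one f n k)) ?_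
    rw [← pn_eq f n k hk hkn]; exact le_add_self
  · intro n k
    simp only [hq]
    split_ifs
    · exact zero_le_one
    · exact hqr n k
  · intro t hgt ht1
    refine (qn_right hf.1 hg0 hgt ht1 hne).congr' ?_
    filter_upwards [eventually_ge_atTop 1] with n hn
    simp only [hq, if_neg (by omega : ¬ n = 0)]
  · intro t ht htg
    obtain ⟨r, hr1, hr2⟩ := exists_rat_btwn htg
    obtain ⟨⟨s2, hs2, h2⟩, ⟨s1, hs1, h1⟩⟩ := hf.2.2.2 r (ht.trans hr1) (hr2.trans hg1) ⟨g, ⟨hr2.le, hg1.le⟩, hfg⟩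
    refine tendsto_const_nhds.congr' ?_
    filter_upwards [qn_left hf.1 ht (htg.trans hg1) (hr1.le.trans hs1.1) hs1.2 (hr1.le.trans hs2.1) hs2.2 h1 h2] with n hn
    simp [hq, hn]
  · intro n k
    rw [abs_of_nonneg ENNReal.toReal_nonneg]
    have := ENNReal.toReal_mono ENNReal.coe_ne_top (hcC n k)
    simpa using this
  · exact (ENNReal.tendsto_toReal hL).comp hc

lemma lg_lt {g : ℝ} (hg1 : g < 1) : ∀ᶠ p in lg g, p.2 < p.1 := by
  filter_upwards [(lg_div g).eventually (gt_mem_nhds hg1), (lg_fst g).eventually (eventually_ge_atTop 1)] with p h1 h2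
  have : (0:ℝ) < p.1 := by exact_mod_cast h2
  rw [div_lt_one this] at h1
  exact_mod_cast h1

lemma lg_N {g : ℝ} (hg1 : g < 1) : Tendsto (fun p : ℕ × ℕ => p.1 - p.2) (lg g) atTop := by
  rw [← tendsto_natCast_atTop_iff (R := ℝ)]
  have h1 : Tendsto (fun p : ℕ × ℕ => (p.1 : ℝ) * (1 - (p.2 : ℝ) / p.1)) (lg g) atTop := by
    refine Tendsto.atTop_mul_pos (C := 1 - g) (by linarith) (tendsto_natCast_atTop_atTop.comp (lg_fst g)) ?_
    exact (lg_div g).const_sub 1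
  refine h1.congr' ?_
  filter_upwards [lg_lt hg1] with p hp
  have : (p.1 : ℝ) ≠ 0 := by have : 0 < p.1 := by omega
                             positivity
  rw [Nat.cast_sub hp.le]; field_simp

lemma grid_eq {n k : ℕ} (hk : k < n) (i : ℕ) : ((k + i : ℕ) : ℝ) * (1 / n) = (k:ℝ) / n + (1 - (k:ℝ) / n) * (i / (n - k : ℕ)) := by
  have h1 : (n:ℝ) ≠ 0 := by have : 0 < n := by omega
                            positivity
  have h2 : (n:ℝ) - k ≠ 0 := by
    have : (k:ℝ) < n := by exact_mod_cast hk
    linarith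
  rw [Nat.cast_sub hk.le]; push_cast; field_simp

lemma a_lim {f : ℝ → ℝ} (hf : Continuous f) {g : ℝ} (hg1 : g < 1) (ψ : ℝ → ℝ≥0) (hψ : Continuous ψ) :
    Tendsto (fun p : ℕ × ℕ => ((ψ (gridDD (fun i => |f ((p.2 + i : ℕ) * (1 / p.1))|) (p.1 - p.2) / √(1 - (p.2 : ℝ) / p.1)) : ℝ≥0) : ℝ≥0∞))
      (lg g) (𝓝 (ψ (mdd (fun r => |f (g + (1 - g) * r)|) / √(1 - g)))) := by
  have hpos : 0 < 1 - g := by linarith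
  refine ENNReal.tendsto_coe.2 ((hψ.tendsto _).comp ?_)
  have hb := (lg_div g).const_sub 1
  refine Tendsto.div ?_ ((Real.continuous_sqrt.tendsto _).comp hb) (by positivity)
  have h := gridDD_tendsto (fun r => |f (g + (1 - g) * r)|) (by fun_prop)
    (fun p : ℕ × ℕ => fun r => |f ((p.2:ℝ) / p.1 + (1 - (p.2:ℝ) / p.1) * r)|) (fun p => p.1 - p.2) (lg_N hg1)
    (tendstoUniformlyOn_affine (f := fun x => |f x|) (by fun_prop) (lg_div g) hb)
  refine h.congr' ?_
  filter_upwards [lg_lt hg1] with p hp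
  simp only [grid_eq hp]

/-- the discretised Bessel functional -/
def Bq (Q : Measure Ω') (β : ℝ → Ω' → E3) (ψ : ℝ → ℝ≥0) (n k : ℕ) (y : ℝ) : ℝ≥0∞ :=
  ∫⁻ ω, ψ (gridDD (fun i => ‖(!₂[y, 0, 0] : E3) + β ((1 - (k:ℝ) / n) * (i / (n - k : ℕ))) ω‖) (n - k) / √(1 - (k:ℝ) / n))
        / ENNReal.ofReal ‖(!₂[y, 0, 0] : E3) + β (1 - (k:ℝ) / n) ω‖ ∂Q

def tht (Q : Measure Ω') (β : ℝ → Ω' → E3) (ψ : ℝ → ℝ≥0) (n k : ℕ) (y : ℝ) : ℝ≥0∞ :=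
  Bq Q β ψ n k y / Bq Q β (fun _ => 1) n k y

lemma Bq_le (ψ : ℝ → ℝ≥0) (C : ℝ≥0) (hC : ∀ x, ψ x ≤ C) (n k : ℕ) (y : ℝ) :
    Bq Q β ψ n k y ≤ C * Bq Q β (fun _ => 1) n k y := by
  unfold Bq
  rw [← lintegral_const_mul' _ _ ENNReal.coe_ne_top]
  refine lintegral_mono fun ω => ?_
  rw [← mul_div_assoc, ENNReal.coe_one, mul_one]
  gcongr; exact hC _

lemma tht_le (ψ : ℝ → ℝ≥0) (C : ℝ≥0) (hC : ∀ x, ψ x ≤ C) (n k : ℕ) (y : ℝ) : tht Q β ψ n k y ≤ C :=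
  ENNReal.div_le_of_le_mul (Bq_le ψ C hC n k y)

lemma measurable_FG (ψ : ℝ → ℝ≥0) (hψ : Continuous ψ) (c : ℝ) :
    Measurable (Function.uncurry fun (s : ℝ × ℝ) (r : ℝ) => (ψ (s.2 / c) : ℝ≥0∞) / ENNReal.ofReal r) := by
  unfold Function.uncurry
  refine Measurable.div (measurable_coe_nnreal_ennreal.comp (hψ.measurable.comp ?_)) ?_ <;> fun_prop

lemma Bq_val3 (hβ : IsStdBMVec 3 Q β) (ψ : ℝ → ℝ≥0) (hψ : Continuous ψ) {n k : ℕ} (hk : k < n) (y : ℝ) :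
    Bq Q β ψ n k y = val3 (Real.toNNReal (1 / n)) (fun s r => ψ (s.2 / √(1 - (k:ℝ) / n)) / ENNReal.ofReal r) (n - k) (|y|, 0)
      (!₂[y, 0, 0] : E3) := by
  have h := chain3 hβ (!₂[y, 0, 0] : E3) (1 / n) (by positivity) _ (measurable_FG ψ hψ (√(1 - (k:ℝ) / n))) (n - k)
  rw [norm_single0] at h
  rw [← h, Bq]
  have h1 : (n:ℝ) ≠ 0 := by have : 0 < n := by omega
                            positivity
  have h2 : (n:ℝ) - k ≠ 0 := by
    have : (k:ℝ) < n := by exact_mod_cast hk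
    linarith
  have e1 : ∀ i : ℕ, (1 - (k:ℝ) / n) * (i / (n - k : ℕ)) = i * (1 / n) := fun i => by
    rw [Nat.cast_sub hk.le]; field_simp
  have e2 : 1 - (k:ℝ) / n = ((n - k : ℕ) : ℝ) * (1 / n) := by
    rw [Nat.cast_sub hk.le]; field_simp
  simp only [e1, gridDD]
  refine lintegral_congr fun ω => ?_
  congr 4
  rw [e2]

lemma measurable_Bq (hβ : IsStdBMVec 3 Q β) (ψ : ℝ → ℝ≥0) (hψ : Continuous ψ) {n k : ℕ} (hk : k < n) :
    Measurable (Bq Q β ψ n k) := by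
  have e : Bq Q β ψ n k = fun y => _ := funext fun y => Bq_val3 hβ ψ hψ hk y
  rw [e]
  have := measurable_val3 (Real.toNNReal (1 / n)) _ (measurable_FG ψ hψ (√(1 - (k:ℝ) / n))) (n - k)
  exact this.comp (f := fun y : ℝ => (((|y|, 0) : ℝ × ℝ), (!₂[y, 0, 0] : E3)))
    ((by fun_prop : Measurable fun y : ℝ => ((|y|, 0) : ℝ × ℝ)).prodMk measurable_e0)

lemma measurable_tht (hβ : IsStdBMVec 3 Q β) (ψ : ℝ → ℝ≥0) (hψ : Continuous ψ) {n k : ℕ} (hk : k < n) :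
    Measurable (tht Q β ψ n k) :=
  (measurable_Bq hβ ψ hψ hk).div (measurable_Bq hβ _ continuous_const hk)

lemma Bq_one_fin (hβ : IsStdBMVec 3 Q β) {n k : ℕ} (hk : k < n) (y : ℝ) : Bq Q β (fun _ => 1) n k y ≠ ∞ := by
  have hT : 0 < 1 - (k:ℝ) / n := by
    have : (0:ℝ) < n := by exact_mod_cast (by omega : 0 < n)
    have h2 : (k:ℝ) < n := by exact_mod_cast hk
    rw [sub_pos, div_lt_one this]; exact h2
  have := inv_fin hβ (!₂[y, 0, 0] : E3) hT 1 (fun _ => 1) measurable_const (fun _ => by simp)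
  simpa [Bq] using this

lemma tht_mul (hβ : IsStdBMVec 3 Q β) (ψ : ℝ → ℝ≥0) (C : ℝ≥0) (hC : ∀ x, ψ x ≤ C) {n k : ℕ} (hk : k < n) (y : ℝ) :
    tht Q β ψ n k y * Bq Q β (fun _ => 1) n k y = Bq Q β ψ n k y := by
  unfold tht
  by_cases h0 : Bq Q β (fun _ => 1) n k y = 0
  · have := Bq_le (Q := Q) (β := β) ψ C hC n k y
    rw [h0, mul_zero] at this
    rw [h0, mul_zero]; exact (nonpos_iff_eq_zero.1 this).symm
  · exact ENNReal.div_mul_cancel h0 (Bq_one_fin hβ hk y)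

lemma step_id (hW : IsStdBM P W) (hβ : IsStdBMVec 3 Q β) (ψ : ℝ → ℝ≥0) (hψ : Continuous ψ) (C : ℝ≥0) (hC : ∀ x, ψ x ≤ C)
    {n k : ℕ} (hk1 : 1 ≤ k) (hk : k < n) :
    ∫⁻ ω, pn (fun t => W t ω) n k * ψ (gridDD (fun i => |W ((k + i : ℕ) * (1 / n)) ω|) (n - k) / √(1 - (k:ℝ) / n)) ∂P
      = ∫⁻ ω, pn (fun t => W t ω) n k * tht Q β ψ n k |W (k * (1 / n)) ω| ∂P := by
  have hn : 0 < n := by omega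
  have hnR : (0:ℝ) < n := by exact_mod_cast hn
  have hδ : (0:ℝ) ≤ 1 / n := by positivity
  have hv : Real.toNNReal (1 / (n:ℝ)) ≠ 0 := by simpa using hn.ne'
  set v := Real.toNNReal (1 / (n:ℝ)) with hvdef
  set Y : Ω → ℝ≥0∞ := fun ω => 1 - kap v (W ((k - 1 : ℕ) * (1 / n)) ω) (W (k * (1 / n)) ω) with hY
  have hm1 : Measurable[past W (k * (1 / n))] (W ((k - 1 : ℕ) * (1 / n))) :=
    measurable_past W (by positivity) (by gcongr; omega)
  have hm2 : Measurable[past W (k * (1 / n))] (W (k * (1 / n))) := measurable_past W (by positivity) le_rfl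
  have hYm : Measurable[past W (k * (1 / n))] Y :=
    Measurable.const_sub ((measurable_kap v).comp (hm1.prodMk hm2)) 1
  have hval : ∀ (φ : ℝ → ℝ≥0), Continuous φ → ∀ x : ℝ, val1 v (fun s => (φ (s.2 / √(1 - (k:ℝ) / n)) : ℝ≥0∞)) (n - k) (|x|, 0) x
      = ENNReal.ofReal |x| * Bq Q β φ n k |x| := by
    intro φ hφ x
    rw [Bq_val3 hβ φ hφ hk, abs_abs]
    refine val1_eq v hv _ ?_ _ _ _ _ (by rw [norm_single0, abs_abs]) (Or.inl (by omega))
    exact measurable_coe_nnreal_ennreal.comp (hφ.measurable.comp (by fun_prop))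
  have hGm : ∀ φ : ℝ → ℝ≥0, Continuous φ → Measurable (fun s : ℝ × ℝ => (φ (s.2 / √(1 - (k:ℝ) / n)) : ℝ≥0∞)) := fun φ hφ =>
    measurable_coe_nnreal_ennreal.comp (hφ.measurable.comp (by fun_prop))
  have h1 := chain1 hW (1 / n) hδ k Y hYm _ (hGm ψ hψ) (n - k)
  have hY2 : Measurable[past W (k * (1 / n))] (fun ω => Y ω * tht Q β ψ n k |W (k * (1 / n)) ω|) := by
    refine Measurable.mul hYm ((measurable_tht hβ ψ hψ hk).comp ?_)
    exact measurable_abs.comp hm2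
  have h2 := chain1 hW (1 / n) hδ k _ hY2 _ (hGm (fun _ => 1) continuous_const) (n - k)
  have e1 : ∫⁻ ω, pn (fun t => W t ω) n k * ψ (gridDD (fun i => |W ((k + i : ℕ) * (1 / n)) ω|) (n - k) / √(1 - (k:ℝ) / n)) ∂P
      = ∫⁻ ω, Y ω * val1 v (fun s => (ψ (s.2 / √(1 - (k:ℝ) / n)) : ℝ≥0∞)) (n - k) (|W (k * (1 / n)) ω|, 0) (W (k * (1 / n)) ω) ∂P := by
    rw [← h1]; rfl
  have e2 : ∫⁻ ω, pn (fun t => W t ω) n k * tht Q β ψ n k |W (k * (1 / n)) ω| ∂P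
      = ∫⁻ ω, (Y ω * tht Q β ψ n k |W (k * (1 / n)) ω|) * val1 v (fun s => ((1 : ℝ≥0) : ℝ≥0∞)) (n - k) (|W (k * (1 / n)) ω|, 0) (W (k * (1 / n)) ω) ∂P := by
    rw [← h2]
    refine lintegral_congr fun ω => ?_
    simp only [pn, qn, hY, ENNReal.coe_one, mul_one]
    ring
  rw [e1, e2]
  refine lintegral_congr fun ω => ?_
  rw [hval ψ hψ, hval (fun _ => 1) continuous_const, ← tht_mul hβ ψ C hC hk]
  ring

end

end

end

section
open MeasureTheory ProbabilityTheory Real Set Filter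
open scoped ENNReal NNReal Topology

noncomputable section
set_option linter.unusedSectionVars false

section
variable {Ω : Type*} {mΩ : MeasurableSpace Ω} {P : Measure Ω} [IsProbabilityMeasure P] {W : ℝ → Ω → ℝ}
variable {Ω' : Type*} {mΩ' : MeasurableSpace Ω'} {Q : Measure Ω'} [IsProbabilityMeasure Q] {β : ℝ → Ω' → E3}

/-- the limiting functional -/
def Iq (Q : Measure Ω') (β : ℝ → Ω' → E3) (ψ : ℝ → ℝ≥0) : ℝ≥0∞ := ∫⁻ ω, ψ (rdd β 1 ω) / ENNReal.ofReal ‖β 1 ω‖ ∂Q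

lemma kernel_ne_top : ∫⁻ z, 1 / ENNReal.ofReal ‖z‖ ∂gauss3 1 ≠ ∞ := by rw [kernel_zero]; exact ENNReal.ofReal_ne_top

lemma Iq_one (hβ : IsStdBMVec 3 Q β) : Iq Q β (fun _ => 1) = ENNReal.ofReal √(2 / π) := by
  unfold Iq
  simp only [ENNReal.coe_one]
  rw [hβ.lintegral_at zero_le_one (fun z => 1 / ENNReal.ofReal ‖z‖) (by fun_prop), Real.toNNReal_one, kernel_zero]

lemma Iq_fin (hβ : IsStdBMVec 3 Q β) (ψ : ℝ → ℝ≥0) (C : ℝ≥0) (hC : ∀ x, ψ x ≤ C) : Iq Q β ψ ≠ ∞ := by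
  have h : Iq Q β ψ ≤ C * Iq Q β (fun _ => 1) := by
    unfold Iq
    rw [← lintegral_const_mul' _ _ ENNReal.coe_ne_top]
    refine lintegral_mono fun ω => ?_
    rw [← mul_div_assoc, ENNReal.coe_one, mul_one]
    gcongr; exact hC _
  refine ne_top_of_le_ne_top ?_ h
  rw [Iq_one hβ]
  exact ENNReal.mul_ne_top ENNReal.coe_ne_top ENNReal.ofReal_ne_top

lemma scaled_inv {T : ℝ} (hT : 0 < T) (r : ℝ) (a : ℝ≥0∞) :
    a * (1 / ENNReal.ofReal (r / √T)) = ENNReal.ofReal √T * (a / ENNReal.ofReal r) := by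
  have hs : 0 < √T := Real.sqrt_pos.2 hT
  have h0 : ENNReal.ofReal √T ≠ 0 := by simpa using hT
  rw [ENNReal.ofReal_div_of_pos hs, one_div, ENNReal.inv_div (Or.inl ENNReal.ofReal_ne_top) (Or.inl h0)]
  simp only [div_eq_mul_inv]; ring

lemma Iq_scale (hβ : IsStdBMVec 3 Q β) (ψ : ℝ → ℝ≥0) (hψ : Continuous ψ) (C : ℝ≥0) (hC : ∀ x, ψ x ≤ C) {T : ℝ} (hT : 0 < T) :
    ∫⁻ ω, ψ (rdd β T ω / √T) / ENNReal.ofReal ‖β T ω‖ ∂Q = Iq Q β ψ / ENNReal.ofReal √T := by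
  have h0 : ENNReal.ofReal √T ≠ 0 := by simpa using hT
  have h := rdd_scale hβ ψ hψ C hC (fun r => 1 / ENNReal.ofReal r) (by fun_prop) kernel_ne_top hT
  simp only [scaled_inv hT] at h
  rw [lintegral_const_mul' _ _ ENNReal.ofReal_ne_top] at h
  rw [ENNReal.eq_div_iff h0 ENNReal.ofReal_ne_top, h, Iq]
  simp only [mul_one_div]

lemma tht_lim (hβ : IsStdBMVec 3 Q β) (ψ : ℝ → ℝ≥0) (hψ : Continuous ψ) (C : ℝ≥0) (hC : ∀ x, ψ x ≤ C)
    {f : ℝ → ℝ} (hf : Continuous f) {g : ℝ} (hg1 : g < 1) (hfg : f g = 0) :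
    Tendsto (fun p : ℕ × ℕ => tht Q β ψ p.1 p.2 |f (p.2 * (1 / p.1))|) (lg g) (𝓝 (Iq Q β ψ / Iq Q β (fun _ => 1))) := by
  have hT : 0 < 1 - g := by linarith
  have hy : Tendsto (fun p : ℕ × ℕ => |f (p.2 * (1 / p.1))|) (lg g) (𝓝 0) := by
    have h1 := ((hf.tendsto g).comp (lg_div g)).abs
    rw [hfg, abs_zero] at h1
    refine h1.congr fun p => ?_
    simp [div_eq_mul_inv]
  have hB : ∀ φ : ℝ → ℝ≥0, Continuous φ → ∀ C' : ℝ≥0, (∀ x, φ x ≤ C') →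
      Tendsto (fun p : ℕ × ℕ => Bq Q β φ p.1 p.2 |f (p.2 * (1 / p.1))|) (lg g) (𝓝 (Iq Q β φ / ENNReal.ofReal √(1 - g))) := by
    intro φ hφ C' hC'
    rw [← Iq_scale hβ φ hφ C' hC' hT]
    exact B_lim hβ φ hφ C' hC' hT (lg_N hg1) ((lg_div g).const_sub 1) hy
  have h0 : ENNReal.ofReal √(1 - g) ≠ 0 := by simpa using hg1
  have h1 : Iq Q β (fun _ => 1) ≠ 0 := by rw [Iq_one hβ]; simp; positivity
  have h1' : Iq Q β (fun _ => 1) ≠ ∞ := by rw [Iq_one hβ]; simp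
  have hψt := Iq_fin hβ ψ C hC
  have key := ENNReal.Tendsto.div (hB ψ hψ C hC) (Or.inr (ENNReal.div_ne_zero.2 ⟨h1, ENNReal.ofReal_ne_top⟩))
    (hB (fun _ => 1) continuous_const 1 (fun _ => le_rfl)) (Or.inr (ENNReal.div_ne_top hψt h0))
  have e : Iq Q β ψ / ENNReal.ofReal √(1 - g) / (Iq Q β (fun _ => 1) / ENNReal.ofReal √(1 - g)) = Iq Q β ψ / Iq Q β (fun _ => 1) := by
    rw [div_eq_mul_inv (Iq Q β ψ / _), ENNReal.inv_div (Or.inl ENNReal.ofReal_ne_top) (Or.inl h0)]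
    simp only [div_eq_mul_inv]
    calc _ = Iq Q β ψ * (Iq Q β (fun _ => 1))⁻¹ * ((ENNReal.ofReal √(1 - g))⁻¹ * ENNReal.ofReal √(1 - g)) := by ring
      _ = _ := by rw [ENNReal.inv_mul_cancel h0 ENNReal.ofReal_ne_top, mul_one]
  rw [e] at key
  exact key

/-- normalised drawdown of the meander -/
def Dm (W : ℝ → Ω → ℝ) (ω : Ω) : ℝ :=
  mdd (fun r => |W (lastZero W ω + (1 - lastZero W ω) * r) ω|) / √(1 - lastZero W ω)

lemma meander_law (hW : IsStdBM P W) (hβ : IsStdBMVec 3 Q β) (ψ : ℝ → ℝ≥0) (hψ : Continuous ψ) (C : ℝ≥0) (hC : ∀ x, ψ x ≤ C) :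
    AEMeasurable (fun ω => (ψ (Dm W ω) : ℝ≥0∞)) P ∧ ∫⁻ ω, ψ (Dm W ω) ∂P = Iq Q β ψ / Iq Q β (fun _ => 1) := by
  have hmk : ∀ n k : ℕ, Measurable (fun ω => pn (fun t => W t ω) n k) := fun n k => by
    unfold pn qn
    have hkm : ∀ a b : ℝ, Measurable (fun ω => kap (Real.toNNReal (1 / n)) (W a ω) (W b ω)) := fun a b =>
      (measurable_kap _).comp ((hW.measurable a).prodMk (hW.measurable b))
    refine Measurable.mul (Measurable.const_sub (hkm _ _) 1) (Finset.measurable_prod _ fun i _ => hkm _ _)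
  have hma : ∀ n k : ℕ, Measurable (fun ω => ((ψ (gridDD (fun i => |W ((k + i : ℕ) * (1 / n)) ω|) (n - k) / √(1 - (k:ℝ) / n)) : ℝ≥0) : ℝ≥0∞)) := by
    intro n k
    refine measurable_coe_nnreal_ennreal.comp (hψ.measurable.comp (Measurable.div_const ?_ _))
    exact measurable_gridDD (fun i => measurable_abs.comp (hW.measurable _)) _
  set A : ℕ → Ω → ℝ≥0∞ := fun n ω => ∑ k ∈ Finset.Ico 1 n, pn (fun t => W t ω) n k *
    ψ (gridDD (fun i => |W ((k + i : ℕ) * (1 / n)) ω|) (n - k) / √(1 - (k:ℝ) / n)) with hA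
  set B : ℕ → Ω → ℝ≥0∞ := fun n ω => ∑ k ∈ Finset.Ico 1 n, pn (fun t => W t ω) n k *
    tht Q β ψ n k |W (k * (1 / n)) ω| with hB
  have hmt : ∀ n, ∀ k ∈ Finset.Ico 1 n, Measurable (fun ω => pn (fun t => W t ω) n k * tht Q β ψ n k |W (k * (1 / n)) ω|) := by
    intro n k hk
    rw [Finset.mem_Ico] at hk
    exact (hmk n k).mul ((measurable_tht hβ ψ hψ hk.2).comp (measurable_abs.comp (hW.measurable _)))
  have hAm : ∀ n, Measurable (A n) := fun n => Finset.measurable_sum _ fun k _ => (hmk n k).mul (hma n k)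
  have hBm : ∀ n, Measurable (B n) := fun n => Finset.measurable_sum _ (hmt n)
  have hAB : ∀ n, ∫⁻ ω, A n ω ∂P = ∫⁻ ω, B n ω ∂P := fun n => by
    simp only [hA, hB]
    have hmA : ∀ k ∈ Finset.Ico 1 n, Measurable (fun ω => pn (fun t => W t ω) n k *
        ((ψ (gridDD (fun i => |W ((k + i : ℕ) * (1 / n)) ω|) (n - k) / √(1 - (k:ℝ) / n)) : ℝ≥0) : ℝ≥0∞)) :=
      fun k _ => (hmk n k).mul (hma n k)
    rw [lintegral_finsetSum _ hmA, lintegral_finsetSum _ (hmt n)]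
    refine Finset.sum_congr rfl fun k hk => ?_
    rw [Finset.mem_Ico] at hk
    exact step_id hW hβ ψ hψ C hC hk.1 hk.2
  have hAlim : ∀ᵐ ω ∂P, Tendsto (fun n => A n ω) atTop (𝓝 (ψ (Dm W ω))) := by
    filter_upwards [hW.good] with ω hω
    obtain ⟨g0, g1, g2, g3⟩ := lastZero_spec (hW.cont ω) (hW.start ω) hω.2.2.1
    exact good_tendsto hω g0 g1 g2 g3 _ C (fun n k => by exact_mod_cast hC _) _ ENNReal.coe_ne_top
      (a_lim hω.1 g1 ψ hψ)
  have h1 : Iq Q β (fun _ => 1) ≠ 0 := by rw [Iq_one hβ]; simp; positivity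
  have hBlim : ∀ᵐ ω ∂P, Tendsto (fun n => B n ω) atTop (𝓝 (Iq Q β ψ / Iq Q β (fun _ => 1))) := by
    filter_upwards [hW.good] with ω hω
    obtain ⟨g0, g1, g2, g3⟩ := lastZero_spec (hW.cont ω) (hW.start ω) hω.2.2.1
    exact good_tendsto hω g0 g1 g2 g3 _ C (fun n k => tht_le ψ C hC n k _) _
      (ENNReal.div_ne_top (Iq_fin hβ ψ C hC) h1) (tht_lim hβ ψ hψ C hC hω.1 g1 g2)
  refine ⟨aemeasurable_of_tendsto_metrizable_ae' (fun n => (hAm n).aemeasurable) hAlim, ?_⟩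
  have hCfin : ∫⁻ _ : Ω, (C : ℝ≥0∞) ∂P ≠ ∞ := by simp
  have hi1 := tendsto_lintegral_of_dominated_convergence (fun _ => (C : ℝ≥0∞)) hAm
    (fun n => ae_of_all _ fun ω => sum_c_le (fun t => W t ω) n _ C (fun k => by exact_mod_cast hC _)) hCfin hAlim
  have hi2 := tendsto_lintegral_of_dominated_convergence (fun _ => (C : ℝ≥0∞)) hBm
    (fun n => ae_of_all _ fun ω => sum_c_le (fun t => W t ω) n _ C (fun k => tht_le ψ C hC n k _)) hCfin hBlim
  simp only [hAB] at hi1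
  have := tendsto_nhds_unique hi1 hi2
  rw [this]; simp

/-- the drawdown of the meander is a.s. positive -/
lemma Dm_pos (hW : IsStdBM P W) : ∀ᵐ ω ∂P, 0 < Dm W ω := by
  have hm : ∀ᵐ ω ∂P, ∀ t : ℚ, (0:ℝ) ≤ t → (t:ℝ) < 1 → ¬ MonotoneOn (fun s => W s ω) (Icc (t:ℝ) 1) ∧
      ¬ MonotoneOn (fun s => -W s ω) (Icc (t:ℝ) 1) := by
    rw [ae_all_iff]
    intro t
    by_cases ht : (0:ℝ) ≤ t ∧ (t:ℝ) < 1
    · filter_upwards [hW.not_mono ht.1 ht.2, hW.neg_path.not_mono ht.1 ht.2] with ω h1 h2 _ _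
      exact ⟨h1, h2⟩
    · filter_upwards with ω h1 h2
      exact absurd ⟨h1, h2⟩ ht
  filter_upwards [hm, hW.good] with ω h1 hω
  obtain ⟨g0, g1, g2, g3⟩ := lastZero_spec (hW.cont ω) (hW.start ω) hω.2.2.1
  set g := lastZero W ω with hg
  have hc : Continuous (fun t => W t ω) := hW.cont ω
  have hpos : 0 < 1 - g := by linarith
  unfold Dm
  rw [← hg]
  refine div_pos ?_ (Real.sqrt_pos.2 hpos)
  have hcm : ContinuousOn (fun r => |W (g + (1 - g) * r) ω|) (Icc 0 1) := by fun_prop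
  by_contra hcon
  have hmono : ∀ a b, g ≤ a → a ≤ b → b ≤ 1 → |W a ω| ≤ |W b ω| := by
    intro a b ha hab hb
    have := le_mdd hcm (a := (a - g) / (1 - g)) (b := (b - g) / (1 - g)) (div_nonneg (by linarith) hpos.le)
      (by gcongr) (by rw [div_le_one hpos]; linarith)
    have e : ∀ x, g + (1 - g) * ((x - g) / (1 - g)) = x := fun x => by
      have : 1 - g ≠ 0 := hpos.ne'
      field_simp; ring
    simp only [e] at this
    linarith
  obtain ⟨t, ht1, ht2⟩ := exists_rat_btwn g1
  have hsgn : ∀ a b, (t:ℝ) ≤ a → a ≤ 1 → (t:ℝ) ≤ b → b ≤ 1 → W a ω < 0 → 0 < W b ω → False := by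
    intro a b ha ha1 hb hb1 h h'
    have h0 : (0:ℝ) ∈ uIcc (W a ω) (W b ω) := by rw [mem_uIcc]; left; exact ⟨h.le, h'.le⟩
    obtain ⟨w, hw, hw0⟩ := intermediate_value_uIcc (f := fun t => W t ω) hc.continuousOn h0
    have hw2 : w ∈ Icc (t:ℝ) 1 := (uIcc_subset_Icc ⟨ha, ha1⟩ ⟨hb, hb1⟩) hw
    exact g3 w (ht1.trans_le hw2.1) hw2.2 hw0
  obtain ⟨n1, n2⟩ := h1 t (g0.trans ht1.le) ht2
  rcases lt_or_gt_of_ne hω.2.2.1 with h | h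
  · have hneg : ∀ a, (t:ℝ) ≤ a → a ≤ 1 → W a ω ≤ 0 := fun a ha ha1 => by
      by_contra hx; push Not at hx
      exact hsgn 1 a ht2.le le_rfl ha ha1 h hx
    apply n2
    intro a ha b hb hab
    have := hmono a b (ht1.le.trans ha.1) hab hb.2
    rwa [abs_of_nonpos (hneg a ha.1 ha.2), abs_of_nonpos (hneg b hb.1 hb.2)] at this
  · have hneg : ∀ a, (t:ℝ) ≤ a → a ≤ 1 → 0 ≤ W a ω := fun a ha ha1 => by
      by_contra hx; push Not at hx
      exact hsgn a 1 ha ha1 ht2.le le_rfl hx h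
    apply n1
    intro a ha b hb hab
    have := hmono a b (ht1.le.trans ha.1) hab hb.2
    rwa [abs_of_nonneg (hneg a ha.1 ha.2), abs_of_nonneg (hneg b hb.1 hb.2)] at this

end

end

end

section
open MeasureTheory ProbabilityTheory Real Set Filter
open scoped ENNReal NNReal Topology

noncomputable section
set_option linter.unusedSectionVars false

section
variable {Ω : Type*} {mΩ : MeasurableSpace Ω} {P : Measure Ω} [IsProbabilityMeasure P] {W : ℝ → Ω → ℝ}
variable {Ω' : Type*} {mΩ' : MeasurableSpace Ω'} {Q : Measure Ω'} [IsProbabilityMeasure Q] {β : ℝ → Ω' → E3}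

lemma rdd_nonneg (hβ : IsStdBMVec 3 Q β) (T : ℝ) (ω : Ω') : 0 ≤ rdd β T ω := by
  have hc := hβ.cont_norm ω
  have hc2 : Continuous (fun r => ‖β (T * r) ω‖) := hc.comp (by fun_prop : Continuous (fun r : ℝ => T * r))
  exact mdd_nonneg hc2.continuousOn

lemma rdd_mono (hβ : IsStdBMVec 3 Q β) {S T : ℝ} (hS : 0 ≤ S) (hST : S ≤ T) (ω : Ω') : rdd β S ω ≤ rdd β T ω := by
  have hc := hβ.cont_norm ω
  obtain ⟨t, t0, tS, e⟩ := mdd_runMax (X := fun t ω => ‖β t ω‖) (ω := ω) hS hc.continuousOn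
  unfold rdd
  rw [e]
  exact runMax_sub_le (X := fun t ω => ‖β t ω‖) hc.continuousOn t0 (tS.trans hST)

/-- truncated inverse -/
def psiInv (j : ℕ) (x : ℝ) : ℝ≥0 := Real.toNNReal (max x (1 / (j + 1)))⁻¹

lemma psiInv_arg (j : ℕ) (x : ℝ) : 0 < max x (1 / ((j:ℝ) + 1)) := lt_max_of_lt_right (by positivity)

lemma psiInv_coe (j : ℕ) (x : ℝ) : (psiInv j x : ℝ≥0∞) = (ENNReal.ofReal (max x (1 / (j + 1))))⁻¹ := by
  rw [← ENNReal.ofReal_inv_of_pos (psiInv_arg j x)]; rfl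

lemma psiInv_cont (j : ℕ) : Continuous (psiInv j) := by
  unfold psiInv
  refine continuous_real_toNNReal.comp (Continuous.inv₀ (by fun_prop) fun x => (psiInv_arg j x).ne')

lemma psiInv_le (j : ℕ) (x : ℝ) : psiInv j x ≤ Real.toNNReal (j + 1) := by
  unfold psiInv
  refine Real.toNNReal_le_toNNReal ?_
  rw [inv_le_comm₀ (psiInv_arg j x) (by positivity)]
  rw [← one_div]; exact le_max_right _ _

lemma psiInv_mono (x : ℝ) : Monotone (fun j => (psiInv j x : ℝ≥0∞)) := by
  intro i j hij
  simp only [psiInv_coe]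
  gcongr

lemma psiInv_lim {x : ℝ} (hx : 0 ≤ x) : Tendsto (fun j => (psiInv j x : ℝ≥0∞)) atTop (𝓝 (ENNReal.ofReal x)⁻¹) := by
  simp only [psiInv_coe]
  refine tendsto_inv_iff.2 ?_
  refine ENNReal.tendsto_ofReal ?_
  have h := (tendsto_const_nhds (x := x)).max (tendsto_one_div_add_atTop_nhds_zero_nat (𝕜 := ℝ))
  rwa [max_eq_left hx] at h

/-- approximates the indicator of `x < c` -/
def psiInd (c : ℝ) (j : ℕ) (x : ℝ) : ℝ≥0 := Real.toNNReal (min 1 (j * (c - x)))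

lemma psiInd_cont (c : ℝ) (j : ℕ) : Continuous (psiInd c j) := by unfold psiInd; fun_prop

lemma psiInd_le (c : ℝ) (j : ℕ) (x : ℝ) : psiInd c j x ≤ 1 := by
  unfold psiInd
  rw [← Real.toNNReal_one]
  exact Real.toNNReal_le_toNNReal (min_le_left _ _)

lemma psiInd_mono (c x : ℝ) : Monotone (fun j => (psiInd c j x : ℝ≥0∞)) := by
  intro i j hij
  beta_reduce
  norm_cast
  unfold psiInd
  rcases lt_or_ge x c with h | h
  · refine Real.toNNReal_le_toNNReal (min_le_min le_rfl ?_)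
    have : 0 ≤ c - x := by linarith
    gcongr
  · rw [Real.toNNReal_of_nonpos]
    · exact bot_le
    · exact (min_le_right _ _).trans (mul_nonpos_of_nonneg_of_nonpos (by positivity) (by linarith))

lemma psiInd_lim (c x : ℝ) : Tendsto (fun j => (psiInd c j x : ℝ≥0∞)) atTop (𝓝 ((Iio c).indicator 1 x)) := by
  rcases lt_or_ge x c with h | h
  · rw [indicator_of_mem (by exact h)]
    refine tendsto_const_nhds.congr' ?_
    have h0 : 0 < c - x := by linarith
    obtain ⟨n, hn⟩ := exists_nat_gt (1 / (c - x))
    filter_upwards [eventually_ge_atTop n] with j hj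
    have : 1 ≤ (j:ℝ) * (c - x) := by
      rw [div_lt_iff₀ h0] at hn
      have : (n:ℝ) ≤ j := by exact_mod_cast hj
      nlinarith
    simp [psiInd, min_eq_left this]
  · rw [indicator_of_notMem (by simpa using h)]
    refine tendsto_const_nhds.congr fun j => ?_
    unfold psiInd
    rw [Real.toNNReal_of_nonpos]
    · simp
    · exact (min_le_right _ _).trans (mul_nonpos_of_nonneg_of_nonpos (by positivity) (by linarith))

lemma ind_scale (hβ : IsStdBMVec 3 Q β) (c : ℝ) (w : ℝ → ℝ≥0∞) (hw : Measurable w)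
    (hfin : ∫⁻ z, w ‖z‖ ∂gauss3 1 ≠ ∞) {T : ℝ} (hT : 0 < T) :
    ∫⁻ ω, (Iio c).indicator 1 (rdd β T ω / √T) * w (‖β T ω‖ / √T) ∂Q
      = ∫⁻ ω, (Iio c).indicator 1 (rdd β 1 ω) * w ‖β 1 ω‖ ∂Q := by
  have key : ∀ S : ℝ, ∀ u : ℝ, Tendsto (fun j => ∫⁻ ω, psiInd c j (rdd β S ω / u) * w (‖β S ω‖ / u) ∂Q) atTop
      (𝓝 (∫⁻ ω, (Iio c).indicator 1 (rdd β S ω / u) * w (‖β S ω‖ / u) ∂Q)) := by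
    intro S u
    have hwm : Measurable (fun ω => w (‖β S ω‖ / u)) := hw.comp ((hβ.measurable S).norm.div_const u)
    have hfm : ∀ j, Measurable (fun ω => (psiInd c j (rdd β S ω / u) : ℝ≥0∞)) := fun j =>
      measurable_coe_nnreal_ennreal.comp ((psiInd_cont c j).measurable.comp ((hβ.measurable_rdd S).div_const u))
    refine lintegral_tendsto_of_tendsto_of_monotone (fun j => ((hfm j).mul hwm).aemeasurable) ?_ ?_
    · filter_upwards with ω i j hij
      exact mul_le_mul_left (psiInd_mono c _ hij) _
    · filter_upwards with ω
      by_cases h : w (‖β S ω‖ / u) = ∞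
      · rcases lt_or_ge (rdd β S ω / u) c with h' | h'
        · refine ENNReal.Tendsto.mul_const (psiInd_lim c _) (Or.inl ?_)
          rw [indicator_of_mem (by exact h')]; simp
        · have e : ∀ j, (psiInd c j (rdd β S ω / u)) = 0 := fun j => by
            unfold psiInd
            rw [Real.toNNReal_of_nonpos]
            exact (min_le_right _ _).trans (mul_nonpos_of_nonneg_of_nonpos (by positivity) (by linarith))
          simp [e, indicator_of_notMem (show rdd β S ω / u ∉ Iio c by simpa using h')]
      · exact ENNReal.Tendsto.mul_const (psiInd_lim c _) (Or.inr h)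
  have k1 := key T √T
  have k2 := key 1 1
  simp only [div_one] at k2
  refine tendsto_nhds_unique k1 (k2.congr fun j => ?_)
  exact (rdd_scale hβ _ (psiInd_cont c j) 1 (psiInd_le c j) w hw hfin hT).symm

lemma Iq_one_ne (hβ : IsStdBMVec 3 Q β) : Iq Q β (fun _ => 1) ≠ 0 := by rw [Iq_one hβ]; simp; positivity
lemma Iq_one_ne_top (hβ : IsStdBMVec 3 Q β) : Iq Q β (fun _ => 1) ≠ ∞ := by rw [Iq_one hβ]; simp

/-- the key quantity -/
def Kq (Q : Measure Ω') (β : ℝ → Ω' → E3) : ℝ≥0∞ := ∫⁻ ω, (ENNReal.ofReal (rdd β 1 ω))⁻¹ / ENNReal.ofReal ‖β 1 ω‖ ∂Q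

lemma meander_inv (hW : IsStdBM P W) (hβ : IsStdBMVec 3 Q β) :
    AEMeasurable (fun ω => (ENNReal.ofReal (Dm W ω))⁻¹) P ∧
    ∫⁻ ω, (ENNReal.ofReal (Dm W ω))⁻¹ ∂P = Kq Q β / Iq Q β (fun _ => 1) := by
  have hl := fun j => meander_law hW hβ (psiInv j) (psiInv_cont j) _ (psiInv_le j)
  have hlim : ∀ᵐ ω ∂P, Tendsto (fun j => (psiInv j (Dm W ω) : ℝ≥0∞)) atTop (𝓝 (ENNReal.ofReal (Dm W ω))⁻¹) := by
    filter_upwards [Dm_pos hW] with ω hω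
    exact psiInv_lim hω.le
  refine ⟨aemeasurable_of_tendsto_metrizable_ae' (fun j => (hl j).1) hlim, ?_⟩
  have h1 := lintegral_tendsto_of_tendsto_of_monotone (fun j => (hl j).1) (ae_of_all _ fun ω => psiInv_mono _) hlim
  have h2 : Tendsto (fun j => Iq Q β (psiInv j)) atTop (𝓝 (Kq Q β)) := by
    refine lintegral_tendsto_of_tendsto_of_monotone (fun j => ?_) ?_ ?_
    · have : Measurable (fun ω => (psiInv j (rdd β 1 ω) : ℝ≥0∞)) :=
        measurable_coe_nnreal_ennreal.comp ((psiInv_cont j).measurable.comp (hβ.measurable_rdd 1))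
      exact (this.div (hβ.measurable 1).norm.ennreal_ofReal).aemeasurable
    · filter_upwards with ω i j hij
      exact ENNReal.div_le_div_right (psiInv_mono _ hij) _
    · filter_upwards [bessel_ne_zero hβ one_pos] with ω hω
      refine ENNReal.Tendsto.div_const (psiInv_lim (rdd_nonneg hβ 1 ω)) (Or.inr ?_)
      simpa using hω
  simp only [(hl _).2] at h1
  exact tendsto_nhds_unique h1 (ENNReal.Tendsto.div_const h2 (Or.inr (Iq_one_ne hβ)))

lemma rdd_pos (hW : IsStdBM P W) (hβ : IsStdBMVec 3 Q β) : ∀ᵐ ω ∂Q, 0 < rdd β 1 ω := by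
  set φ : ℕ → ℝ → ℝ≥0 := fun j x => Real.toNNReal (min 1 (1 - j * x)) with hφ
  have hφc : ∀ j, Continuous (φ j) := fun j => by simp only [hφ]; fun_prop
  have hφ1 : ∀ j x, φ j x ≤ 1 := fun j x => by
    simp only [hφ]
    rw [← Real.toNNReal_one]
    exact Real.toNNReal_le_toNNReal (min_le_left _ _)
  have hl := fun j => meander_law hW hβ (φ j) (hφc j) 1 (hφ1 j)
  have h1 : Tendsto (fun j => ∫⁻ ω, (φ j (Dm W ω) : ℝ≥0∞) ∂P) atTop (𝓝 (∫⁻ _, 0 ∂P)) := by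
    refine tendsto_lintegral_of_dominated_convergence' (fun _ => 1) (fun j => (hl j).1)
      (fun j => ae_of_all _ fun ω => by beta_reduce; exact_mod_cast hφ1 j _) (by simp) ?_
    filter_upwards [Dm_pos hW] with ω hω
    refine tendsto_const_nhds.congr' ?_
    obtain ⟨n, hn⟩ := exists_nat_gt (1 / (Dm W ω))
    filter_upwards [eventually_ge_atTop n] with j hj
    have : 1 ≤ (j:ℝ) * Dm W ω := by
      rw [div_lt_iff₀ hω] at hn
      have : (n:ℝ) ≤ j := by exact_mod_cast hj
      nlinarith
    simp only [hφ]
    rw [Real.toNNReal_of_nonpos ((min_le_right _ _).trans (by linarith))]; simp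
  have h2 : ∀ j, ∫⁻ ω, ({0} : Set ℝ).indicator 1 (rdd β 1 ω) / ENNReal.ofReal ‖β 1 ω‖ ∂Q
      ≤ Iq Q β (fun _ => 1) * ∫⁻ ω, (φ j (Dm W ω) : ℝ≥0∞) ∂P := fun j => by
    rw [(hl j).2, ENNReal.mul_div_cancel (Iq_one_ne hβ) (Iq_one_ne_top hβ)]
    refine lintegral_mono fun ω => ENNReal.div_le_div_right ?_ _
    by_cases h : rdd β 1 ω = 0
    · simp [h, hφ]
    · rw [indicator_of_notMem (by simpa using h)]; exact zero_le
  have h3 := ENNReal.Tendsto.const_mul (a := Iq Q β (fun _ => 1)) h1 (Or.inr (Iq_one_ne_top hβ))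
  rw [lintegral_zero, mul_zero] at h3
  have h4 := ge_of_tendsto' h3 h2
  have hm : Measurable (fun ω => ({0} : Set ℝ).indicator (1 : ℝ → ℝ≥0∞) (rdd β 1 ω)) :=
    (measurable_one.indicator (measurableSet_singleton 0)).comp (hβ.measurable_rdd 1)
  have hm2 : Measurable (fun ω => ({0} : Set ℝ).indicator (1 : ℝ → ℝ≥0∞) (rdd β 1 ω) / ENNReal.ofReal ‖β 1 ω‖) :=
    hm.div (hβ.measurable 1).norm.ennreal_ofReal
  have h5 := (lintegral_eq_zero_iff hm2).1 (le_antisymm h4 zero_le)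
  filter_upwards [h5] with ω hω
  refine lt_of_le_of_ne (rdd_nonneg hβ 1 ω) fun h => ?_
  rw [← h] at hω
  simp at hω

/-- a.s. the drawdown of the Bessel process eventually reaches one -/
lemma rdd_large (hpos : ∀ᵐ ω ∂Q, 0 < rdd β 1 ω) (hβ : IsStdBMVec 3 Q β) : ∀ᵐ ω ∂Q, ∃ n : ℕ, 1 ≤ rdd β n ω := by
  have hs : ∀ n : ℕ, 0 < n → Q {ω | rdd β n ω < 1} = ∫⁻ ω, (Iio (1 / √(n:ℝ))).indicator 1 (rdd β 1 ω) ∂Q := by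
    intro n hn
    have hn' : (0:ℝ) < n := by exact_mod_cast hn
    have h := ind_scale hβ (1 / √(n:ℝ)) (fun _ => 1) measurable_const (by simp) hn'
    simp only [mul_one] at h
    rw [← h]
    have hm : MeasurableSet {ω | rdd β n ω < 1} := measurableSet_lt (hβ.measurable_rdd n) measurable_const
    rw [← lintegral_indicator_one hm]
    refine lintegral_congr fun ω => ?_
    have hsq : 0 < √(n:ℝ) := Real.sqrt_pos.2 hn'
    by_cases hh : rdd β n ω < 1
    · rw [indicator_of_mem (by exact hh), indicator_of_mem (by rw [mem_Iio, div_lt_div_iff_of_pos_right hsq]; exact hh)]; rfl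
    · rw [indicator_of_notMem (by exact hh), indicator_of_notMem]
      rw [mem_Iio, div_lt_div_iff_of_pos_right hsq]; exact hh
  have hlim : Tendsto (fun n : ℕ => ∫⁻ ω, (Iio (1 / √(n:ℝ))).indicator (1 : ℝ → ℝ≥0∞) (rdd β 1 ω) ∂Q) atTop (𝓝 (∫⁻ _, 0 ∂Q)) := by
    refine tendsto_lintegral_of_dominated_convergence (fun _ => 1)
      (fun n => (measurable_one.indicator measurableSet_Iio).comp (hβ.measurable_rdd 1)) (fun n => ae_of_all _ fun ω => ?_) (by simp) ?_
    · exact indicator_le_self' (fun _ _ => zero_le) _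
    · filter_upwards [hpos] with ω hω
      refine tendsto_const_nhds.congr' ?_
      have h0 : Tendsto (fun n : ℕ => 1 / √(n:ℝ)) atTop (𝓝 0) := by
        simp only [one_div]
        exact (Real.tendsto_sqrt_atTop.comp tendsto_natCast_atTop_atTop).inv_tendsto_atTop
      filter_upwards [h0.eventually_lt_const hω] with n hn
      rw [indicator_of_notMem (by simpa using hn.le)]
  rw [lintegral_zero] at hlim
  rw [ae_iff]
  have hle : ∀ᶠ n : ℕ in atTop, Q {ω | ¬ ∃ n : ℕ, 1 ≤ rdd β n ω} ≤ ∫⁻ ω, (Iio (1 / √(n:ℝ))).indicator (1 : ℝ → ℝ≥0∞) (rdd β 1 ω) ∂Q := by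
    filter_upwards [eventually_gt_atTop 0] with n hn
    rw [← hs n hn]
    refine measure_mono fun ω hω => ?_
    simp only [Set.mem_ofPred_eq] at hω ⊢
    push Not at hω
    exact hω n
  exact le_antisymm (ge_of_tendsto hlim hle) zero_le

lemma lint_sqrt_inv {a : ℝ} (ha : 0 ≤ a) : ∫⁻ b in Ioo 0 a, ENNReal.ofReal (1 / √b) = ENNReal.ofReal (2 * √a) := by
  have hi : IntervalIntegrable (fun b : ℝ => b ^ (-(1/2) : ℝ)) volume 0 a := intervalIntegral.intervalIntegrable_rpow' (by norm_num)
  have hI : ∫ b in (0:ℝ)..a, b ^ (-(1/2) : ℝ) = 2 * √a := by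
    rw [integral_rpow (Or.inl (by norm_num))]
    rw [Real.sqrt_eq_rpow, Real.zero_rpow (by norm_num)]; norm_num; ring
  rw [← hI, intervalIntegral.integral_of_le ha, integral_Ioc_eq_integral_Ioo]
  have hi2 : IntegrableOn (fun b : ℝ => b ^ (-(1/2) : ℝ)) (Ioo 0 a) volume :=
    ((intervalIntegrable_iff_integrableOn_Ioc_of_le ha).1 hi).mono_set Ioo_subset_Ioc_self
  rw [ofReal_integral_eq_lintegral_ofReal hi2]
  · refine setLIntegral_congr_fun measurableSet_Ioo fun b hb => ?_
    rw [Real.rpow_neg hb.1.le, ← Real.sqrt_eq_rpow, one_div]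
  · filter_upwards [self_mem_ae_restrict measurableSet_Ioo] with b hb
    exact Real.rpow_nonneg hb.1.le _

/-- occupation functional -/
def Fq (β : ℝ → Ω' → E3) (ω : Ω') : ℝ≥0∞ :=
  ∫⁻ b in Ioi (0:ℝ), (Iio 1).indicator (1 : ℝ → ℝ≥0∞) (rdd β b ω) / ENNReal.ofReal ‖β b ω‖

lemma measurable_occ (hβ : IsStdBMVec 3 Q β) :
    Measurable (fun q : Ω' × ℝ => (Iio 1).indicator (1 : ℝ → ℝ≥0∞) (rdd β q.2 q.1) / ENNReal.ofReal ‖β q.2 q.1‖) := by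
  have hr : Measurable (fun q : Ω' × ℝ => rdd β q.2 q.1) := 
    Measurable.comp (g := fun q : ℝ × Ω' => rdd β q.1 q.2) (f := fun q : Ω' × ℝ => (q.2, q.1)) hβ.measurable_rdd_uncurry
      (measurable_snd.prodMk measurable_fst)
  have h1 : Measurable (fun q : Ω' × ℝ => (Iio 1).indicator (1 : ℝ → ℝ≥0∞) (rdd β q.2 q.1)) :=
    ((measurable_one (α := ℝ≥0∞) (β := ℝ)).indicator measurableSet_Iio).comp hr
  have h2 : Measurable (fun q : Ω' × ℝ => ENNReal.ofReal ‖β q.2 q.1‖) :=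
    (hβ.measurable_uncurry.comp measurable_swap).norm.ennreal_ofReal
  exact h1.div h2

lemma occ_scale (hβ : IsStdBMVec 3 Q β) {b : ℝ} (hb : 0 < b) :
    ∫⁻ ω, (Iio 1).indicator (1 : ℝ → ℝ≥0∞) (rdd β b ω) / ENNReal.ofReal ‖β b ω‖ ∂Q
      = ∫⁻ ω, ENNReal.ofReal (1 / √b) * (Iio (1 / √b)).indicator (1 : ℝ → ℝ≥0∞) (rdd β 1 ω) / ENNReal.ofReal ‖β 1 ω‖ ∂Q := by
  have hs : 0 < √b := Real.sqrt_pos.2 hb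
  have h0 : ENNReal.ofReal √b ≠ 0 := by simpa using hb
  have h := ind_scale hβ (1 / √b) (fun r => 1 / ENNReal.ofReal r) (by fun_prop) kernel_ne_top hb
  simp only [scaled_inv hb] at h
  rw [lintegral_const_mul' _ _ ENNReal.ofReal_ne_top] at h
  simp only [mul_div_assoc]
  rw [lintegral_const_mul' _ _ ENNReal.ofReal_ne_top]
  simp only [mul_one_div] at h
  rw [← h, ← mul_assoc, ← ENNReal.ofReal_mul (by positivity), one_div_mul_cancel hs.ne', ENNReal.ofReal_one, one_mul]
  refine lintegral_congr fun ω => ?_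
  congr 1
  by_cases hh : rdd β b ω < 1
  · rw [indicator_of_mem (by exact hh), indicator_of_mem (by rw [mem_Iio, div_lt_div_iff_of_pos_right hs]; exact hh)]; rfl
  · rw [indicator_of_notMem (by exact hh), indicator_of_notMem]
    rw [mem_Iio, div_lt_div_iff_of_pos_right hs]; exact hh

lemma occ_inner {d : ℝ} (hd : 0 < d) :
    ∫⁻ b in Ioi (0:ℝ), ENNReal.ofReal (1 / √b) * (Iio (1 / √b)).indicator (1 : ℝ → ℝ≥0∞) d = 2 * (ENNReal.ofReal d)⁻¹ := by
  have e : ∀ b ∈ Ioi (0:ℝ), ENNReal.ofReal (1 / √b) * (Iio (1 / √b)).indicator (1 : ℝ → ℝ≥0∞) d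
      = (Ioo 0 ((1 / d) ^ 2)).indicator (fun b => ENNReal.ofReal (1 / √b)) b := by
    intro b hb
    have hb' : 0 < b := hb
    have hs : 0 < √b := Real.sqrt_pos.2 hb'
    have hiff : d < 1 / √b ↔ b < (1 / d) ^ 2 := by
      rw [lt_div_iff₀ hs, mul_comm, ← lt_div_iff₀ hd, Real.sqrt_lt' (by positivity)]
    by_cases hh : d < 1 / √b
    · rw [indicator_of_mem (by exact hh), indicator_of_mem (by exact ⟨hb', hiff.1 hh⟩)]; simp
    · rw [indicator_of_notMem (by exact hh), indicator_of_notMem (fun h => hh (hiff.2 h.2))]; simp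
  rw [setLIntegral_congr_fun measurableSet_Ioi e, lintegral_indicator measurableSet_Ioo, Measure.restrict_restrict measurableSet_Ioo,
    inter_eq_left.2 Ioo_subset_Ioi_self, lint_sqrt_inv (by positivity), Real.sqrt_sq (by positivity),
    ENNReal.ofReal_mul (by norm_num), one_div, ENNReal.ofReal_inv_of_pos hd]
  simp

lemma lint_Fq (hpos : ∀ᵐ ω ∂Q, 0 < rdd β 1 ω) (hβ : IsStdBMVec 3 Q β) :
    AEMeasurable (Fq β) Q ∧ ∫⁻ ω, Fq β ω ∂Q = 2 * Kq Q β := by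
  have hm := measurable_occ hβ
  refine ⟨(Measurable.lintegral_prod_right hm).aemeasurable, ?_⟩
  unfold Fq
  rw [lintegral_lintegral_swap hm.aemeasurable, setLIntegral_congr_fun measurableSet_Ioi (fun b hb => occ_scale hβ hb)]
  rw [lintegral_lintegral_swap]
  · unfold Kq
    rw [← lintegral_const_mul' _ _ (by simp)]
    refine lintegral_congr_ae ?_
    filter_upwards [hpos, bessel_ne_zero hβ one_pos] with ω hω hb
    simp only [div_eq_mul_inv _ (ENNReal.ofReal ‖β 1 ω‖)]
    rw [lintegral_mul_const', occ_inner hω, mul_assoc]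
    simpa using hb
  · have h1 : Measurable (fun q : ℝ × Ω' => (Iio (1 / √q.1)).indicator (1 : ℝ → ℝ≥0∞) (rdd β 1 q.2)) := by
      have hset : MeasurableSet {q : ℝ × Ω' | rdd β 1 q.2 < 1 / √q.1} :=
        measurableSet_lt ((hβ.measurable_rdd 1).comp measurable_snd) (by fun_prop)
      exact (measurable_one (α := ℝ≥0∞)).indicator hset
    have h2 : Measurable (fun q : ℝ × Ω' => ENNReal.ofReal ‖β 1 q.2‖) := ((hβ.measurable 1).comp measurable_snd).norm.ennreal_ofReal
    have h3 : Measurable (fun q : ℝ × Ω' => ENNReal.ofReal (1 / √q.1)) := by fun_prop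
    exact ((h3.mul h1).div h2).aemeasurable

lemma occ_fin (hβ : IsStdBMVec 3 Q β) : ∀ᵐ ω ∂Q, ∀ n : ℕ, ∫⁻ b in Ioo (0:ℝ) n, (ENNReal.ofReal ‖β b ω‖)⁻¹ < ∞ := by
  rw [ae_all_iff]
  intro n
  have hm : Measurable (fun q : Ω' × ℝ => (ENNReal.ofReal ‖β q.2 q.1‖)⁻¹) :=
    (hβ.measurable_uncurry.comp measurable_swap).norm.ennreal_ofReal.inv
  refine ae_lt_top (Measurable.lintegral_prod_right hm) ?_
  rw [lintegral_lintegral_swap hm.aemeasurable]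
  have e : ∀ b ∈ Ioo (0:ℝ) n, ∫⁻ ω, (ENNReal.ofReal ‖β b ω‖)⁻¹ ∂Q = Iq Q β (fun _ => 1) * ENNReal.ofReal (1 / √b) := by
    intro b hb
    have h := Iq_scale hβ (fun _ => 1) continuous_const 1 (fun _ => le_rfl) hb.1
    simp only [ENNReal.coe_one, one_div] at h
    rw [h, div_eq_mul_inv, one_div, ENNReal.ofReal_inv_of_pos (Real.sqrt_pos.2 hb.1)]
  rw [setLIntegral_congr_fun measurableSet_Ioo e, lintegral_const_mul' _ _ (Iq_one_ne_top hβ), lint_sqrt_inv (by positivity)]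
  exact ENNReal.mul_ne_top (Iq_one_ne_top hβ) ENNReal.ofReal_ne_top

lemma path_id (hβ : IsStdBMVec 3 Q β) {ω : Ω'} (hf : ∀ n : ℕ, ∫⁻ b in Ioo (0:ℝ) n, (ENNReal.ofReal ‖β b ω‖)⁻¹ < ∞)
    (hl : ∃ n : ℕ, 1 ≤ rdd β n ω) :
    Fq β ω < ∞ ∧ ∫ b in (0:ℝ)..(ddTime 1 (bessel3 β) ω), 1 / bessel3 β b ω = (Fq β ω).toReal := by
  obtain ⟨n, hn⟩ := hl
  have hc : Continuous (fun t => bessel3 β t ω) := hβ.cont_norm ω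
  set S := {t | 0 ≤ t ∧ 1 ≤ runMax (bessel3 β) t ω - bessel3 β t ω} with hS
  set τ := ddTime 1 (bessel3 β) ω with hτ
  have hτS : τ = sInf S := rfl
  have hbdd : BddBelow S := ⟨0, fun t ht => ht.1⟩
  have hτ0 : 0 ≤ τ := Real.sInf_nonneg fun t ht => ht.1
  -- large drawdown gives an element
  have hA : ∀ T, 0 ≤ T → 1 ≤ rdd β T ω → τ ≤ T := by
    intro T hT h
    obtain ⟨t, t0, tT, e⟩ := mdd_runMax (X := bessel3 β) (ω := ω) hT hc.continuousOn
    have e' : rdd β T ω = runMax (bessel3 β) t ω - bessel3 β t ω := e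
    exact (csInf_le hbdd ⟨t0, by rw [← e']; exact h⟩).trans tT
  have hne : S.Nonempty := by
    obtain ⟨t, t0, tT, e⟩ := mdd_runMax (X := bessel3 β) (ω := ω) (Nat.cast_nonneg n) hc.continuousOn
    have e' : rdd β n ω = runMax (bessel3 β) t ω - bessel3 β t ω := e
    exact ⟨t, t0, by rw [← e']; exact hn⟩
  have hB : ∀ T, τ < T → 1 ≤ rdd β T ω := by
    intro T hT
    obtain ⟨t, ht, htT⟩ := exists_lt_of_csInf_lt hne hT
    exact ht.2.trans (runMax_sub_le (X := bessel3 β) hc.continuousOn ht.1 htT.le)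
  have hτn : τ ≤ n := hA n (Nat.cast_nonneg n) hn
  have hF : Fq β ω = ∫⁻ b in Ioo 0 τ, (ENNReal.ofReal ‖β b ω‖)⁻¹ := by
    have e : ∀ᵐ b ∂(volume.restrict (Ioi (0:ℝ))), (Iio 1).indicator (1 : ℝ → ℝ≥0∞) (rdd β b ω) / ENNReal.ofReal ‖β b ω‖
        = (Ioo 0 τ).indicator (fun b => (ENNReal.ofReal ‖β b ω‖)⁻¹) b := by
      have hne : ∀ᵐ b ∂(volume.restrict (Ioi (0:ℝ))), b ≠ τ := ae_restrict_of_ae (Measure.ae_ne volume τ)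
      filter_upwards [self_mem_ae_restrict measurableSet_Ioi, hne] with b hb hbτ
      rcases lt_or_gt_of_ne hbτ with h | h
      · rw [indicator_of_mem (s := Ioo 0 τ) ⟨hb, h⟩, indicator_of_mem]
        · simp
        · by_contra hh
          exact absurd (hA b (le_of_lt hb) (by simpa using hh)) (not_le.2 h)
      · rw [indicator_of_notMem (s := Ioo 0 τ) (fun hx => lt_asymm hx.2 h), indicator_of_notMem]
        · simp
        · simpa using hB b h
    unfold Fq
    rw [lintegral_congr_ae e, lintegral_indicator measurableSet_Ioo, Measure.restrict_restrict measurableSet_Ioo,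
      inter_eq_left.2 Ioo_subset_Ioi_self]
  have hfin : ∫⁻ b in Ioo 0 τ, (ENNReal.ofReal ‖β b ω‖)⁻¹ < ∞ :=
    (lintegral_mono_set (Ioo_subset_Ioo_right hτn)).trans_lt (hf n)
  refine ⟨hF ▸ hfin, ?_⟩
  have hmeas : Measurable (fun b => (ENNReal.ofReal ‖β b ω‖)⁻¹) := (hβ.cont_norm ω).measurable.ennreal_ofReal.inv
  rw [hF, intervalIntegral.integral_of_le hτ0, integral_Ioc_eq_integral_Ioo,
    ← integral_toReal hmeas.aemeasurable (ae_lt_top hmeas hfin.ne)]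
  refine integral_congr_ae (ae_of_all _ fun b => ?_)
  simp [bessel3, ENNReal.toReal_inv]

lemma meander_Dm {m : ℝ → Ω → ℝ} (hW : IsStdBM P W)
    (hm : ∀ ω, ∀ s ∈ Icc (0:ℝ) 1, m s ω = |W (lastZero W ω + s * (1 - lastZero W ω)) ω| / Real.sqrt (1 - lastZero W ω)) (ω : Ω) :
    maxDDOn m 1 ω = Dm W ω := by
  have hc : Continuous (fun t => W t ω) := hW.cont ω
  set g := lastZero W ω with hg
  have hcm : Continuous (fun r => |W (g + (1 - g) * r) ω|) :=
    (hc.comp (by fun_prop : Continuous (fun r : ℝ => g + (1 - g) * r))).abs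
  have he : ∀ s ∈ Icc (0:ℝ) 1, m s ω = (√(1 - g))⁻¹ * |W (g + (1 - g) * s) ω| := fun s hs => by
    rw [hm ω s hs, mul_comm s, div_eq_inv_mul]
  have hmc : ContinuousOn (fun t => m t ω) (Icc 0 1) := ((continuous_const.mul hcm).continuousOn).congr he
  rw [maxDDOn_eq zero_le_one hmc, mdd_congr (h' := fun r => (√(1 - g))⁻¹ * |W (g + (1 - g) * r) ω|)
    (fun r hr => by rw [one_mul]; exact he r hr), mdd_mul hcm.continuousOn (by positivity), Dm, ← hg, div_eq_inv_mul]

end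

end

end

/-- `E[1 / sup_{s ∈ [0,1]} (m̄(s) - m(s))] = √(π/8) · E[∫₀^{τ₁^R} db / R(b)]`,
where `m` is a standard Brownian meander and `R` a three-dimensional Bessel process
started at `0` with unit drawdown time `τ₁^R`. -/
theorem meander_inv_maxDrawdown_eq_bessel3_integral
    {Ω : Type*} [MeasurableSpace Ω] (P : Measure Ω) [IsProbabilityMeasure P]
    {Ω' : Type*} [MeasurableSpace Ω'] (Q : Measure Ω') [IsProbabilityMeasure Q]
    (m : ℝ → Ω → ℝ) (hm : IsBrownianMeander P m)
    (β : ℝ → Ω' → EuclideanSpace ℝ (Fin 3)) (hβ : IsStdBMVec 3 Q β) :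
    ∫ ω, 1 / maxDDOn m 1 ω ∂P
      = Real.sqrt (π / 8) *
          ∫ ω, (∫ b in (0:ℝ)..(ddTime 1 (bessel3 β) ω), 1 / bessel3 β b ω) ∂Q := by
  obtain ⟨W, hW, hm⟩ := hm
  have hpos := rdd_pos hW hβ
  obtain ⟨h1m, h1⟩ := meander_inv hW hβ
  obtain ⟨h2m, h2⟩ := lint_Fq hpos hβ
  have hp : ∀ᵐ ω ∂Q, Fq β ω < ⊤ ∧ ∫ b in (0:ℝ)..(ddTime 1 (bessel3 β) ω), 1 / bessel3 β b ω = (Fq β ω).toReal := by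
    filter_upwards [occ_fin hβ, rdd_large hpos hβ] with ω ha hb
    exact path_id hβ ha hb
  have hL : ∫ ω, 1 / maxDDOn m 1 ω ∂P = (Kq Q β / Iq Q β (fun _ => 1)).toReal := by
    rw [← h1, ← integral_toReal h1m]
    · refine integral_congr_ae ?_
      filter_upwards [Dm_pos hW] with ω hω
      rw [meander_Dm hW hm, ENNReal.toReal_inv, ENNReal.toReal_ofReal hω.le, one_div]
    · filter_upwards [Dm_pos hW] with ω hω
      simpa [lt_top_iff_ne_top] using hω
  have hR : ∫ ω, (∫ b in (0:ℝ)..(ddTime 1 (bessel3 β) ω), 1 / bessel3 β b ω) ∂Q = (2 * Kq Q β).toReal := by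
    rw [← h2, ← integral_toReal h2m (hp.mono fun ω h => h.1)]
    exact integral_congr_ae (hp.mono fun ω h => h.2)
  rw [hL, hR, Iq_one hβ, ENNReal.toReal_div, ENNReal.toReal_mul, ENNReal.toReal_ofReal (Real.sqrt_nonneg _)]
  have hk : 1 / √(2 / π) = √(π / 8) * 2 := by
    rw [one_div, ← Real.sqrt_inv, inv_div]
    have : π / 2 = π / 8 * 2 ^ 2 := by ring
    rw [this, Real.sqrt_mul (by positivity), Real.sqrt_sq (by norm_num)]
  rw [div_eq_mul_one_div, hk]
  simp
  ring
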